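/- arXiv:1505.02748 — 3 statements merged into one kernel-verified Lean document; each statement's English description precedes it below -/
import Mathlib

section
/- For every integer d > 1, there exists a minimal subshift (X, σ) with exactly d ergodic shift-invariant probability measures, zero nonergodic generic measures, and whose complexity satisfies liminf_{n→∞} P_X(n)/n = d and limsup_{n→∞} P_X(n)/n = d + 1. -/
open MeasureTheory Filter
open scoped ENNReal

/-- The left shift on bi-infinite sequences. -/
def shift {A : Type*} (x : ℤ → A) : ℤ → A := fun n => x (n + 1)

/-- A subshift: a closed, shift-invariant subset of `A^ℤ`. -/
def IsSubshift {A : Type*} [TopologicalSpace A] (X : Set (ℤ → A)) : Prop :=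
  IsClosed X ∧ shift '' X = X

/-- The word complexity `P_X(n)`: the number of words of length `n` occurring in `X`. -/
noncomputable def complexity {A : Type*} (X : Set (ℤ → A)) (n : ℕ) : ℕ :=
  Nat.card {w : Fin n → A // ∃ x ∈ X, ∃ m : ℤ, ∀ t : Fin n, x (m + (t : ℕ)) = w t}

/-- `x` is a generic point for the measure `μ`. -/
def IsGenericPt {A : Type*} [TopologicalSpace A] [MeasurableSpace A]
    (μ : Measure (ℤ → A)) (x : ℤ → A) : Prop :=
  ∀ f : (ℤ → A) → ℝ, Continuous f →
    Tendsto (fun N : ℕ => (∑ n ∈ Finset.range N, f (shift^[n] x)) / (N : ℝ))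
      atTop (nhds (∫ y, f y ∂μ))

/-- A generic measure on the subshift `X`: a Borel probability measure carried by `X`
possessing a generic point in `X`. -/
def GenericMeasureOn {A : Type*} [TopologicalSpace A] [MeasurableSpace A]
    (X : Set (ℤ → A)) (μ : Measure (ℤ → A)) : Prop :=
  IsProbabilityMeasure μ ∧ μ X = 1 ∧ ∃ x ∈ X, IsGenericPt μ x

/-- The (two-sided) orbit closure of a point. -/
def orbitClosure {A : Type*} [TopologicalSpace A] (x : ℤ → A) : Set (ℤ → A) :=
  closure {y | ∃ k : ℤ, y = fun n => x (n + k)}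

/-- A minimal subshift: nonempty, and every orbit is dense. -/
def IsMinimalSubshift {A : Type*} [TopologicalSpace A] (X : Set (ℤ → A)) : Prop :=
  IsSubshift X ∧ X.Nonempty ∧ ∀ x ∈ X, orbitClosure x = X

/-- An ergodic shift-invariant Borel probability measure carried by `X`. -/
def IsErgodicMeasureOn {A : Type*} [MeasurableSpace A]
    (X : Set (ℤ → A)) (μ : Measure (ℤ → A)) : Prop :=
  IsProbabilityMeasure μ ∧ μ X = 1 ∧ Ergodic shift μ

/-- A set `Y` is uniquely ergodic if it carries exactly one shift-invariant Borel
probability measure. -/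
def UniquelyErgodicOn {A : Type*} [TopologicalSpace A] [MeasurableSpace A]
    (Y : Set (ℤ → A)) : Prop :=
  ∃! μ : Measure (ℤ → A), IsProbabilityMeasure μ ∧ μ.map shift = μ ∧ μ Y = 1

/-!
Start from the `d` letters. At stage `k` only the block `U_k`, whose index is `k` modulo `d`,
changes: it becomes `U_k^{q^d} U_{k+1}^q U_{k+2}^{q^2} ⋯ U_{k+d}^{q^d}`, where `U_{k+d} = U_k` and
`q` is much larger than all blocks of the stage. The language is the set of subwords of blocks.

*Complexity.* A word of length at most `q` is a subword of `U^s V^t` for two cyclically consecutive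
blocks `U` and `V`; it is periodic or determined by the position of the seam, so there are about
`d * n` such words. Between two stages one more seam has to be counted, which gives at most
`(d + 1) * n`. Conversely, for every length the suffixes of the `d` blocks are right special, and
for lengths up to `q^d` and well above `q` the suffix of `U_k^{q^d} U_{k+1}^q` is another right
special word.

*Measures.* If a function on words is additive up to a bounded error, its averages over the blocks
of a given index change by a summable amount from stage to stage, hence converge. Sums along the
windows of a word are of this kind, and the limits define `d` measures, distinct because at least
two thirds of the letters of the `j`-th block are `j`. Every long word is, up to its ends, a product
of blocks, so a linear inequality satisfied by the `d` measures is satisfied by every invariant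
measure. Hence every invariant measure is a mixture of them, and they are the ergodic measures.
Finally, every point has arbitrarily long prefixes consisting, up to a small proportion, of a power
of a single block, so that a generic measure is one of the `d` measures.
-/

namespace BlockSubshift

/-! ### Words -/

section Words

variable {α β : Type*} {u v w z : List α} {G : Set (List α)} {m n : ℕ}

lemma infix_append_append_cases (h : w <:+: u ++ v ++ z) (hw : w.length ≤ v.length) :
    w <:+: u ++ v ∨ w <:+: v ++ z := by
  rw [List.append_assoc] at h
  rcases List.infix_append_iff.1 h with h | h | ⟨a, b, rfl, ha, hb⟩
  · exact .inl (List.infix_append_of_infix_left h)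
  · exact .inr h
  · have hbv : b <+: v := List.prefix_of_prefix_length_le hb (List.prefix_append _ _)
      (by rw [List.length_append] at hw; omega)
    exact .inl (List.infix_append_iff.2 (.inr (.inr ⟨a, b, rfl, ha, hbv⟩)))

lemma infix_append_cases_start (h : w <:+: u ++ v) :
    w <:+: v ∨ ∃ p < u.length, w <+: (u ++ v).drop p := by
  obtain ⟨s, t, h⟩ := h
  rw [List.append_assoc] at h
  rcases lt_or_ge s.length u.length with hs | hs
  · exact .inr ⟨s.length, hs, t, by rw [← h, List.drop_left]⟩
  · obtain ⟨r, rfl⟩ : u <+: s :=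
      List.prefix_of_prefix_length_le (List.prefix_append _ _) ⟨_, h⟩ hs
    rw [List.append_assoc, List.append_cancel_left_eq] at h
    exact .inl ⟨r, t, by rw [← h, List.append_assoc]⟩

lemma prefix_flatMap_decomposition {f : β → List α} {l : List β} (hf : ∀ b ∈ l, (f b).length ≤ m)
    (h : w <+: l.flatMap f) :
    ∃ (l' : List β) (q : List α), w = l'.flatMap f ++ q ∧ q.length ≤ m := by
  induction l generalizing w with
  | nil => exact ⟨[], [], by simpa using h, by simp⟩
  | cons b l ih =>
    rw [List.flatMap_cons] at h
    rcases le_total w.length (f b).length with hle | hle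
    · exact ⟨[], w, by simp, hle.trans (hf b (by simp))⟩
    · obtain ⟨w', rfl⟩ := List.prefix_of_prefix_length_le (List.prefix_append _ _) h hle
      rw [List.prefix_append_right_inj] at h
      obtain ⟨l', q, rfl, hq⟩ := ih (fun b hb => hf b (by simp [hb])) h
      exact ⟨b :: l', q, by simp, hq⟩

lemma infix_flatMap_decomposition {f : β → List α} {l : List β} (hf : ∀ b ∈ l, (f b).length ≤ m)
    (h : w <:+: l.flatMap f) : ∃ (p : List α) (l' : List β) (q : List α),
      w = p ++ l'.flatMap f ++ q ∧ p.length ≤ m ∧ q.length ≤ m := by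
  induction l with
  | nil => exact ⟨[], [], [], by simpa using h, by simp⟩
  | cons b l ih =>
    have hfl : ∀ b ∈ l, (f b).length ≤ m := fun b hb => hf b (by simp [hb])
    rw [List.flatMap_cons] at h
    rcases List.infix_append_iff.1 h with h | h | ⟨a, c, rfl, ha, hc⟩
    · exact ⟨w, [], [], by simp, h.length_le.trans (hf b (by simp)), by simp⟩
    · exact ih hfl h
    · obtain ⟨l', q, rfl, hq⟩ := prefix_flatMap_decomposition hfl hc
      exact ⟨a, l', q, by simp, ha.length_le.trans (hf b (by simp)), hq⟩

/-- The `n`-th power of the word `w`, that is, `n` copies of `w` in a row. -/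
def wordPow (w : List α) (n : ℕ) : List α := (List.replicate n w).flatten

@[simp] lemma wordPow_zero (w : List α) : wordPow w 0 = [] := rfl

lemma wordPow_succ (w : List α) (n : ℕ) : wordPow w (n + 1) = w ++ wordPow w n := by
  simp [wordPow, List.replicate_succ]

@[simp] lemma wordPow_one (w : List α) : wordPow w 1 = w := by simp [wordPow]

lemma wordPow_add (w : List α) (m n : ℕ) : wordPow w (m + n) = wordPow w m ++ wordPow w n := by
  simp [wordPow, ← List.replicate_append_replicate]

lemma wordPow_succ' (w : List α) (n : ℕ) : wordPow w (n + 1) = wordPow w n ++ w := by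
  rw [wordPow_add, wordPow_one]

@[simp] lemma length_wordPow (w : List α) (n : ℕ) : (wordPow w n).length = n * w.length := by
  simp [wordPow]

lemma wordPow_eq_flatMap_replicate (f : β → List α) (b : β) (n : ℕ) :
    wordPow (f b) n = (List.replicate n b).flatMap f := by
  simp [wordPow, List.flatMap]

lemma wordPow_prefix (w : List α) (h : m ≤ n) : wordPow w m <+: wordPow w n := by
  obtain ⟨k, rfl⟩ := Nat.exists_eq_add_of_le h
  rw [wordPow_add]
  exact List.prefix_append _ _

lemma wordPow_suffix (w : List α) (h : m ≤ n) : wordPow w m <:+ wordPow w n := by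
  obtain ⟨k, rfl⟩ := Nat.exists_eq_add_of_le' h
  rw [wordPow_add]
  exact List.suffix_append _ _

lemma prefix_wordPow (w : List α) (hn : 0 < n) : w <+: wordPow w n := by
  simpa using wordPow_prefix w hn

lemma suffix_wordPow (w : List α) (hn : 0 < n) : w <:+ wordPow w n := by
  simpa using wordPow_suffix w hn

lemma le_length_wordPow (hw : 1 ≤ w.length) (n : ℕ) : n ≤ (wordPow w n).length := by
  rw [length_wordPow]
  exact Nat.le_mul_of_pos_right n hw

end Words

/-! ### Counting words -/

section Counting

variable {α β : Type*} {n : ℕ}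

lemma encard_le_of_index {S : Set β} {m : ℕ} (r : β → ℕ → Prop)
    (hex : ∀ w ∈ S, ∃ p < m, r w p) (huniq : ∀ w ∈ S, ∀ w' ∈ S, ∀ p, r w p → r w' p → w = w') :
    S.encard ≤ m := by
  choose! f hfm hfr using hex
  have hinj : Set.InjOn f S := fun w hw w' hw' e =>
    huniq w hw w' hw' (f w) (hfr w hw) (e ▸ hfr w' hw')
  have hmaps : Set.MapsTo f S (Finset.range m : Set ℕ) := fun w hw => by simpa using hfm w hw
  refine (Set.encard_le_encard_of_injOn hmaps hinj).trans_eq ?_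
  rw [Set.encard_coe_eq_coe_finsetCard, Finset.card_range]

/-- The words of length `n` occurring in the periodic word `u^∞`. -/
def periodicFactors (u : List α) (n : ℕ) : Set (List α) :=
  {w | w.length = n ∧ ∃ t, w <:+: wordPow u t}

/-- The words of length `n` read across the dot in `… L₂.R₂ …`, for the increasing limits of the
left sides `L t` and of the right sides `R t`. -/
def crossingFactors (L R : ℕ → List α) (n : ℕ) : Set (List α) :=
  {w | w.length = n ∧ ∃ t a b, w = a ++ b ∧ a <:+ L t ∧ b <+: R t}

/-- The words of length `n` starting inside the initial block `z` of `z ++ v`. -/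
def startingFactors (z v : List α) (n : ℕ) : Set (List α) :=
  {w | w.length = n ∧ ∃ p < z.length, w <+: (z ++ v).drop p}

lemma exists_prefix_drop_wordPow {u w : List α} {t : ℕ} (hw : w ≠ []) (h : w <:+: wordPow u t) :
    ∃ p < u.length, ∃ t, w <+: (wordPow u t).drop p := by
  induction t with
  | zero => exact absurd (by simpa using h) hw
  | succ t ih =>
    rw [wordPow_succ] at h
    rcases infix_append_cases_start h with h | ⟨p, hp, h⟩
    · exact ih h
    · exact ⟨p, hp, t + 1, by rwa [wordPow_succ]⟩

lemma eq_of_prefix_of_prefix {w w' z : List α} (h : w <+: z) (h' : w' <+: z)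
    (hl : w.length = w'.length) : w = w' :=
  (List.prefix_of_prefix_length_le h h' hl.le).eq_of_length hl

lemma eq_of_suffix_of_suffix {w w' z : List α} (h : w <:+ z) (h' : w' <:+ z)
    (hl : w.length = w'.length) : w = w' :=
  (List.suffix_of_suffix_length_le h h' hl.le).eq_of_length hl

lemma encard_periodicFactors_le (u : List α) (hn : 0 < n) :
    (periodicFactors u n).encard ≤ u.length := by
  refine encard_le_of_index (fun w p => ∃ t, w <+: (wordPow u t).drop p) ?_ ?_
  · rintro w ⟨rfl, t, h⟩
    exact exists_prefix_drop_wordPow (List.length_pos_iff.1 hn) h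
  · rintro w ⟨hw, -⟩ w' ⟨hw', -⟩ p ⟨t, h⟩ ⟨t', h'⟩
    have hmono : ∀ {s s'}, s ≤ s' → (wordPow u s).drop p <+: (wordPow u s').drop p :=
      fun hs => (wordPow_prefix u hs).drop p
    exact eq_of_prefix_of_prefix (h.trans (hmono (le_max_left t t')))
      (h'.trans (hmono (le_max_right t t'))) (hw.trans hw'.symm)

lemma encard_crossingFactors_le {L R : ℕ → List α} (hL : ∀ {s t}, s ≤ t → L s <:+ L t)
    (hR : ∀ {s t}, s ≤ t → R s <+: R t) (n : ℕ) : (crossingFactors L R n).encard ≤ n + 1 := by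
  refine mod_cast encard_le_of_index (m := n + 1)
    (fun w p => ∃ t a b, w = a ++ b ∧ a <:+ L t ∧ b <+: R t ∧ a.length = p) ?_ ?_
  · rintro w ⟨hw, t, a, b, rfl, ha, hb⟩
    rw [List.length_append] at hw
    exact ⟨a.length, by omega, t, a, b, rfl, ha, hb, rfl⟩
  · rintro _ ⟨hw, -⟩ _ ⟨hw', -⟩ p ⟨t, a, b, rfl, ha, hb, hp⟩ ⟨t', a', b', rfl, ha', hb', hp'⟩
    rw [List.length_append] at hw hw'
    have haa : a = a' := eq_of_suffix_of_suffix (ha.trans (hL (le_max_left t t')))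
      (ha'.trans (hL (le_max_right t t'))) (by omega)
    have hbb : b = b' := eq_of_prefix_of_prefix (hb.trans (hR (le_max_left t t')))
      (hb'.trans (hR (le_max_right t t'))) (by omega)
    rw [haa, hbb]

lemma encard_startingFactors_le (z v : List α) (n : ℕ) :
    (startingFactors z v n).encard ≤ z.length := by
  refine encard_le_of_index (fun w p => w <+: (z ++ v).drop p) (fun w hw => hw.2) ?_
  exact fun w hw w' hw' p h h' => eq_of_prefix_of_prefix h h' (hw.1.trans hw'.1.symm)

/-- The number of words of length `n` in the language `L`. -/
noncomputable def wordCount (L : Set (List α)) (n : ℕ) : ℕ := {w ∈ L | w.length = n}.ncard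

end Counting

/-! ### The blocks -/

section Blocks

variable {d : ℕ} [NeZero d]

/-- The letter `i mod d`. -/
def letter (d : ℕ) [NeZero d] (i : ℕ) : Fin d := Fin.ofNat d i

lemma letter_eq_letter_iff {i j : ℕ} : letter d i = letter d j ↔ i ≡ j [MOD d] := Fin.ext_iff

@[simp] lemma letter_val (j : Fin d) : letter d j = j := Fin.ofNat_val_eq_self j

@[simp] lemma letter_add_self (i : ℕ) : letter d (i + d) = letter d i := by
  simp [letter_eq_letter_iff]

lemma letter_add_ne {k i : ℕ} (hi : 0 < i) (hid : i < d) : letter d (k + i) ≠ letter d k := by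
  intro h
  have hmod : i ≡ 0 [MOD d] := Nat.ModEq.add_left_cancel' k (letter_eq_letter_iff.1 h)
  exact hi.ne' (hmod.eq_of_lt_of_lt hid (hi.trans hid))

lemma letter_succ_congr {i j : ℕ} (h : letter d i = letter d j) :
    letter d (i + 1) = letter d (j + 1) :=
  letter_eq_letter_iff.2 ((letter_eq_letter_iff.1 h).add_right 1)

lemma exists_letter_add_eq (k : ℕ) (j : Fin d) : ∃ i < d, letter d (k + i) = j := by
  have hk : k % d < d := Nat.mod_lt k (NeZero.pos d)
  refine ⟨(j + (d - k % d)) % d, Nat.mod_lt _ (NeZero.pos d), ?_⟩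
  conv_rhs => rw [← letter_val j, ← letter_add_self]
  rw [letter_eq_letter_iff, Nat.ModEq, Nat.add_mod_mod, ← Nat.mod_add_mod]
  congr 1
  omega

/-- The exponent used when the `k`-th substitution is applied to the blocks `U`. -/
def exponentOf (U : Fin d → List (Fin d)) (k : ℕ) : ℕ := 4 ^ (k + 2) * ∑ j, (U j).length

/-- The word `U_{k+1}^q U_{k+2}^{q²} ⋯ U_{k+i}^{qⁱ}`, with the indices read modulo `d`. -/
def middleOf (U : Fin d → List (Fin d)) (k q i : ℕ) : List (Fin d) :=
  (List.range i).flatMap fun l => wordPow (U (letter d (k + (l + 1)))) (q ^ (l + 1))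

/-- The blocks of stage `k`. Stage `0` consists of the letters; from stage `k` to stage `k + 1` only
the block `U_k` with index `k mod d` changes, to
`U_k^{q^d} U_{k+1}^q U_{k+2}^{q²} ⋯ U_{k+d}^{q^d}`. -/
def block (d : ℕ) [NeZero d] : ℕ → Fin d → List (Fin d)
  | 0 => fun j => [j]
  | k + 1 =>
    let q := exponentOf (block d k) k
    Function.update (block d k) (letter d k)
      (wordPow (block d k (letter d k)) (q ^ d) ++ middleOf (block d k) k q d)

/-- The total length of the blocks of stage `k`. -/
def totalLength (d : ℕ) [NeZero d] (k : ℕ) : ℕ := ∑ j, (block d k j).length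

/-- The exponent `q` used in passing from stage `k` to stage `k + 1`. -/
def exponent (d : ℕ) [NeZero d] (k : ℕ) : ℕ := exponentOf (block d k) k

/-- The part `U_{k+1}^q ⋯ U_{k+i}^{qⁱ}` of the block created in passing from stage `k` to stage
`k + 1`. -/
def middle (d : ℕ) [NeZero d] (k i : ℕ) : List (Fin d) := middleOf (block d k) k (exponent d k) i

lemma exponent_eq (k : ℕ) : exponent d k = 4 ^ (k + 2) * totalLength d k := rfl

@[simp] lemma middle_zero (k : ℕ) : middle d k 0 = [] := rfl

lemma middle_succ (k i : ℕ) : middle d k (i + 1) =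
    middle d k i ++ wordPow (block d k (letter d (k + (i + 1)))) (exponent d k ^ (i + 1)) := by
  simp [middle, middleOf, List.range_succ]

lemma block_succ_self (k : ℕ) : block d (k + 1) (letter d k) =
    wordPow (block d k (letter d k)) (exponent d k ^ d) ++ middle d k d :=
  Function.update_self ..

lemma block_succ_of_ne (k : ℕ) {j : Fin d} (h : j ≠ letter d k) :
    block d (k + 1) j = block d k j :=
  Function.update_of_ne h ..

lemma middle_self (k : ℕ) : middle d k d =
    middle d k (d - 1) ++ wordPow (block d k (letter d k)) (exponent d k ^ d) := by
  have hd : d - 1 + 1 = d := Nat.sub_one_add_one (NeZero.ne d)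
  have h := middle_succ (d := d) k (d - 1)
  rwa [hd, letter_add_self] at h

lemma middle_prefix (k : ℕ) {i j : ℕ} (h : i ≤ j) : middle d k i <+: middle d k j := by
  induction j, h using Nat.le_induction with
  | base => exact List.prefix_rfl
  | succ j _ ih =>
    rw [middle_succ]
    exact ih.trans (List.prefix_append _ _)

lemma wordPow_infix_middle (k : ℕ) {i j : ℕ} (hi : 0 < i) (h : i ≤ j) :
    wordPow (block d k (letter d (k + i))) (exponent d k ^ i) <:+: middle d k j := by
  obtain ⟨m, rfl⟩ := Nat.exists_eq_succ_of_ne_zero hi.ne'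
  refine List.IsInfix.trans ?_ (middle_prefix k h).isInfix
  rw [middle_succ]
  exact (List.suffix_append _ _).isInfix

/-! ### Lengths of the blocks -/

lemma exponentOf_pos {U : Fin d → List (Fin d)} (hU : ∀ j, 1 ≤ (U j).length) (k : ℕ) :
    0 < exponentOf U k :=
  mul_pos (by positivity) (Finset.sum_pos (fun j _ => hU j) Finset.univ_nonempty)

lemma one_le_length_block (k : ℕ) (j : Fin d) : 1 ≤ (block d k j).length := by
  induction k generalizing j with
  | zero => simp [block]
  | succ k ih =>
    by_cases h : j = letter d k
    · subst h
      have hq : 0 < exponent d k ^ d := pow_pos (exponentOf_pos ih k) d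
      rw [block_succ_self, List.length_append]
      exact (hq.trans_le (le_length_wordPow (ih _) _)).trans_le (Nat.le_add_right _ _)
    · rw [block_succ_of_ne k h]
      exact ih j

lemma exponent_pos (k : ℕ) : 0 < exponent d k := exponentOf_pos (one_le_length_block k) k

lemma length_block_le_totalLength (k : ℕ) (j : Fin d) : (block d k j).length ≤ totalLength d k :=
  Finset.single_le_sum (f := fun j => (block d k j).length) (fun _ _ => Nat.zero_le _)
    (Finset.mem_univ j)

lemma le_totalLength (k : ℕ) : d ≤ totalLength d k := by
  simpa [totalLength] using Finset.card_nsmul_le_sum Finset.univ (fun j => (block d k j).length) 1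
    fun j _ => one_le_length_block k j

lemma totalLength_pos (k : ℕ) : 0 < totalLength d k := (NeZero.pos d).trans_le (le_totalLength k)

lemma four_pow_le_exponent (k : ℕ) : 4 ^ (k + 2) ≤ exponent d k :=
  Nat.le_mul_of_pos_right _ (totalLength_pos k)

lemma sixteen_le_exponent (k : ℕ) : 16 ≤ exponent d k :=
  (Nat.pow_le_pow_right (by norm_num) (by omega : 2 ≤ k + 2)).trans (four_pow_le_exponent k)

lemma four_pow_mul_length_middle_le (k i : ℕ) :
    4 ^ (k + 1) * (middle d k i).length ≤ exponent d k ^ (i + 1) := by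
  have hmiddle : (middle d k i).length ≤ 2 * totalLength d k * exponent d k ^ i := by
    induction i with
    | zero => simp
    | succ i ih =>
      have hlen := length_block_le_totalLength k (letter d (k + (i + 1)))
      have hq : 2 * exponent d k ^ i ≤ exponent d k ^ (i + 1) := by
        rw [pow_succ']
        exact Nat.mul_le_mul_right _ ((by norm_num : 2 ≤ 16).trans (sixteen_le_exponent k))
      rw [middle_succ, List.length_append, length_wordPow]
      calc (middle d k i).length + exponent d k ^ (i + 1) * _
          ≤ totalLength d k * (2 * exponent d k ^ i)
            + exponent d k ^ (i + 1) * totalLength d k := by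
            refine add_le_add (ih.trans_eq (by ring)) (Nat.mul_le_mul_left _ hlen)
        _ ≤ totalLength d k * exponent d k ^ (i + 1)
            + exponent d k ^ (i + 1) * totalLength d k := by gcongr
        _ = 2 * totalLength d k * exponent d k ^ (i + 1) := by ring
  calc 4 ^ (k + 1) * (middle d k i).length
      ≤ 4 ^ (k + 1) * (4 * totalLength d k * exponent d k ^ i) := by
        gcongr
        exact hmiddle.trans (by gcongr; norm_num)
    _ = exponent d k ^ (i + 1) := by rw [pow_succ (exponent d k), exponent_eq]; ring

lemma block_prefix {k K : ℕ} (h : k ≤ K) (j : Fin d) : block d k j <+: block d K j := by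
  induction K, h using Nat.le_induction with
  | base => exact List.prefix_rfl
  | succ K _ ih =>
    refine ih.trans ?_
    by_cases h : j = letter d K
    · subst h
      rw [block_succ_self]
      exact (prefix_wordPow _ (pow_pos (exponent_pos K) d)).trans (List.prefix_append _ _)
    · rw [block_succ_of_ne K h]

lemma block_suffix {k K : ℕ} (h : k ≤ K) (j : Fin d) : block d k j <:+ block d K j := by
  induction K, h using Nat.le_induction with
  | base => exact List.suffix_rfl
  | succ K _ ih =>
    refine ih.trans ?_
    by_cases h : j = letter d K
    · subst h
      rw [block_succ_self, middle_self, ← List.append_assoc]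
      exact (suffix_wordPow _ (pow_pos (exponent_pos K) d)).trans (List.suffix_append _ _)
    · rw [block_succ_of_ne K h]

lemma totalLength_mono : Monotone (totalLength d) := fun _ _ h =>
  Finset.sum_le_sum fun j _ => (block_prefix h j).length_le

lemma exponent_mono : Monotone (exponent d) := fun _ _ h =>
  Nat.mul_le_mul (Nat.pow_le_pow_right (by norm_num) (by omega)) (totalLength_mono h)

lemma block_infix_block_succ (k : ℕ) (i : Fin d) :
    block d k i <:+: block d (k + 1) (letter d k) := by
  obtain ⟨m, hm, rfl⟩ := exists_letter_add_eq k i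
  rcases Nat.eq_zero_or_pos m with rfl | hm0
  · exact (block_prefix k.le_succ _).isInfix
  · rw [block_succ_self]
    exact List.infix_append_of_infix_right <|
      (prefix_wordPow _ (pow_pos (exponent_pos k) m)).isInfix.trans
        (wordPow_infix_middle k hm0 hm.le)

lemma block_infix_block {k K : ℕ} (h : k + d ≤ K) (i j : Fin d) : block d k i <:+: block d K j := by
  obtain ⟨m, hm, rfl⟩ := exists_letter_add_eq k j
  calc block d k i <:+: block d (k + m) i := (block_prefix (Nat.le_add_right k m) i).isInfix
    _ <:+: block d (k + m + 1) (letter d (k + m)) := block_infix_block_succ (k + m) i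
    _ <:+: block d K (letter d (k + m)) := (block_prefix (by omega) _).isInfix

lemma four_pow_le_length_block_letter {k K : ℕ} (h : k < K) :
    4 ^ k ≤ (block d K (letter d k)).length := by
  refine le_trans ?_ (block_prefix (Nat.succ_le_of_lt h) _).length_le
  rw [block_succ_self, List.length_append]
  calc 4 ^ k ≤ 4 ^ (k + 2) := Nat.pow_le_pow_right (by norm_num) (by omega)
    _ ≤ exponent d k ^ d :=
      (four_pow_le_exponent k).trans (Nat.le_self_pow (NeZero.ne d) _)
    _ ≤ (wordPow (block d k (letter d k)) (exponent d k ^ d)).length :=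
      le_length_wordPow (one_le_length_block k _) _
    _ ≤ _ := Nat.le_add_right _ _

lemma four_pow_le_length_block (k : ℕ) (j : Fin d) : 4 ^ k ≤ 4 ^ d * (block d k j).length := by
  rcases lt_or_ge k d with h | h
  · exact (Nat.pow_le_pow_right (by norm_num) h.le).trans
      (Nat.le_mul_of_pos_right _ (one_le_length_block k j))
  · obtain ⟨m, hm, rfl⟩ := exists_letter_add_eq (k - d) j
    calc 4 ^ k = 4 ^ d * 4 ^ (k - d) := by rw [← pow_add, Nat.add_sub_cancel' h]
      _ ≤ 4 ^ d * 4 ^ (k - d + m) := by gcongr <;> omega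
      _ ≤ _ := Nat.mul_le_mul_left _ (four_pow_le_length_block_letter (by omega))

lemma middle_eq_flatMap (k i : ℕ) : ∃ l : List (Fin d), middle d k i = l.flatMap (block d k) :=
  ⟨(List.range i).flatMap fun l => List.replicate (exponent d k ^ (l + 1)) (letter d (k + (l + 1))),
    by simp only [middle, middleOf, wordPow_eq_flatMap_replicate, List.flatMap_assoc]⟩

lemma block_eq_flatMap {k K : ℕ} (h : k ≤ K) (j : Fin d) :
    ∃ l : List (Fin d), block d K j = l.flatMap (block d k) := by
  induction K, h using Nat.le_induction generalizing j with
  | base => exact ⟨[j], by simp⟩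
  | succ K _ ih =>
    by_cases h : j = letter d K
    · subst h
      obtain ⟨l, hl⟩ := middle_eq_flatMap (d := d) K d
      choose f hf using ih
      refine ⟨(List.replicate (exponent d K ^ d) (letter d K) ++ l).flatMap f, ?_⟩
      rw [block_succ_self, hl, wordPow_eq_flatMap_replicate, ← List.flatMap_append,
        List.flatMap_assoc, funext hf]
    · rw [block_succ_of_ne K h]
      exact ih j

/-! ### The language -/

/-- The words occurring in some block. -/
def language (d : ℕ) [NeZero d] : Set (List (Fin d)) := {w | ∃ k j, w <:+: block d k j}

lemma mem_language_of_infix {w v : List (Fin d)} (hv : v ∈ language d) (h : w <:+: v) :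
    w ∈ language d := by
  obtain ⟨k, j, hv⟩ := hv
  exact ⟨k, j, h.trans hv⟩

lemma block_mem_language (k : ℕ) (j : Fin d) : block d k j ∈ language d := ⟨k, j, List.infix_rfl⟩

lemma exists_infix_block_of_mem_language {w : List (Fin d)} (h : w ∈ language d) (k : ℕ) :
    ∃ K ≥ k, ∃ j, w <:+: block d K j := by
  obtain ⟨K, j, h⟩ := h
  exact ⟨max k K, le_max_left _ _, j, h.trans (block_prefix (le_max_right _ _) j).isInfix⟩

lemma exists_eq_append_flatMap_block_append {w : List (Fin d)} (h : w ∈ language d) (k : ℕ) :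
    ∃ p, ∃ s : List (Fin d), ∃ q, w = p ++ s.flatMap (block d k) ++ q ∧
      p.length ≤ totalLength d k ∧ q.length ≤ totalLength d k := by
  obtain ⟨K, hK, j, h⟩ := exists_infix_block_of_mem_language h k
  obtain ⟨l, hl⟩ := block_eq_flatMap hK j
  rw [hl] at h
  exact infix_flatMap_decomposition (fun b _ => length_block_le_totalLength k b) h

end Blocks

/-! ### Covering long words by short ones -/

section Covering

variable {α : Type*} {G : Set (List α)} {n : ℕ} {u v w z : List α}

/-- All factors of length `n` of the word `z` lie in `G`. -/
def FactorsIn (G : Set (List α)) (n : ℕ) (z : List α) : Prop :=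
  ∀ w, w <:+: z → w.length = n → w ∈ G

lemma FactorsIn.append (h₁ : FactorsIn G n (u ++ v)) (h₂ : FactorsIn G n (v ++ w))
    (hv : n ≤ v.length) : FactorsIn G n (u ++ v ++ w) := by
  intro x hx hn
  rcases infix_append_append_cases hx (hn ▸ hv) with h | h
  · exact h₁ x h hn
  · exact h₂ x h hn

/-- A word `z` all of whose factors of length `n` lie in `G`, together with a suffix `v` long enough
to continue `z` without losing this property. -/
structure CoveredEnding (G : Set (List α)) (n : ℕ) (z v : List α) : Prop where
  suffix : v <:+ z
  le_length : n ≤ v.length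
  factorsIn : FactorsIn G n z

lemma CoveredEnding.append (h : CoveredEnding G n z v) (hw : FactorsIn G n (v ++ w))
    (hu : u <:+ v ++ w) (hun : n ≤ u.length) : CoveredEnding G n (z ++ w) u := by
  obtain ⟨⟨x, rfl⟩, hv, hz⟩ := h
  refine ⟨?_, hun, hz.append hw hv⟩
  rw [List.append_assoc]
  exact hu.trans (List.suffix_append _ _)

end Covering

/-! ### Short words of the language cross at most one block boundary -/

section TwoBlocks

variable {d : ℕ} [NeZero d] {k n i e e' : ℕ} {z w : List (Fin d)}

/-- The words occurring in the concatenation of a power of a block of stage `k` and a power of its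
cyclic successor. -/
def twoBlockFactors (d : ℕ) [NeZero d] (k : ℕ) : Set (List (Fin d)) :=
  {w | ∃ i s t,
    w <:+: wordPow (block d k (letter d i)) s ++ wordPow (block d k (letter d (i + 1))) t}

lemma factorsIn_twoBlock (k n i e e' : ℕ) : FactorsIn (twoBlockFactors d k) n
    (wordPow (block d k (letter d i)) e ++ wordPow (block d k (letter d (i + 1))) e') :=
  fun _ hw _ => ⟨i, e, e', hw⟩

lemma factorsIn_wordPow_block (k n i e : ℕ) :
    FactorsIn (twoBlockFactors d k) n (wordPow (block d k (letter d i)) e) :=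
  fun _ hw _ => ⟨i, e, 0, by simpa using hw⟩

lemma le_length_wordPow_block (he : n ≤ e) (j : Fin d) : n ≤ (wordPow (block d k j) e).length :=
  he.trans (le_length_wordPow (one_le_length_block k j) e)

/-- `z` ends with a power of the block `i` of stage `k`, and every factor of length `n` of `z`
crosses at most one block boundary. -/
def EndsWithPower (d : ℕ) [NeZero d] (k n i : ℕ) (z : List (Fin d)) : Prop :=
  ∃ e, CoveredEnding (twoBlockFactors d k) n z (wordPow (block d k (letter d i)) e)

lemma endsWithPower_wordPow (he : n ≤ e) :
    EndsWithPower d k n i (wordPow (block d k (letter d i)) e) :=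
  ⟨e, List.suffix_rfl, le_length_wordPow_block he _, factorsIn_wordPow_block k n i e⟩

lemma EndsWithPower.append_same (h : EndsWithPower d k n i z) (he : n ≤ e) :
    EndsWithPower d k n i (z ++ wordPow (block d k (letter d i)) e) := by
  obtain ⟨e', h⟩ := h
  refine ⟨e, h.append ?_ (List.suffix_append _ _) (le_length_wordPow_block he _)⟩
  rw [← wordPow_add]
  exact factorsIn_wordPow_block k n i _

lemma EndsWithPower.append_next (h : EndsWithPower d k n i z) (he : n ≤ e) :
    EndsWithPower d k n (i + 1) (z ++ wordPow (block d k (letter d (i + 1))) e) := by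
  obtain ⟨e', h⟩ := h
  exact ⟨e, h.append (factorsIn_twoBlock k n i e' e) (List.suffix_append _ _)
    (le_length_wordPow_block he _)⟩

lemma EndsWithPower.congr {j : ℕ} (h : EndsWithPower d k n i z) (hij : letter d i = letter d j) :
    EndsWithPower d k n j z := by
  unfold EndsWithPower
  rwa [← hij]

lemma EndsWithPower.append_middle (hn : n ≤ exponent d k) (h : EndsWithPower d k n k z) (i : ℕ) :
    EndsWithPower d k n (k + i) (z ++ middle d k i) := by
  induction i with
  | zero => simpa using h
  | succ i ih =>
    rw [middle_succ, ← List.append_assoc]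
    exact ih.append_next (hn.trans (Nat.le_self_pow i.succ_ne_zero _))

lemma EndsWithPower.append_block_succ (hn : n ≤ exponent d k) (h : EndsWithPower d k n i z)
    (hi : letter d i = letter d k ∨ letter d (i + 1) = letter d k) :
    EndsWithPower d k n k (z ++ block d (k + 1) (letter d k)) := by
  have hn' : n ≤ exponent d k ^ d := hn.trans (Nat.le_self_pow (NeZero.ne d) _)
  have hfirst : EndsWithPower d k n k
      (z ++ wordPow (block d k (letter d k)) (exponent d k ^ d)) := by
    rcases hi with hi | hi
    · exact (h.congr hi).append_same hn'
    · rw [← hi]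
      exact (h.append_next hn').congr hi
  rw [block_succ_self, ← List.append_assoc]
  exact (hfirst.append_middle hn d).congr (letter_add_self k)

lemma EndsWithPower.append_wordPow_block_succ (hn : n ≤ exponent d k) (h : EndsWithPower d k n i z)
    (hi : letter d i = letter d k ∨ letter d (i + 1) = letter d k) (t : ℕ) :
    EndsWithPower d k n k (z ++ wordPow (block d (k + 1) (letter d k)) (t + 1)) := by
  induction t with
  | zero => simpa using h.append_block_succ hn hi
  | succ t ih =>
    rw [wordPow_succ' _ (t + 1), ← List.append_assoc]
    exact ih.append_block_succ hn (.inl rfl)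

lemma EndsWithPower.mem_twoBlockFactors (h : EndsWithPower d k n i z) (hw : w <:+: z)
    (hwn : w.length = n) : w ∈ twoBlockFactors d k := by
  obtain ⟨e, h⟩ := h
  exact h.factorsIn w hw hwn

lemma mem_twoBlockFactors_of_succ (hd : 1 < d) (h : w ∈ twoBlockFactors d (k + 1))
    (hw : w.length ≤ exponent d k) : w ∈ twoBlockFactors d k := by
  obtain ⟨i, s, t, h⟩ := h
  by_cases hi : letter d i = letter d k
  · have hi' : letter d (i + 1) ≠ letter d k := by
      rw [letter_succ_congr hi]
      exact letter_add_ne one_pos hd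
    have hz := ((endsWithPower_wordPow le_rfl).append_wordPow_block_succ hw (.inl rfl)
      s).append_next (le_max_right t w.length)
    refine hz.mem_twoBlockFactors (h.trans ?_) rfl
    rw [hi, block_succ_of_ne k hi', letter_succ_congr hi]
    obtain ⟨a, ha⟩ := wordPow_suffix (block d (k + 1) (letter d k)) s.le_succ
    obtain ⟨b, hb⟩ := wordPow_prefix (block d k (letter d (k + 1))) (le_max_left t w.length)
    exact ⟨wordPow (block d k (letter d k)) w.length ++ a, b, by
      rw [← ha, ← hb]; simp only [List.append_assoc]⟩
  by_cases hi' : letter d (i + 1) = letter d k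
  · have hz := (endsWithPower_wordPow (i := i) (le_max_right s w.length)).append_wordPow_block_succ
      hw (.inr hi') t
    refine hz.mem_twoBlockFactors (h.trans ?_) rfl
    rw [hi', block_succ_of_ne k hi]
    obtain ⟨b, hb⟩ := wordPow_prefix (block d (k + 1) (letter d k)) t.le_succ
    obtain ⟨a, ha⟩ := wordPow_suffix (block d k (letter d i)) (le_max_left s w.length)
    exact ⟨a, b, by rw [← ha, ← hb]; simp only [List.append_assoc]⟩
  · rw [block_succ_of_ne k hi, block_succ_of_ne k hi'] at h
    exact ⟨i, s, t, h⟩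

lemma mem_twoBlockFactors_of_mem_language (hd : 1 < d) (h : w ∈ language d)
    (hw : w.length ≤ exponent d k) : w ∈ twoBlockFactors d k := by
  obtain ⟨K, hK, j, h⟩ := exists_infix_block_of_mem_language h k
  replace h : w ∈ twoBlockFactors d K := ⟨j, 1, 0, by simpa using h⟩
  induction K, hK using Nat.le_induction with
  | base => exact h
  | succ K hK ih => exact ih (mem_twoBlockFactors_of_succ hd h (hw.trans (exponent_mono hK)))

end TwoBlocks

/-! ### Upper bounds for the complexity -/

section UpperBound

variable {α : Type*} {G L : Set (List α)} {n m : ℕ} {u v y z : List α}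

lemma wordCount_le_of_encard_le {S : Set (List α)} (hS : S.encard ≤ m)
    (h : ∀ w ∈ L, w.length = n → w ∈ S) : wordCount L n ≤ m :=
  (Set.encard_le_coe_iff_finite_ncard_le.1
    ((Set.encard_le_encard fun w hw => h w hw.1 hw.2).trans hS)).2

lemma CoveredEnding.append_wordPow (h : CoveredEnding G n z v) (hy : FactorsIn G n (v ++ y))
    (hv : v <:+ y) (t : ℕ) : CoveredEnding G n (z ++ wordPow y t) v := by
  induction t with
  | zero => simpa using h
  | succ t ih =>
    rw [wordPow_succ', ← List.append_assoc]
    exact ih.append hy (List.suffix_append_of_suffix hv) h.le_length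

lemma wordPow_append_comm (u v : List α) (t : ℕ) :
    wordPow (u ++ v) t ++ u = u ++ wordPow (v ++ u) t := by
  induction t with
  | zero => simp
  | succ t ih =>
    rw [wordPow_succ, wordPow_succ, List.append_assoc, ih]; simp only [List.append_assoc]

variable {d : ℕ} [NeZero d] {k i : ℕ} {w : List (Fin d)}

/-- The words of length `n` occurring in a power of a block of stage `k`. -/
def stagePeriodicFactors (d : ℕ) [NeZero d] (k n : ℕ) : Set (List (Fin d)) :=
  ⋃ j, periodicFactors (block d k j) n

/-- The words of length `n` crossing the boundary between powers of two cyclically consecutive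
blocks of stage `k`. -/
def stageCrossingFactors (d : ℕ) [NeZero d] (k n : ℕ) : Set (List (Fin d)) :=
  ⋃ j : Fin d, crossingFactors (wordPow (block d k j)) (wordPow (block d k (letter d (j + 1)))) n

lemma encard_stagePeriodicFactors_le (k : ℕ) (hn : 0 < n) :
    (stagePeriodicFactors d k n).encard ≤ totalLength d k := by
  refine (Set.encard_iUnion_le_of_fintype _).trans ?_
  rw [totalLength, Nat.cast_sum]
  exact Finset.sum_le_sum fun j _ => encard_periodicFactors_le _ hn

lemma encard_stageCrossingFactors_le (k n : ℕ) :
    (stageCrossingFactors d k n).encard ≤ d * (n + 1) := by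
  refine (Set.encard_iUnion_le_of_fintype _).trans ?_
  refine (Finset.sum_le_sum fun j _ =>
    encard_crossingFactors_le (wordPow_suffix _) (wordPow_prefix _) n).trans_eq ?_
  simp [mul_add]

lemma mem_stageCrossingFactors {a b : List (Fin d)} {s t : ℕ} (hw : (a ++ b).length = n)
    (ha : a <:+ wordPow (block d k (letter d i)) s)
    (hb : b <+: wordPow (block d k (letter d (i + 1))) t) :
    a ++ b ∈ stageCrossingFactors d k n := by
  refine Set.mem_iUnion.2 ⟨letter d i, hw, max s t, a, b, rfl,
    ha.trans (wordPow_suffix _ (le_max_left s t)), ?_⟩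
  rw [letter_succ_congr (letter_val (letter d i))]
  exact hb.trans (wordPow_prefix _ (le_max_right s t))

lemma mem_stageFactors_of_mem_language (hd : 1 < d) (hw : w ∈ language d) (hwn : w.length = n)
    (hn : n ≤ exponent d k) : w ∈ stagePeriodicFactors d k n ∪ stageCrossingFactors d k n := by
  obtain ⟨i, s, t, h⟩ := mem_twoBlockFactors_of_mem_language hd hw (hwn.trans_le hn)
  rcases List.infix_append_iff.1 h with h | h | ⟨a, b, rfl, ha, hb⟩
  · exact .inl (Set.mem_iUnion.2 ⟨_, hwn, s, h⟩)
  · exact .inl (Set.mem_iUnion.2 ⟨_, hwn, t, h⟩)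
  · exact .inr (mem_stageCrossingFactors hwn ha hb)

lemma wordCount_le_of_le_exponent (hd : 1 < d) (hn : 0 < n) (hnk : n ≤ exponent d k) :
    wordCount (language d) n ≤ d * (n + 1) + totalLength d k := by
  refine wordCount_le_of_encard_le ?_ fun w hw hwn => mem_stageFactors_of_mem_language hd hw hwn hnk
  rw [add_comm]
  exact (Set.encard_union_le _ _).trans (mod_cast
    add_le_add (encard_stagePeriodicFactors_le k hn) (encard_stageCrossingFactors_le k n))

/-- Candidates for the words of length `n` of the language when `n` lies between the exponents of
stages `k` and `k + 1`: the powers of the blocks of stage `k`, the boundaries of stage `k + 1`, and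
the words meeting the factor `z` in `… U_k U_k z v`. -/
def intermediateFactors (d : ℕ) [NeZero d] (k n : ℕ) (z v : List (Fin d)) : Set (List (Fin d)) :=
  stagePeriodicFactors d k n ∪ stageCrossingFactors d (k + 1) n ∪
    (crossingFactors (wordPow (block d k (letter d k))) (fun _ => z ++ v) n ∪ startingFactors z v n)

lemma encard_intermediateFactors_le (k : ℕ) (hn : 0 < n) (z v : List (Fin d)) :
    (intermediateFactors d k n z v).encard ≤
      ((d + 1) * (n + 1) + totalLength d k + z.length : ℕ) := by
  have hpc := (Set.encard_union_le (stagePeriodicFactors d k n) _).trans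
    (add_le_add (encard_stagePeriodicFactors_le k hn) (encard_stageCrossingFactors_le (k + 1) n))
  have hz := (Set.encard_union_le _ _).trans <| add_le_add
    (encard_crossingFactors_le (wordPow_suffix (block d k (letter d k)))
      (fun _ => List.prefix_rfl (l := z ++ v)) n) (encard_startingFactors_le z v n)
  refine (Set.encard_union_le _ _).trans ((add_le_add hpc hz).trans_eq ?_)
  push_cast
  ring

variable {z v : List (Fin d)}

lemma factorsIn_intermediate_wordPow (z v : List (Fin d)) (j : Fin d) (e : ℕ) :
    FactorsIn (intermediateFactors d k n z v) n (wordPow (block d k j) e) :=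
  fun _ hw hwn => .inl (.inl (Set.mem_iUnion.2 ⟨j, hwn, e, hw⟩))

lemma factorsIn_intermediate_append (hv : FactorsIn (intermediateFactors d k n z v) n v) (e : ℕ) :
    FactorsIn (intermediateFactors d k n z v) n
      (wordPow (block d k (letter d k)) e ++ (z ++ v)) := by
  intro w hw hwn
  rcases List.infix_append_iff.1 hw with h | h | ⟨a, b, h⟩
  · exact factorsIn_intermediate_wordPow z v _ e w h hwn
  · rcases infix_append_cases_start h with h | h
    · exact hv w h hwn
    · exact .inr (.inr ⟨hwn, h⟩)
  · exact .inr (.inl ⟨hwn, e, a, b, h⟩)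

-- For `0 < i < d - 1` neither block changes at stage `k + 1`; the last one starts the new block.
lemma factorsIn_intermediate_consecutive (z v : List (Fin d)) (hi : 0 < i) (hid : i + 1 ≤ d)
    (e : ℕ) : FactorsIn (intermediateFactors d k n z v) n
      (wordPow (block d k (letter d (k + i))) e ++
        wordPow (block d k (letter d (k + (i + 1)))) (exponent d k ^ (i + 1))) := by
  intro w hw hwn
  rcases List.infix_append_iff.1 hw with h | h | ⟨a, b, rfl, ha, hb⟩
  · exact factorsIn_intermediate_wordPow z v _ _ w h hwn
  · exact factorsIn_intermediate_wordPow z v _ _ w h hwn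
  · rw [← block_succ_of_ne k (letter_add_ne hi hid)] at ha
    rcases hid.lt_or_eq with hid | rfl
    · rw [← block_succ_of_ne k (letter_add_ne i.succ_pos hid)] at hb
      exact .inl (.inr (mem_stageCrossingFactors hwn ha hb))
    · refine .inl (.inr (mem_stageCrossingFactors (t := 1) hwn ha ?_))
      rw [letter_add_self] at hb
      rw [add_assoc, letter_add_self, wordPow_one, block_succ_self]
      exact List.prefix_append_of_prefix hb

lemma wordPow_block_succ_infix (k t : ℕ) : wordPow (block d (k + 1) (letter d k)) t <:+:
    wordPow (block d k (letter d k)) (exponent d k ^ d) ++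
      wordPow (middle d k d ++ wordPow (block d k (letter d k)) (exponent d k ^ d)) t := by
  rw [← wordPow_append_comm, ← block_succ_self]
  exact List.infix_append_left

lemma wordCount_le_of_factorsIn (hd : 1 < d) {e : ℕ} (hn : 0 < n) (hnk : n ≤ exponent d (k + 1))
    (hne : n ≤ (wordPow (block d k (letter d k)) e).length) (he : exponent d k ^ d ≤ e)
    (hsuffix : wordPow (block d k (letter d k)) e <:+
      middle d k d ++ wordPow (block d k (letter d k)) (exponent d k ^ d))
    (h : FactorsIn (intermediateFactors d k n z v) n (wordPow (block d k (letter d k)) e ++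
      (middle d k d ++ wordPow (block d k (letter d k)) (exponent d k ^ d)))) :
    wordCount (language d) n ≤ (d + 1) * (n + 1) + totalLength d k + z.length := by
  refine wordCount_le_of_encard_le (encard_intermediateFactors_le k hn z v) fun w hw hwn => ?_
  rcases mem_stageFactors_of_mem_language hd hw hwn hnk with hw | hw
  · obtain ⟨j, -, t, hw⟩ := Set.mem_iUnion.1 hw
    by_cases hj : j = letter d k
    · have hstart : CoveredEnding (intermediateFactors d k n z v) n _ _ :=
        ⟨List.suffix_rfl, hne, factorsIn_intermediate_wordPow z v (letter d k) e⟩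
      refine (hstart.append_wordPow h hsuffix t).factorsIn w (hw.trans ?_) hwn
      obtain ⟨a, ha⟩ := wordPow_suffix (block d k (letter d k)) he
      rw [hj, ← ha, List.append_assoc]
      exact List.infix_append_of_infix_right (wordPow_block_succ_infix k t)
    · rw [block_succ_of_ne k hj] at hw
      exact factorsIn_intermediate_wordPow z v j t w hw hwn
  · exact .inl (.inr hw)

lemma length_block_succ_self (k : ℕ) : (block d (k + 1) (letter d k)).length =
    2 * (exponent d k ^ d * (block d k (letter d k)).length) + (middle d k (d - 1)).length := by
  rw [block_succ_self, middle_self]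
  simp only [List.length_append, length_wordPow]
  ring

lemma two_mul_le_exponent_succ (k : ℕ) :
    2 * (exponent d k ^ d * (block d k (letter d k)).length) ≤ exponent d (k + 1) := by
  have hblock := length_block_le_totalLength (k + 1) (letter d k)
  have hexp : totalLength d (k + 1) ≤ exponent d (k + 1) :=
    Nat.le_mul_of_pos_left _ (by positivity)
  have := length_block_succ_self (d := d) k
  omega

lemma CoveredEnding.append_middle {x : List (Fin d)} (hi : 0 < i) (hn : n ≤ exponent d k ^ (i + 1))
    (h : CoveredEnding (intermediateFactors d k n z v) n (x ++ middle d k (i + 1))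
      (wordPow (block d k (letter d (k + (i + 1)))) (exponent d k ^ (i + 1))))
    {m : ℕ} (him : i + 1 ≤ m) (hmd : m ≤ d) :
    CoveredEnding (intermediateFactors d k n z v) n (x ++ middle d k m)
      (wordPow (block d k (letter d (k + m))) (exponent d k ^ m)) := by
  induction m, him using Nat.le_induction with
  | base => exact h
  | succ m him ih =>
    rw [middle_succ, ← List.append_assoc]
    refine (ih (by omega)).append (factorsIn_intermediate_consecutive z v (by omega) hmd _)
      (List.suffix_append _ _) (le_length_wordPow_block (hn.trans ?_) _)
    exact Nat.pow_le_pow_right (exponent_pos k) (by omega)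

lemma wordCount_le_of_le_exponent_pow (hd : 1 < d) (hn : 0 < n) (hi : i + 2 ≤ d)
    (hni : n ≤ exponent d k ^ (i + 2)) :
    wordCount (language d) n ≤ (d + 1) * (n + 1) + totalLength d k + (middle d k i).length := by
  have hnd : n ≤ exponent d k ^ d := hni.trans (Nat.pow_le_pow_right (exponent_pos k) hi)
  have hnk : n ≤ exponent d (k + 1) := by
    refine (hnd.trans ?_).trans (two_mul_le_exponent_succ k)
    exact (Nat.le_mul_of_pos_right _ (one_le_length_block k _)).trans
      (Nat.le_mul_of_pos_left _ two_pos)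
  set v := wordPow (block d k (letter d (k + (i + 1)))) (exponent d k ^ (i + 1)) ++
    wordPow (block d k (letter d (k + (i + 1 + 1)))) (exponent d k ^ (i + 1 + 1))
  have hmiddle : middle d k (i + 1 + 1) = middle d k i ++ v := by
    rw [middle_succ, middle_succ, List.append_assoc]
  refine wordCount_le_of_factorsIn (v := v) hd hn hnk (le_length_wordPow_block hnd _) le_rfl
    (List.suffix_append _ _) ?_
  have hfirst : CoveredEnding (intermediateFactors d k n (middle d k i) v) n
      (wordPow (block d k (letter d k)) (exponent d k ^ d) ++ middle d k (i + 1 + 1))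
      (wordPow (block d k (letter d (k + (i + 1 + 1)))) (exponent d k ^ (i + 1 + 1))) := by
    refine ⟨?_, le_length_wordPow_block hni _, ?_⟩
    · exact List.suffix_append_of_suffix (hmiddle ▸ List.suffix_append_of_suffix
        (List.suffix_append _ _))
    · rw [hmiddle]
      exact factorsIn_intermediate_append
        (factorsIn_intermediate_consecutive _ v (Nat.succ_pos i) hi _) _
  have hall := hfirst.append_middle (Nat.succ_pos i) hni hi le_rfl
  rw [letter_add_self] at hall
  rw [← List.append_assoc]
  refine (hall.append (w := wordPow _ _) ?_ (List.suffix_append _ _) hall.le_length).factorsIn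
  rw [← wordPow_add]
  exact factorsIn_intermediate_wordPow _ v _ _

lemma wordCount_le_of_le_two_mul (hd : 1 < d) (hn : 0 < n)
    (hnk : n ≤ 2 * (exponent d k ^ d * (block d k (letter d k)).length)) :
    wordCount (language d) n ≤
      (d + 1) * (n + 1) + totalLength d k + (middle d k (d - 1)).length := by
  set v := wordPow (block d k (letter d k)) (exponent d k ^ d + exponent d k ^ d) with hv
  have hrotate : middle d k d ++ wordPow (block d k (letter d k)) (exponent d k ^ d) =
      middle d k (d - 1) ++ v := by
    rw [middle_self, hv, wordPow_add, List.append_assoc]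
  refine wordCount_le_of_factorsIn (v := v) hd hn (hnk.trans (two_mul_le_exponent_succ k))
    (e := exponent d k ^ d + exponent d k ^ d) ?_ (Nat.le_add_right _ _) ?_ ?_
  · rw [length_wordPow, ← two_mul, mul_assoc]
    exact hnk
  · exact hrotate ▸ List.suffix_append _ _
  · rw [hrotate]
    exact factorsIn_intermediate_append (factorsIn_intermediate_wordPow _ v _ _) _

lemma totalLength_succ_le (k : ℕ) :
    totalLength d (k + 1) ≤ (block d (k + 1) (letter d k)).length + totalLength d k := by
  rw [totalLength, ← Finset.add_sum_erase _ _ (Finset.mem_univ (letter d k))]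
  refine Nat.add_le_add_left ?_ _
  calc ∑ j ∈ Finset.univ.erase (letter d k), (block d (k + 1) j).length
      = ∑ j ∈ Finset.univ.erase (letter d k), (block d k j).length :=
        Finset.sum_congr rfl fun j hj => by rw [block_succ_of_ne k (Finset.ne_of_mem_erase hj)]
    _ ≤ totalLength d k := Finset.sum_le_sum_of_subset (Finset.erase_subset _ _)

lemma exists_wordCount_le_add_middle (hd : 1 < d) (hkn : exponent d k ≤ n)
    (hnk : n ≤ exponent d (k + 1)) : ∃ i, exponent d k ^ (i + 1) ≤ n ∧
      wordCount (language d) n ≤ (d + 1) * (n + 1) + totalLength d k + (middle d k i).length := by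
  have hn : 0 < n := (exponent_pos k).trans_le hkn
  have hd1 : d - 1 + 1 = d := by omega
  rcases lt_or_ge n (exponent d k ^ d) with hnd | hnd
  · obtain ⟨i, hin, hni⟩ : ∃ i, exponent d k ^ i ≤ n ∧ n < exponent d k ^ (i + 1) :=
      ⟨Nat.log (exponent d k) n, Nat.pow_log_le_self _ hn.ne',
        Nat.lt_pow_succ_log_self ((by norm_num : 1 < 16).trans_le (sixteen_le_exponent k)) n⟩
    have hi : i ≠ 0 := by
      rintro rfl
      simp only [zero_add, pow_one] at hni
      omega
    have hid : i < d := (Nat.pow_lt_pow_iff_right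
      ((by norm_num : 1 < 16).trans_le (sixteen_le_exponent k))).1 (hin.trans_lt hnd)
    obtain ⟨i, rfl⟩ := Nat.exists_eq_succ_of_ne_zero hi
    exact ⟨i, hin, wordCount_le_of_le_exponent_pow hd hn hid hni.le⟩
  · refine ⟨d - 1, by rwa [hd1], ?_⟩
    rcases le_or_gt n (2 * (exponent d k ^ d * (block d k (letter d k)).length)) with h | h
    · exact wordCount_le_of_le_two_mul hd hn h
    · have hcount := wordCount_le_of_le_exponent hd hn hnk
      have htotal := totalLength_succ_le (d := d) k
      rw [length_block_succ_self] at htotal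
      rw [add_one_mul]
      omega

lemma four_pow_mul_wordCount_le (hd : 1 < d) (hkn : exponent d k ≤ n)
    (hnk : n ≤ exponent d (k + 1)) :
    4 ^ k * wordCount (language d) n ≤ 4 ^ k * ((d + 1) * (n + 1)) + 2 * n := by
  obtain ⟨i, hin, hcount⟩ := exists_wordCount_le_add_middle hd hkn hnk
  have htotal : 4 ^ k * totalLength d k ≤ n :=
    (Nat.mul_le_mul_right _ (Nat.pow_le_pow_right (by norm_num) (by omega))).trans hkn
  have hmiddle : 4 ^ k * (middle d k i).length ≤ n :=
    ((Nat.mul_le_mul_right _ (Nat.pow_le_pow_right (by norm_num) (by omega))).trans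
      (four_pow_mul_length_middle_le k i)).trans hin
  calc 4 ^ k * wordCount (language d) n
      ≤ 4 ^ k * ((d + 1) * (n + 1) + totalLength d k + (middle d k i).length) :=
        Nat.mul_le_mul_left _ hcount
    _ = 4 ^ k * ((d + 1) * (n + 1)) + 4 ^ k * totalLength d k
        + 4 ^ k * (middle d k i).length := by ring
    _ ≤ 4 ^ k * ((d + 1) * (n + 1)) + 2 * n := by omega

end UpperBound

/-! ### Lower bounds for the complexity -/

section RightSpecial

variable {α : Type*} {L : Set (List α)} {n : ℕ} {u v u' v' : List α}

lemma append_infix_append (hu : u <:+ u') (hv : v <+: v') : u ++ v <:+: u' ++ v' := by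
  obtain ⟨s, rfl⟩ := hu
  obtain ⟨t, rfl⟩ := hv
  exact ⟨s, t, by simp only [List.append_assoc]⟩

lemma eq_of_singleton_suffix {a b : α} (ha : [a] <:+ u) (hb : [b] <:+ u) : a = b :=
  List.singleton_inj.1 (eq_of_suffix_of_suffix ha hb rfl)

lemma rtake_suffix (n : ℕ) (u : List α) : u.rtake n <:+ u := List.drop_suffix _ _

lemma length_rtake_of_le (h : n ≤ u.length) : (u.rtake n).length = n := by
  rw [List.rtake, List.length_drop, Nat.sub_sub_self h]

/-- A word is right special in `L` if at least two letters can follow it. -/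
def IsRightSpecial (L : Set (List α)) (w : List α) : Prop :=
  ∃ a b, a ≠ b ∧ w ++ [a] ∈ L ∧ w ++ [b] ∈ L

lemma wordCount_add_card_le [Finite α] [Nonempty α] (hL : ∀ w ∈ L, ∃ a, w ++ [a] ∈ L)
    (S : Finset (List α)) (hS : ∀ w ∈ S, w.length = n ∧ IsRightSpecial L w) :
    wordCount L n + S.card ≤ wordCount L (n + 1) := by
  choose! r hr using hL
  have hother : ∀ w ∈ S, ∃ a, a ≠ r w ∧ w ++ [a] ∈ L := by
    intro w hw
    obtain ⟨-, a, b, hab, ha, hb⟩ := hS w hw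
    by_cases har : a = r w
    · exact ⟨b, har ▸ hab.symm, hb⟩
    · exact ⟨a, har, ha⟩
  choose! s hsr hs using hother
  have hinj : ∀ f : List α → α, Function.Injective fun w => w ++ [f w] :=
    fun f w w' h => (List.append_inj' h rfl).1
  set E : Set (List α) := (fun w => w ++ [r w]) '' {w ∈ L | w.length = n} with hE
  set F : Set (List α) := (fun w => w ++ [s w]) '' S with hF
  have hfin : ∀ m, {w ∈ L | w.length = m}.Finite :=
    fun m => (List.finite_length_eq α m).subset fun w hw => hw.2
  have hdisj : Disjoint E F := by
    rw [Set.disjoint_left]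
    rintro _ ⟨w, -, rfl⟩ ⟨w', hw', h⟩
    obtain ⟨rfl, h⟩ := List.append_inj' h rfl
    exact hsr w' hw' (List.singleton_inj.1 h)
  have hsub : E ∪ F ⊆ {w ∈ L | w.length = n + 1} := by
    rintro _ (⟨w, ⟨hw, hwn⟩, rfl⟩ | ⟨w, hw, rfl⟩)
    · exact ⟨hr w hw, by rw [List.length_append, hwn, List.length_singleton]⟩
    · exact ⟨hs w hw, by rw [List.length_append, (hS w hw).1, List.length_singleton]⟩
  calc wordCount L n + S.card = E.ncard + F.ncard := by
        rw [hE, hF, Set.ncard_image_of_injective _ (hinj r),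
          Set.ncard_image_of_injective _ (hinj s), Set.ncard_coe_finset, wordCount]
    _ = (E ∪ F).ncard :=
        (Set.ncard_union_eq hdisj ((hfin n).image _) (S.finite_toSet.image _)).symm
    _ ≤ wordCount L (n + 1) := Set.ncard_le_ncard hsub (hfin (n + 1))

end RightSpecial

section LowerBound

variable {d : ℕ} [NeZero d] {k K n : ℕ} {u v w : List (Fin d)}

lemma singleton_prefix_block (k : ℕ) (j : Fin d) : [j] <+: block d k j :=
  block_prefix (Nat.zero_le k) j

lemma singleton_suffix_block (k : ℕ) (j : Fin d) : [j] <:+ block d k j :=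
  block_suffix (Nat.zero_le k) j

lemma wordPow_append_middle_mem_language (k : ℕ) {i : ℕ} (hi : i ≤ d) :
    wordPow (block d k (letter d k)) (exponent d k ^ d) ++ middle d k i ∈ language d := by
  refine ⟨k + 1, letter d k, ?_⟩
  rw [block_succ_self]
  exact append_infix_append List.suffix_rfl (middle_prefix k hi)

lemma block_append_block_mem_language (K : ℕ) (c : Fin d) :
    block d K c ++ block d K c ∈ language d := by
  obtain ⟨i, -, rfl⟩ := exists_letter_add_eq K c
  have hK : K ≤ K + i := Nat.le_add_right K i
  have hq : 2 ≤ exponent d (K + i) ^ d :=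
    ((by norm_num : 2 ≤ 16).trans (sixteen_le_exponent _)).trans
      (Nat.le_self_pow (NeZero.ne d) _)
  have hsquare := wordPow_prefix (block d (K + i) (letter d (K + i))) hq
  rw [wordPow_succ, wordPow_one] at hsquare
  exact mem_language_of_infix (wordPow_append_middle_mem_language (K + i) le_rfl)
    ((append_infix_append (block_suffix hK _) (block_prefix hK _)).trans
      (hsquare.trans (List.prefix_append _ _)).isInfix)

lemma block_append_next_mem_language (K : ℕ) (c : Fin d) :
    block d K c ++ block d K (letter d (c + 1)) ∈ language d := by
  obtain ⟨i, -, rfl⟩ := exists_letter_add_eq K c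
  have hK : K ≤ K + i := Nat.le_add_right K i
  refine mem_language_of_infix
    (wordPow_append_middle_mem_language (K + i) (NeZero.one_le : 1 ≤ d)) (append_infix_append
      ((block_suffix hK _).trans (suffix_wordPow _ (pow_pos (exponent_pos _) d)))
      ((block_prefix hK _).trans ?_))
  rw [letter_succ_congr (letter_val _), middle_succ, middle_zero, List.nil_append]
  exact prefix_wordPow _ (pow_pos (exponent_pos _) _)

lemma concat_mem_language {c : Fin d} (h : u ++ v ∈ language d) (hw : w <:+ u) (hc : [c] <+: v) :
    w ++ [c] ∈ language d :=
  mem_language_of_infix h (append_infix_append hw hc)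

lemma exists_concat_mem_language (h : w ∈ language d) : ∃ a, w ++ [a] ∈ language d := by
  obtain ⟨K, j, s, t, hst⟩ := h
  rcases t with _ | ⟨b, t⟩
  · exact ⟨j, concat_mem_language (block_append_block_mem_language K j)
      ⟨s, by rw [← hst, List.append_nil]⟩ (singleton_prefix_block K j)⟩
  · exact ⟨b, mem_language_of_infix (block_mem_language K j)
      ⟨s, t, by rw [← hst]; simp only [List.append_assoc, List.singleton_append]⟩⟩

lemma le_length_block (h : d + n ≤ K) (c : Fin d) : n ≤ (block d K c).length := by
  have hpow : 4 ^ d * 4 ^ n ≤ 4 ^ d * (block d K c).length :=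
    (pow_add 4 d n ▸ Nat.pow_le_pow_right (by norm_num) h).trans (four_pow_le_length_block K c)
  exact (Nat.lt_pow_self (by norm_num)).le.trans (Nat.le_of_mul_le_mul_left hpow (by positivity))

/-- The suffixes of length `n` of the blocks of stage `K`; for large `K` these are `d` right special
words, since a block can be followed by itself and by the next block. -/
def blockSuffixes (d : ℕ) [NeZero d] (K n : ℕ) : Finset (List (Fin d)) :=
  Finset.univ.image fun c => (block d K c).rtake n

lemma exists_suffix_of_mem_blockSuffixes (hw : w ∈ blockSuffixes d K n) :
    ∃ c, w <:+ block d K c := by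
  obtain ⟨c, -, rfl⟩ := Finset.mem_image.1 hw
  exact ⟨c, rtake_suffix _ _⟩

lemma card_blockSuffixes (hn : 0 < n) (h : d + n ≤ K) : (blockSuffixes d K n).card = d := by
  have hlast : ∀ c, [c] <:+ (block d K c).rtake n := fun c =>
    List.suffix_of_suffix_length_le (singleton_suffix_block K c) (rtake_suffix _ _)
      (by rwa [length_rtake_of_le (le_length_block h c)])
  have hinj : Function.Injective fun c : Fin d => (block d K c).rtake n :=
    fun a b hab => eq_of_singleton_suffix (hlast a) (by simpa only [hab] using hlast b)
  rw [blockSuffixes, Finset.card_image_of_injective _ hinj, Finset.card_univ, Fintype.card_fin]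

lemma isRightSpecial_of_suffix_block (hd : 1 < d) {c : Fin d} (hw : w <:+ block d K c) :
    IsRightSpecial (language d) w := by
  refine ⟨letter d (c + 1), c, ?_, ?_, ?_⟩
  · conv_rhs => rw [← letter_val c]
    exact letter_add_ne one_pos hd
  · exact concat_mem_language (block_append_next_mem_language K c) hw (singleton_prefix_block _ _)
  · exact concat_mem_language (block_append_block_mem_language K c) hw (singleton_prefix_block _ _)

lemma isRightSpecial_of_mem_blockSuffixes (hd : 1 < d) (h : d + n ≤ K)
    (hw : w ∈ blockSuffixes d K n) : w.length = n ∧ IsRightSpecial (language d) w := by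
  obtain ⟨c, -, rfl⟩ := Finset.mem_image.1 hw
  exact ⟨length_rtake_of_le (le_length_block h c),
    isRightSpecial_of_suffix_block hd (rtake_suffix _ _)⟩

lemma mul_le_wordCount_succ (hd : 1 < d) (n : ℕ) : d * n ≤ wordCount (language d) (n + 1) := by
  induction n with
  | zero => simp
  | succ n ih =>
    have hstep := wordCount_add_card_le (L := language d)
      (fun w hw => exists_concat_mem_language hw) (blockSuffixes d (d + (n + 1)) (n + 1))
      (fun w hw => isRightSpecial_of_mem_blockSuffixes hd le_rfl hw)
    rw [card_blockSuffixes n.succ_pos le_rfl] at hstep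
    rw [Nat.mul_succ]
    omega

/-- The word `U_k^{q^d} U_{k+1}^q`. Its suffixes of length between `q |U_{k+1}|` and `q^d` are right
special but not suffixes of blocks of a late stage, which accounts for the growth rate `d + 1`. -/
def extraWord (d : ℕ) [NeZero d] (k : ℕ) : List (Fin d) :=
  wordPow (block d k (letter d k)) (exponent d k ^ d) ++
    wordPow (block d k (letter d (k + 1))) (exponent d k)

lemma extraWord_append_letter_add_two_mem_language (hd : 1 < d) (hw : w <:+ extraWord d k) :
    w ++ [letter d (k + 2)] ∈ language d := by
  have h := wordPow_append_middle_mem_language k hd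
  rw [middle_succ, middle_succ, middle_zero, List.nil_append, ← List.append_assoc] at h
  simp only [zero_add, pow_one] at h
  exact concat_mem_language h hw ((singleton_prefix_block k _).trans
    (prefix_wordPow _ (pow_pos (exponent_pos k) _)))

lemma block_succ_letter_succ (hd : 1 < d) (k : ℕ) :
    block d (k + 1) (letter d (k + 1)) = block d k (letter d (k + 1)) :=
  block_succ_of_ne k (letter_add_ne one_pos hd)

lemma exponent_lt_exponent_succ_pow (k : ℕ) : exponent d k < exponent d (k + 1) ^ d := by
  have htwo := two_mul_le_exponent_succ (d := d) k
  have hblock := Nat.le_mul_of_pos_right (exponent d k ^ d) (one_le_length_block k (letter d k))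
  have hpow := Nat.le_self_pow (NeZero.ne d) (exponent d k)
  have hpow' := Nat.le_self_pow (NeZero.ne d) (exponent d (k + 1))
  have hpos := exponent_pos (d := d) k
  omega

lemma wordPow_suffix_block_succ (k : ℕ) :
    wordPow (block d k (letter d k)) (exponent d k ^ d) <:+ block d (k + 1) (letter d k) := by
  rw [block_succ_self, middle_self, ← List.append_assoc]
  exact List.suffix_append _ _

lemma extraWord_append_letter_add_one_mem_language (hd : 1 < d) (hw : w <:+ extraWord d k) :
    w ++ [letter d (k + 1)] ∈ language d := by
  have hd1 : d - 1 = d - 2 + 1 := by omega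
  have hletter : letter d (k + 1 + (d - 2 + 1)) = letter d k := by
    rw [show k + 1 + (d - 2 + 1) = k + d by omega, letter_add_self]
  have h := wordPow_append_middle_mem_language (d := d) (k + 1) le_rfl
  rw [middle_self, hd1, middle_succ, hletter, block_succ_letter_succ hd, ← List.append_assoc,
    ← List.append_assoc] at h
  have hpow :=
    wordPow_prefix (block d k (letter d (k + 1))) (exponent_lt_exponent_succ_pow (d := d) k)
  rw [wordPow_succ'] at hpow
  have hleft : wordPow (block d k (letter d k)) (exponent d k ^ d) <:+
      wordPow (block d (k + 1) (letter d k)) (exponent d (k + 1) ^ (d - 2 + 1)) :=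
    (wordPow_suffix_block_succ k).trans (suffix_wordPow _ (pow_pos (exponent_pos _) _))
  have hmem := mem_language_of_infix h
    (append_infix_append (hleft.trans (List.suffix_append _ _)) hpow)
  rw [← List.append_assoc] at hmem
  exact concat_mem_language hmem hw (singleton_prefix_block k _)

lemma not_suffix_block_of_suffix_extraWord (hd : 1 < d) {c : Fin d} (hK : k + 2 ≤ K)
    (hw : w <:+ extraWord d k)
    (hlow : exponent d k * (block d k (letter d (k + 1))).length < w.length)
    (hupp : w.length ≤ exponent d k ^ d) : ¬ w <:+ block d K c := by
  set u := block d k (letter d (k + 1)) with hu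
  intro hwc
  have hmarker : [letter d k] ++ wordPow u (exponent d k) <:+ w := by
    obtain ⟨s, hs⟩ := (singleton_suffix_block k (letter d k)).trans
      (suffix_wordPow _ (pow_pos (exponent_pos (d := d) k) d))
    refine List.suffix_of_suffix_length_le ⟨s, ?_⟩ hw ?_
    · rw [extraWord, ← hs, List.append_assoc]
    · rw [List.length_append, length_wordPow, List.length_singleton, add_comm]
      exact hlow
  have hlast : [letter d (k + 1)] <:+ w :=
    ((singleton_suffix_block k _).trans (suffix_wordPow u (exponent_pos k))).trans
      ((List.suffix_append _ _).trans hmarker)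
  obtain rfl : c = letter d (k + 1) :=
    eq_of_singleton_suffix (singleton_suffix_block K c) (hlast.trans hwc)
  have hpow : wordPow u (exponent d (k + 1) ^ d) <:+ block d K (letter d (k + 1)) := by
    rw [hu, ← block_succ_letter_succ hd]
    exact (wordPow_suffix_block_succ (k + 1)).trans (block_suffix hK _)
  have hwpow : w <:+ wordPow u (exponent d (k + 1) ^ d) :=
    List.suffix_of_suffix_length_le hwc hpow <|
      (hupp.trans (Nat.pow_le_pow_left (exponent_mono k.le_succ) d)).trans
        (le_length_wordPow (one_le_length_block k _) _)
  have hmarker' : [letter d (k + 1)] ++ wordPow u (exponent d k) <:+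
      wordPow u (exponent d (k + 1) ^ d) := by
    refine List.IsSuffix.trans ?_ (wordPow_suffix u (exponent_lt_exponent_succ_pow k))
    obtain ⟨s, hs⟩ := singleton_suffix_block k (letter d (k + 1))
    exact ⟨s, by rw [wordPow_succ, ← List.append_assoc, hs]⟩
  have heq := eq_of_suffix_of_suffix (hmarker.trans hwpow) hmarker' (by simp)
  exact letter_add_ne (k := k) one_pos hd (List.singleton_inj.1 (List.append_cancel_right heq)).symm

lemma wordCount_add_le_wordCount_succ (hd : 1 < d)
    (hlow : exponent d k * (block d k (letter d (k + 1))).length < n)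
    (hupp : n ≤ exponent d k ^ d) :
    wordCount (language d) n + (d + 1) ≤ wordCount (language d) (n + 1) := by
  set K := d + n + k + 2
  set w := (extraWord d k).rtake n
  have hwsuffix : w <:+ extraWord d k := rtake_suffix _ _
  have hwlength : w.length = n := length_rtake_of_le <| by
    rw [extraWord, List.length_append]
    exact (hupp.trans (le_length_wordPow (one_le_length_block k _) _)).trans (Nat.le_add_right _ _)
  have hnotMem : w ∉ blockSuffixes d K n := fun hmem =>
    let ⟨_, hc⟩ := exists_suffix_of_mem_blockSuffixes hmem
    not_suffix_block_of_suffix_extraWord hd (by omega) hwsuffix (hwlength ▸ hlow)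
      (hwlength ▸ hupp) hc
  have hspecial : IsRightSpecial (language d) w :=
    ⟨letter d (k + 2), letter d (k + 1), letter_add_ne (k := k + 1) one_pos hd,
      extraWord_append_letter_add_two_mem_language hd hwsuffix,
      extraWord_append_letter_add_one_mem_language hd hwsuffix⟩
  have hstep := wordCount_add_card_le (L := language d)
    (fun w hw => exists_concat_mem_language hw) (insert w (blockSuffixes d K n)) (n := n) <| by
      simp only [Finset.forall_mem_insert]
      exact ⟨⟨hwlength, hspecial⟩,
        fun w' hw' => isRightSpecial_of_mem_blockSuffixes hd (by omega) hw'⟩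
  rwa [Finset.card_insert_of_notMem hnotMem, card_blockSuffixes (by omega) (by omega)] at hstep

lemma le_wordCount_of_le_exponent_pow (hd : 1 < d) {l m : ℕ}
    (hl : l = exponent d k * (block d k (letter d (k + 1))).length)
    (hm : l + m ≤ exponent d k ^ d) :
    d * l + (d + 1) * m ≤ wordCount (language d) (l + 1 + m) := by
  induction m with
  | zero => simpa using mul_le_wordCount_succ hd l
  | succ m ih =>
    have hstep := wordCount_add_le_wordCount_succ hd (n := l + 1 + m) (k := k)
      (by omega) (by omega)
    rw [Nat.mul_succ, ← add_assoc (l + 1)]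
    have := ih (by omega)
    omega

lemma four_pow_mul_le_wordCount_exponent_pow (hd : 1 < d) (k : ℕ) :
    4 ^ k * ((d + 1) * exponent d k ^ d) ≤
      4 ^ k * wordCount (language d) (exponent d k ^ d) + exponent d k ^ d + 4 ^ k * (d + 1) := by
  obtain ⟨l, hl⟩ : ∃ l, l = exponent d k * (block d k (letter d (k + 1))).length := ⟨_, rfl⟩
  have hlq : 4 ^ (k + 2) * l ≤ exponent d k ^ d := calc
    4 ^ (k + 2) * l ≤ 4 ^ (k + 2) * (exponent d k * totalLength d k) := by
        rw [hl]
        gcongr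
        exact length_block_le_totalLength k _
    _ = exponent d k ^ 2 := by rw [sq]; nth_rw 3 [exponent_eq]; ring
    _ ≤ exponent d k ^ d := Nat.pow_le_pow_right (exponent_pos k) hd
  have hl4 : 4 ^ k * l ≤ exponent d k ^ d :=
    (Nat.mul_le_mul_right _ (Nat.pow_le_pow_right (by norm_num) (by omega))).trans hlq
  have hlt : l + 1 ≤ exponent d k ^ d := by
    have hpos : 0 < l := hl ▸ Nat.mul_pos (exponent_pos k) (one_le_length_block k _)
    have : 4 ^ 2 ≤ 4 ^ (k + 2) := Nat.pow_le_pow_right (by norm_num) (by omega)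
    nlinarith
  obtain ⟨m, hm⟩ := Nat.exists_eq_add_of_le hlt
  have hcount := le_wordCount_of_le_exponent_pow hd hl (m := m) (by omega)
  rw [← hm] at hcount
  calc 4 ^ k * ((d + 1) * exponent d k ^ d)
      = 4 ^ k * (d * l + (d + 1) * m) + 4 ^ k * l + 4 ^ k * (d + 1) := by rw [hm]; ring
    _ ≤ _ := by gcongr

end LowerBound

/-! ### The limits of the complexity ratio -/

section Ratio

variable {c C m n p : ℕ}

lemma le_of_forall_le_add_div_four_pow {a b : ℝ≥0∞} (h : ∀ k : ℕ, a ≤ b + C / 4 ^ k) :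
    a ≤ b := by
  have hpow : Tendsto (fun k : ℕ => (C : ℝ≥0∞) / 4 ^ k) atTop (nhds (C * 0)) := by
    simp only [div_eq_mul_inv, ENNReal.inv_pow]
    exact ENNReal.Tendsto.const_mul (ENNReal.tendsto_pow_atTop_nhds_zero_of_lt_one
      (ENNReal.inv_lt_one.2 (by norm_num : (1 : ℝ≥0∞) < 4))) (Or.inr (ENNReal.natCast_ne_top C))
  have hadd := hpow.const_add b
  rw [mul_zero, add_zero] at hadd
  exact ge_of_tendsto' hadd h

lemma div_le_add_div (hm : 0 < m) (hn : 0 < n) (h : m * p ≤ (m * c + C) * n) :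
    (p : ℝ≥0∞) / n ≤ c + C / m := by
  have hm' : (m : ℝ≥0∞) ≠ 0 := by exact_mod_cast hm.ne'
  rw [ENNReal.div_le_iff (by exact_mod_cast hn.ne') (ENNReal.natCast_ne_top n),
    ← ENNReal.mul_le_mul_iff_right hm' (ENNReal.natCast_ne_top m), ← mul_assoc, mul_add,
    ENNReal.mul_div_cancel hm' (ENNReal.natCast_ne_top m)]
  exact_mod_cast h

lemma le_div_add_div (hm : 0 < m) (hn : 0 < n) (h : m * (c * n) ≤ m * p + C * n) :
    (c : ℝ≥0∞) ≤ p / n + C / m := by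
  have hm' : (m : ℝ≥0∞) ≠ 0 := by exact_mod_cast hm.ne'
  have hn' : (n : ℝ≥0∞) ≠ 0 := by exact_mod_cast hn.ne'
  rw [← ENNReal.mul_le_mul_iff_left hn' (ENNReal.natCast_ne_top n),
    ← ENNReal.mul_le_mul_iff_right hm' (ENNReal.natCast_ne_top m), add_mul, mul_add,
    ENNReal.div_mul_cancel hn' (ENNReal.natCast_ne_top n), ← mul_assoc (m : ℝ≥0∞) (C / m) n,
    ENNReal.mul_div_cancel hm' (ENNReal.natCast_ne_top m)]
  exact_mod_cast h

variable {d : ℕ} [NeZero d]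

lemma le_exponent (k : ℕ) : k ≤ exponent d k :=
  ((Nat.lt_pow_self (by norm_num)).le.trans
    (Nat.pow_le_pow_right (by norm_num) (Nat.le_add_right k 2))).trans (four_pow_le_exponent k)

lemma four_pow_le_of_exponent_le {k : ℕ} (h : exponent d k ≤ n) : 4 ^ k ≤ n :=
  ((Nat.pow_le_pow_right (by norm_num) (Nat.le_add_right k 2)).trans
    (four_pow_le_exponent k)).trans h

lemma exists_exponent_le_le_exponent_succ {k : ℕ} (h : exponent d k ≤ n) :
    ∃ l ≥ k, exponent d l ≤ n ∧ n ≤ exponent d (l + 1) := by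
  set l := Nat.findGreatest (fun l => exponent d l ≤ n) n
  refine ⟨l, Nat.le_findGreatest ((le_exponent k).trans h) h,
    Nat.findGreatest_spec (P := fun l => exponent d l ≤ n) ((le_exponent k).trans h) h, ?_⟩
  rcases le_or_gt (l + 1) n with hln | hln
  · exact (not_le.1 (Nat.findGreatest_is_greatest (P := fun l => exponent d l ≤ n)
      (Nat.lt_succ_self l) hln)).le
  · exact hln.le.trans (le_exponent (l + 1))

theorem limsup_wordCount_div_le (hd : 1 < d) :
    limsup (fun n => (wordCount (language d) n : ℝ≥0∞) / n) atTop ≤ d + 1 := by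
  refine le_of_forall_le_add_div_four_pow (C := d + 3) fun k =>
    limsup_le_of_le (by isBoundedDefault) ?_
  filter_upwards [eventually_ge_atTop (exponent d k)] with n hn
  obtain ⟨l, hkl, hln, hnl⟩ := exists_exponent_le_le_exponent_succ hn
  have hcount := four_pow_mul_wordCount_le hd hln hnl
  have h4 := four_pow_le_of_exponent_le hln
  have hratio := div_le_add_div (m := 4 ^ l) (n := n) (c := d + 1) (C := d + 3)
    (p := wordCount (language d) n) (by positivity) ((exponent_pos l).trans_le hln) (by nlinarith)
  push_cast at hratio ⊢
  refine hratio.trans ?_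
  gcongr
  norm_num

theorem le_limsup_wordCount_div (hd : 1 < d) :
    d + 1 ≤ limsup (fun n => (wordCount (language d) n : ℝ≥0∞) / n) atTop := by
  refine le_of_forall_le_add_div_four_pow (C := d + 2) fun k => tsub_le_iff_right.1 ?_
  refine le_limsup_of_frequently_le (frequently_atTop.2 fun N => ?_) (by isBoundedDefault)
  set l := max k N
  have hl : exponent d l ≤ exponent d l ^ d := Nat.le_self_pow (NeZero.ne d) _
  refine ⟨exponent d l ^ d, ((le_max_right k N).trans (le_exponent l)).trans hl, ?_⟩
  have hcount := four_pow_mul_le_wordCount_exponent_pow hd l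
  have h4 := four_pow_le_of_exponent_le hl
  have hratio := le_div_add_div (m := 4 ^ l) (n := exponent d l ^ d) (c := d + 1) (C := d + 2)
    (p := wordCount (language d) (exponent d l ^ d)) (by positivity)
    (pow_pos (exponent_pos l) d) (by nlinarith)
  rw [tsub_le_iff_right]
  push_cast at hratio ⊢
  refine hratio.trans ?_
  gcongr
  · norm_num
  · exact le_max_left k N

theorem liminf_wordCount_div_le (hd : 1 < d) :
    liminf (fun n => (wordCount (language d) n : ℝ≥0∞) / n) atTop ≤ d := by
  refine le_of_forall_le_add_div_four_pow (C := d + 1) fun k =>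
    liminf_le_of_frequently_le (frequently_atTop.2 fun N => ?_) (by isBoundedDefault)
  set l := max k N
  refine ⟨exponent d l, (le_max_right k N).trans (le_exponent l), ?_⟩
  have hcount := wordCount_le_of_le_exponent hd (exponent_pos l) le_rfl
  have h4 := four_pow_le_of_exponent_le (le_refl (exponent d l))
  have htotal : 4 ^ l * totalLength d l ≤ exponent d l :=
    Nat.mul_le_mul_right _ (Nat.pow_le_pow_right (by norm_num) (Nat.le_add_right l 2))
  have hratio := div_le_add_div (m := 4 ^ l) (n := exponent d l) (c := d) (C := d + 1)
    (p := wordCount (language d) (exponent d l)) (by positivity) (exponent_pos l) <| calc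
      4 ^ l * wordCount (language d) (exponent d l)
          ≤ 4 ^ l * (d * (exponent d l + 1) + totalLength d l) := Nat.mul_le_mul_left _ hcount
      _ = 4 ^ l * d * exponent d l + 4 ^ l * d + 4 ^ l * totalLength d l := by ring
      _ ≤ 4 ^ l * d * exponent d l + exponent d l * d + exponent d l := by gcongr
      _ = (4 ^ l * d + (d + 1)) * exponent d l := by ring
  push_cast at hratio ⊢
  refine hratio.trans ?_
  gcongr
  · norm_num
  · exact le_max_left k N

theorem le_liminf_wordCount_div (hd : 1 < d) :
    d ≤ liminf (fun n => (wordCount (language d) n : ℝ≥0∞) / n) atTop := by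
  refine le_of_forall_le_add_div_four_pow (C := d) fun k => tsub_le_iff_right.1 ?_
  refine le_liminf_of_le (by isBoundedDefault) ?_
  filter_upwards [eventually_ge_atTop (4 ^ k)] with n hn
  have hpos : 0 < n := (by positivity : 0 < 4 ^ k).trans_le hn
  obtain ⟨n, rfl⟩ := Nat.exists_eq_succ_of_ne_zero hpos.ne'
  have hcount := mul_le_wordCount_succ hd n
  have hratio := le_div_add_div (m := 4 ^ k) (n := n + 1) (c := d) (C := d)
    (p := wordCount (language d) (n + 1)) (by positivity) hpos <| calc
      4 ^ k * (d * (n + 1)) = 4 ^ k * (d * n) + d * 4 ^ k := by ring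
      _ ≤ 4 ^ k * wordCount (language d) (n + 1) + d * (n + 1) := by gcongr
  rw [tsub_le_iff_right]
  exact_mod_cast hratio

end Ratio

/-! ### Windows and the subshift of a language -/

section Window

variable {α : Type*} {x y : ℤ → α} {a b : ℤ} {m n : ℕ}

/-- The word of length `n` read in `x` from position `a` on. -/
def window (x : ℤ → α) (a : ℤ) (n : ℕ) : List α := List.ofFn fun t : Fin n => x (a + (t : ℕ))

@[simp] lemma length_window (x : ℤ → α) (a : ℤ) (n : ℕ) : (window x a n).length = n :=
  List.length_ofFn

@[simp] lemma getElem_window {i : ℕ} (h : i < (window x a n).length) :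
    (window x a n)[i] = x (a + i) := by
  simp only [window, List.getElem_ofFn]

lemma window_add (x : ℤ → α) (a : ℤ) (m n : ℕ) :
    window x a (m + n) = window x a m ++ window x (a + m) n := by
  simp only [window, List.ofFn_add, Fin.val_castLE, Fin.val_natAdd, Nat.cast_add, add_assoc]

lemma window_infix_window (hab : a ≤ b) (hmn : b + m ≤ a + n) : window x b m <:+: window x a n := by
  obtain ⟨p, rfl⟩ := Int.le.dest hab
  obtain ⟨q, rfl⟩ : ∃ q, n = p + m + q := ⟨n - p - m, by omega⟩
  rw [window_add, window_add]
  exact ⟨_, _, rfl⟩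

lemma exists_eq_window_of_infix {w : List α} (h : w <:+: window x a n) :
    ∃ b : ℤ, w = window x b w.length := by
  obtain ⟨s, t, hst⟩ := h
  refine ⟨a + s.length, List.ext_getElem (length_window x _ _).symm fun i hi _ => ?_⟩
  have hn : (window x a n).length = s.length + w.length + t.length := by
    rw [← hst]; simp only [List.length_append]
  have hget : (window x a n)[s.length + i]'(by omega) = x (a + s.length + i) := by
    rw [getElem_window]; push_cast; rw [add_assoc]
  rw [getElem_window, ← hget]
  simp only [← hst, List.append_assoc, List.getElem_append_right (Nat.le_add_right _ i),
    Nat.add_sub_cancel_left, List.getElem_append_left hi]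

lemma window_translate (x : ℤ → α) (k a : ℤ) (n : ℕ) :
    window (fun m => x (m + k)) a n = window x (a + k) n := by
  simp only [window, add_right_comm]

lemma window_shift (x : ℤ → α) (a : ℤ) (n : ℕ) : window (shift x) a n = window x (a + 1) n :=
  window_translate x 1 a n

lemma window_eq_window_iff :
    window x a n = window y b n ↔ ∀ i < n, x (a + i) = y (b + i) := by
  simp only [window, List.ofFn_inj, funext_iff, Fin.forall_iff]

lemma exists_forall_getElem_eq {u : ℕ → List α} (hu : ∀ {m n}, m ≤ n → u m <+: u n)
    (hlen : ∀ n, n < (u n).length) : ∃ f : ℕ → α, ∀ k i (h : i < (u k).length), (u k)[i] = f i := by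
  refine ⟨fun i => (u i)[i]'(hlen i), fun k i h => ?_⟩
  exact ((hu (le_max_left k i)).getElem h).trans ((hu (le_max_right k i)).getElem (hlen i)).symm

lemma exists_window_eq_append {v : ℕ → List α} (hpre : ∀ {m n}, m ≤ n → v m <+: v n)
    (hsuf : ∀ {m n}, m ≤ n → v m <:+ v n) (hlen : ∀ n, n < (v n).length) :
    ∃ x : ℤ → α, ∀ n, window x (-(v n).length) ((v n).length + (v n).length) = v n ++ v n := by
  obtain ⟨f, hf⟩ := exists_forall_getElem_eq hpre hlen
  obtain ⟨g, hg⟩ := exists_forall_getElem_eq (u := fun n => (v n).reverse)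
    (fun h => List.reverse_prefix.2 (hsuf h)) (by simpa only [List.length_reverse] using hlen)
  refine ⟨fun | Int.ofNat i => f i | Int.negSucc i => g i, fun n => ?_⟩
  rw [window_add]
  congr 1
  · refine List.ext_getElem (length_window _ _ _) fun i _ hi => ?_
    have hi' : -((v n).length : ℤ) + i = Int.negSucc ((v n).length - 1 - i) := by omega
    rw [getElem_window, hi']
    refine (hg n ((v n).length - 1 - i) (by rw [List.length_reverse]; omega)).symm.trans ?_
    rw [List.getElem_reverse]
    congr 1
    omega
  · refine List.ext_getElem (length_window _ _ _) fun i _ hi => ?_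
    rw [getElem_window, neg_add_cancel, zero_add]
    exact (hf n i hi).symm

end Window

section SubshiftOf

variable {α : Type*} {L : Set (List α)} {x : ℤ → α}

/-- The subshift of the bi-infinite sequences all of whose factors lie in `L`. -/
def subshiftOf (L : Set (List α)) : Set (ℤ → α) := {x | ∀ a n, window x a n ∈ L}

lemma translate_mem_subshiftOf (hx : x ∈ subshiftOf L) (k : ℤ) :
    (fun m => x (m + k)) ∈ subshiftOf L := by
  intro a n
  rw [window_translate]
  exact hx _ _

lemma complexity_subshiftOf
    (hL : ∀ w ∈ L, ∃ x ∈ subshiftOf L, ∃ a, w = window x a w.length) (n : ℕ) :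
    complexity (subshiftOf L) n = wordCount L n := by
  refine (Nat.card_coe_set_eq {w : Fin n → α | ∃ x ∈ subshiftOf L, ∃ m : ℤ, ∀ t : Fin n,
    x (m + (t : ℕ)) = w t}).trans ?_
  rw [wordCount, ← Set.ncard_image_of_injective _ (List.ofFn_injective (n := n))]
  refine congrArg Set.ncard (Set.ext fun w => ⟨?_, ?_⟩)
  · rintro ⟨f, ⟨x, hx, m, h⟩, rfl⟩
    refine ⟨?_, List.length_ofFn⟩
    rw [← funext h]
    exact hx m n
  · rintro ⟨hw, rfl⟩
    obtain ⟨x, hx, a, ha⟩ := hL w hw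
    exact ⟨fun t => x (a + (t : ℕ)), ⟨x, hx, a, fun _ => rfl⟩, ha.symm⟩

section Topology

variable [TopologicalSpace α] [DiscreteTopology α]

lemma isClopen_setOf_window_mem (S : Set (List α)) (a : ℤ) (n : ℕ) :
    IsClopen {x : ℤ → α | window x a n ∈ S} :=
  (isClopen_discrete {w : Fin n → α | List.ofFn w ∈ S}).preimage
    (continuous_pi fun t : Fin n => continuous_apply (a + (t : ℕ)))

lemma isClosed_subshiftOf (L : Set (List α)) : IsClosed (subshiftOf L) := by
  simp only [subshiftOf, Set.ofPred_forall]
  exact isClosed_iInter fun a => isClosed_iInter fun n => (isClopen_setOf_window_mem L a n).isClosed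

lemma isSubshift_subshiftOf (L : Set (List α)) : IsSubshift (subshiftOf L) := by
  refine ⟨isClosed_subshiftOf L, Set.Subset.antisymm ?_ ?_⟩
  · rintro _ ⟨x, hx, rfl⟩
    exact translate_mem_subshiftOf hx 1
  · intro x hx
    exact ⟨fun m => x (m + -1), translate_mem_subshiftOf hx (-1),
      funext fun m => congrArg x (add_neg_cancel_right m 1)⟩

lemma isMinimalSubshift_subshiftOf (hne : (subshiftOf L).Nonempty)
    (hrec : ∀ u ∈ L, ∃ N, ∀ v ∈ L, N ≤ v.length → u <:+: v) :
    IsMinimalSubshift (subshiftOf L) := by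
  refine ⟨isSubshift_subshiftOf L, hne, fun x hx => Set.Subset.antisymm ?_ fun y hy => ?_⟩
  · refine closure_minimal ?_ (isClosed_subshiftOf L)
    rintro _ ⟨k, rfl⟩
    exact translate_mem_subshiftOf hx k
  have hagree : ∀ N : ℕ, ∃ k : ℤ, ∀ i : ℤ, -N ≤ i → i < N → x (i + k) = y i := by
    intro N
    obtain ⟨M, hM⟩ := hrec _ (hy (-N) (2 * N))
    obtain ⟨b, hb⟩ := exists_eq_window_of_infix (hM _ (hx 0 M) (length_window x 0 M).ge)
    rw [length_window, window_eq_window_iff] at hb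
    refine ⟨b + N, fun i hi hiN => ?_⟩
    have := hb (i + N).toNat (by omega)
    rw [Int.toNat_of_nonneg (by omega), neg_add_cancel_comm_assoc] at this
    rw [this]
    congr 1
    ring
  choose k hk using hagree
  refine mem_closure_of_tendsto (b := atTop) (f := fun N : ℕ => fun m => x (m + k N))
    (tendsto_pi_nhds.2 fun i => tendsto_const_nhds.congr' ?_)
    (Eventually.of_forall fun N => ⟨k N, rfl⟩)
  filter_upwards [eventually_gt_atTop i.natAbs] with N hN
  exact (hk N i (by omega) (by omega)).symm

end Topology

end SubshiftOf

section LanguageSubshift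

variable {d : ℕ} [NeZero d]

lemma exists_forall_infix_of_mem_language {u : List (Fin d)} (hu : u ∈ language d) :
    ∃ N, ∀ v ∈ language d, N ≤ v.length → u <:+: v := by
  obtain ⟨K, j, hu⟩ := hu
  refine ⟨2 * totalLength d (K + d) + 1, fun v hv hlen => hu.trans ?_⟩
  obtain ⟨p, s, q, rfl, hp, hq⟩ := exists_eq_append_flatMap_block_append hv (K + d)
  rcases s with _ | ⟨b, s⟩
  · simp only [List.flatMap_nil, List.append_nil, List.length_append] at hlen
    omega
  · exact (block_infix_block le_rfl j b).trans ⟨p, s.flatMap (block d (K + d)) ++ q, by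
      simp only [List.flatMap_cons, List.append_assoc]⟩

lemma exists_mem_subshiftOf_language (d : ℕ) [NeZero d] : ∃ x ∈ subshiftOf (language d),
    ∀ w ∈ language d, ∃ a, w = window x a w.length := by
  have hlen : ∀ n, n < (block d (d + (n + 1)) 0).length := fun n => le_length_block le_rfl 0
  obtain ⟨x, hx⟩ := exists_window_eq_append (v := fun n => block d (d + (n + 1)) 0)
    (fun h => block_prefix (by omega) 0) (fun h => block_suffix (by omega) 0) hlen
  refine ⟨x, fun a n => ?_, fun w hw => ?_⟩
  · refine mem_language_of_infix (block_append_block_mem_language (d + (a.natAbs + n + 1)) 0) ?_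
    rw [← hx (a.natAbs + n)]
    have := hlen (a.natAbs + n)
    exact window_infix_window (by omega) (by push_cast; omega)
  · obtain ⟨N, hN⟩ := exists_forall_infix_of_mem_language hw
    have hinfix := hN _ (block_mem_language (d + (N + 1)) 0) (hlen N).le
    exact exists_eq_window_of_infix
      ((hx N) ▸ hinfix.trans (List.prefix_append _ _).isInfix)

theorem isMinimalSubshift_language (d : ℕ) [NeZero d] :
    IsMinimalSubshift (subshiftOf (language d)) :=
  let ⟨x, hx, _⟩ := exists_mem_subshiftOf_language d
  isMinimalSubshift_subshiftOf ⟨x, hx⟩ fun _ => exists_forall_infix_of_mem_language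

theorem complexity_language (d : ℕ) [NeZero d] (n : ℕ) :
    complexity (subshiftOf (language d)) n = wordCount (language d) n :=
  let ⟨x, hx, hw⟩ := exists_mem_subshiftOf_language d
  complexity_subshiftOf (fun w h => ⟨x, hx, hw w h⟩) n

end LanguageSubshift

/-! ### Quasi-additive functions of words -/

/-- A function of words which grows at most linearly, with slope `B`, and is additive for
concatenation up to an error `C`. Sums along a word of a local function are of this kind. -/
structure IsQuasiAdditive {α : Type*} (σ : List α → ℝ) (B C : ℝ) : Prop where
  abs_apply_le (w : List α) : |σ w| ≤ B * w.length
  abs_append_sub_sub_le (u v : List α) : |σ (u ++ v) - σ u - σ v| ≤ C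

section QuasiAdditive

variable {α β : Type*} {σ : List α → ℝ} {B C : ℝ}

lemma IsQuasiAdditive.slope_nonneg [Nonempty α] (h : IsQuasiAdditive σ B C) : 0 ≤ B := by
  simpa using (abs_nonneg _).trans (h.abs_apply_le [Classical.arbitrary α])

lemma IsQuasiAdditive.error_nonneg (h : IsQuasiAdditive σ B C) : 0 ≤ C :=
  (abs_nonneg _).trans (h.abs_append_sub_sub_le [] [])

lemma IsQuasiAdditive.apply_nil (h : IsQuasiAdditive σ B C) : σ [] = 0 := by
  simpa using h.abs_apply_le []

lemma IsQuasiAdditive.abs_flatMap_sub_sum_le (h : IsQuasiAdditive σ B C) (f : β → List α)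
    (s : List β) : |σ (s.flatMap f) - (s.map fun b => σ (f b)).sum| ≤ C * s.length := by
  induction s with
  | nil => simp [h.apply_nil]
  | cons b s ih =>
    have hcons := h.abs_append_sub_sub_le (f b) (s.flatMap f)
    rw [List.flatMap_cons, List.map_cons, List.sum_cons, List.length_cons, Nat.cast_succ]
    rw [abs_le] at *
    constructor <;> linarith

lemma IsQuasiAdditive.abs_wordPow_sub_le (h : IsQuasiAdditive σ B C) (u : List α) (n : ℕ) :
    |σ (wordPow u n) - n * σ u| ≤ C * n := by
  simpa [← wordPow_eq_flatMap_replicate (fun _ : Unit => u) ()] using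
    h.abs_flatMap_sub_sum_le (fun _ : Unit => u) (List.replicate n ())

lemma IsQuasiAdditive.abs_append_flatMap_append_sub_sum_le [Nonempty α]
    (h : IsQuasiAdditive σ B C) (f : β → List α) (s : List β) {p q : List α} {T : ℕ}
    (hp : p.length ≤ T) (hq : q.length ≤ T) :
    |σ (p ++ s.flatMap f ++ q) - (s.map fun b => σ (f b)).sum|
      ≤ 2 * C + 2 * B * T + C * s.length := by
  have hsum := h.abs_flatMap_sub_sum_le f s
  have hpf := h.abs_append_sub_sub_le p (s.flatMap f)
  have hpfq := h.abs_append_sub_sub_le (p ++ s.flatMap f) q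
  have hB := h.slope_nonneg
  have hp' : |σ p| ≤ B * T := (h.abs_apply_le p).trans (by gcongr)
  have hq' : |σ q| ≤ B * T := (h.abs_apply_le q).trans (by gcongr)
  rw [abs_le] at *
  constructor <;> linarith

lemma IsQuasiAdditive.sub_mul_length (h : IsQuasiAdditive σ B C) {a : ℝ} (ha : |a| ≤ B) :
    IsQuasiAdditive (fun w => σ w - a * w.length) (2 * B) C where
  abs_apply_le w := by
    calc |σ w - a * w.length| ≤ |σ w| + |a| * w.length := by
          simpa only [abs_mul, Nat.abs_cast] using abs_sub (σ w) (a * w.length)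
      _ ≤ B * w.length + B * w.length := by gcongr; exact h.abs_apply_le w
      _ = 2 * B * w.length := by ring
  abs_append_sub_sub_le u v := by
    convert h.abs_append_sub_sub_le u v using 2
    rw [List.length_append, Nat.cast_add]
    ring

lemma mul_length_le_mul_length_flatMap {f : β → List α} {m c : ℕ}
    (hf : ∀ b, m ≤ c * (f b).length) (s : List β) :
    m * s.length ≤ c * (s.flatMap f).length := by
  induction s with
  | nil => simp
  | cons b s ih =>
    rw [List.flatMap_cons, List.length_append, List.length_cons, mul_add, mul_add, mul_one,
      add_comm]
    exact add_le_add (hf b) ih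

end QuasiAdditive

section BlockAverage

variable {d : ℕ} [NeZero d] {σ : List (Fin d) → ℝ} {B C : ℝ}

/-- The average of `σ` per letter of the block of stage `k` and index `j`. -/
noncomputable def blockAverage (σ : List (Fin d) → ℝ) (k : ℕ) (j : Fin d) : ℝ :=
  σ (block d k j) / (block d k j).length

lemma length_block_pos (k : ℕ) (j : Fin d) : (0 : ℝ) < (block d k j).length := by
  exact_mod_cast one_le_length_block k j

lemma blockAverage_mul_length (σ : List (Fin d) → ℝ) (k : ℕ) (j : Fin d) :
    blockAverage σ k j * (block d k j).length = σ (block d k j) :=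
  div_mul_cancel₀ _ (length_block_pos k j).ne'

lemma IsQuasiAdditive.abs_blockAverage_le (h : IsQuasiAdditive σ B C) (k : ℕ) (j : Fin d) :
    |blockAverage σ k j| ≤ B := by
  rw [blockAverage, abs_div, Nat.abs_cast, div_le_iff₀ (length_block_pos k j)]
  exact h.abs_apply_le _

lemma four_pow_mul_length_le_mul_length_flatMap_block {β : Type*} (k : ℕ) (f : β → Fin d)
    (s : List β) :
    (4 : ℝ) ^ k * s.length ≤ 4 ^ d * (s.flatMap fun b => block d k (f b)).length := by
  exact_mod_cast mul_length_le_mul_length_flatMap (fun b => four_pow_le_length_block k (f b)) s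

lemma four_pow_succ_mul_length_middle_le_exponent_pow (k : ℕ) :
    (4 : ℝ) ^ (k + 1) * (middle d k (d - 1)).length ≤ (exponent d k : ℝ) ^ d := by
  have h := four_pow_mul_length_middle_le (d := d) k (d - 1)
  rw [Nat.sub_one_add_one (NeZero.ne d)] at h
  exact_mod_cast h

lemma IsQuasiAdditive.abs_apply_block_succ_le_add (h : IsQuasiAdditive σ B C) (k : ℕ)
    (h0 : σ (block d k (letter d k)) = 0) :
    |σ (block d (k + 1) (letter d k))|
      ≤ 4 * C * (exponent d k : ℝ) ^ d + B * (middle d k (d - 1)).length := by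
  set n := exponent d k ^ d with hn
  set m := middle d k (d - 1)
  set u := wordPow (block d k (letter d k)) n
  have hpow : |σ u| ≤ C * n := by
    simpa only [h0, mul_zero, sub_zero] using h.abs_wordPow_sub_le (block d k (letter d k)) n
  have hleft := h.abs_append_sub_sub_le u (m ++ u)
  have hright := h.abs_append_sub_sub_le m u
  have hmid := h.abs_apply_le m
  have hCn : C ≤ C * n :=
    le_mul_of_one_le_right h.error_nonneg (mod_cast Nat.one_le_pow _ _ (exponent_pos k))
  rw [block_succ_self, middle_self, ← Nat.cast_pow, ← hn]
  rw [abs_le] at *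
  constructor <;> linarith

lemma IsQuasiAdditive.abs_apply_block_succ_le (h : IsQuasiAdditive σ B C) (k : ℕ)
    (h0 : σ (block d k (letter d k)) = 0) :
    |σ (block d (k + 1) (letter d k))| * 4 ^ k
      ≤ (2 * C * 4 ^ d + B) * (block d (k + 1) (letter d k)).length := by
  have hB := h.slope_nonneg
  have hC := h.error_nonneg
  have hσ := h.abs_apply_block_succ_le_add k h0
  have hm := four_pow_succ_mul_length_middle_le_exponent_pow (d := d) k
  have hlen : ((block d (k + 1) (letter d k)).length : ℝ) =
      2 * ((exponent d k : ℝ) ^ d * (block d k (letter d k)).length)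
        + (middle d k (d - 1)).length := by
    exact_mod_cast length_block_succ_self (d := d) k
  set y := block d k (letter d k)
  set n := (exponent d k : ℝ) ^ d
  set m := middle d k (d - 1)
  have hn : 0 ≤ n := by positivity
  have hy : (4 : ℝ) ^ k ≤ 4 ^ d * y.length := by
    exact_mod_cast four_pow_le_length_block k (letter d k)
  have hmy : (4 : ℝ) ^ k * m.length ≤ n * y.length :=
    calc (4 : ℝ) ^ k * m.length ≤ 4 ^ (k + 1) * m.length := by
          gcongr
          · norm_num
          · exact k.le_succ
      _ ≤ n := hm
      _ ≤ n * y.length := le_mul_of_one_le_right hn (mod_cast one_le_length_block k (letter d k))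
  calc |σ (block d (k + 1) (letter d k))| * 4 ^ k
      ≤ (4 * C * n + B * m.length) * 4 ^ k := by gcongr
    _ = 4 * C * n * 4 ^ k + B * (4 ^ k * m.length) := by ring
    _ ≤ 4 * C * n * (4 ^ d * y.length) + B * (n * y.length) := by gcongr
    _ = 2 * C * 4 ^ d * (2 * (n * y.length)) + B * (n * y.length) := by ring
    _ ≤ (2 * C * 4 ^ d + B) * (2 * (n * y.length) + m.length) := by
        rw [add_mul]
        gcongr
        · exact le_add_of_nonneg_right (by positivity)
        · linarith [(by positivity : (0 : ℝ) ≤ n * y.length + m.length)]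
    _ = _ := by rw [hlen]

lemma IsQuasiAdditive.abs_blockAverage_succ_sub_le (h : IsQuasiAdditive σ B C) (k : ℕ) (j : Fin d) :
    |blockAverage σ (k + 1) j - blockAverage σ k j| ≤ (2 * C * 4 ^ d + 2 * B) / 4 ^ k := by
  have hB := h.slope_nonneg
  have hC := h.error_nonneg
  by_cases hj : j = letter d k
  · subst hj
    have hlen := length_block_pos (k + 1) (letter d k)
    have hdev : blockAverage σ (k + 1) (letter d k) - blockAverage σ k (letter d k) =
        (σ (block d (k + 1) (letter d k)) - blockAverage σ k (letter d k) *
          (block d (k + 1) (letter d k)).length) / (block d (k + 1) (letter d k)).length := by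
      rw [sub_div, mul_div_cancel_right₀ _ hlen.ne', blockAverage]
    rw [hdev, abs_div, abs_of_pos hlen, div_le_div_iff₀ hlen (by positivity)]
    exact (h.sub_mul_length (h.abs_blockAverage_le k _)).abs_apply_block_succ_le k
      (sub_eq_zero.2 (blockAverage_mul_length σ k _).symm)
  · rw [blockAverage, blockAverage, block_succ_of_ne k hj, sub_self, abs_zero]
    positivity

lemma IsQuasiAdditive.exists_tendsto_blockAverage (h : IsQuasiAdditive σ B C) (j : Fin d) :
    ∃ a, Tendsto (fun k => blockAverage σ k j) atTop (nhds a) := by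
  refine cauchySeq_tendsto_of_complete <|
    cauchySeq_of_le_geometric (1 / 4) (2 * C * 4 ^ d + 2 * B) (by norm_num) fun k => ?_
  rw [dist_comm, Real.dist_eq, one_div, inv_pow, ← div_eq_mul_inv]
  exact h.abs_blockAverage_succ_sub_le k j

lemma IsQuasiAdditive.le_apply_of_le_blockAverage (h : IsQuasiAdditive σ B C) {k : ℕ} {ε : ℝ}
    (hk : ∀ j, -ε ≤ blockAverage σ k j) (hε : 0 ≤ ε) (hC : C * 4 ^ d ≤ ε * 4 ^ k)
    {w : List (Fin d)} (hw : w ∈ language d) :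
    -(2 * C + 2 * B * totalLength d k) - 2 * ε * w.length ≤ σ w := by
  obtain ⟨p, s, q, rfl, hp, hq⟩ := exists_eq_append_flatMap_block_append hw k
  have hσ := h.abs_append_flatMap_append_sub_sum_le (block d k) s hp hq
  set X := s.flatMap (block d k) with hX
  have hsum : -ε * X.length ≤ (s.map fun b => σ (block d k b)).sum := by
    rw [hX, List.length_flatMap, Nat.cast_list_sum, List.map_map, ← List.sum_map_mul_left]
    refine List.sum_le_sum fun j _ => ?_
    rw [← blockAverage_mul_length σ k j]
    exact mul_le_mul_of_nonneg_right (hk j) (Nat.cast_nonneg _)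
  have hs : C * s.length ≤ ε * X.length := by
    have hC0 := h.error_nonneg
    refine le_of_mul_le_mul_left ?_ (by positivity : (0 : ℝ) < 4 ^ k)
    calc (4 : ℝ) ^ k * (C * s.length) = C * (4 ^ k * s.length) := by ring
      _ ≤ C * (4 ^ d * X.length) := by
          have hX := four_pow_mul_length_le_mul_length_flatMap_block k id s
          exact mul_le_mul_of_nonneg_left hX hC0
      _ = C * 4 ^ d * X.length := by ring
      _ ≤ ε * 4 ^ k * X.length := by gcongr
      _ = 4 ^ k * (ε * X.length) := by ring
  have hlen : ((p ++ X ++ q).length : ℝ) = p.length + X.length + q.length := by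
    simp only [List.length_append, Nat.cast_add]
  have hεp : 0 ≤ ε * p.length := by positivity
  have hεq : 0 ≤ ε * q.length := by positivity
  rw [hlen]
  linarith [(abs_le.1 hσ).1]

lemma IsQuasiAdditive.exists_forall_neg_mul_length_le (h : IsQuasiAdditive σ B C) {a : Fin d → ℝ}
    (ha : ∀ j, Tendsto (fun k => blockAverage σ k j) atTop (nhds (a j))) (h0 : ∀ j, 0 ≤ a j)
    {ε : ℝ} (hε : 0 < ε) :
    ∃ N : ℕ, ∀ w ∈ language d, N ≤ w.length → -ε * w.length ≤ σ w := by
  have haverage : ∀ᶠ k in atTop, ∀ j, -(ε / 3) ≤ blockAverage σ k j :=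
    eventually_all.2 fun j => (ha j).eventually_const_le (by linarith [h0 j])
  have hpow : Tendsto (fun k : ℕ => ε / 3 * (4 : ℝ) ^ k) atTop atTop :=
    (tendsto_pow_atTop_atTop_of_one_lt (by norm_num)).const_mul_atTop (by positivity)
  obtain ⟨k, hk, hC⟩ := (haverage.and (hpow.eventually_ge_atTop (C * 4 ^ d))).exists
  obtain ⟨N, hN⟩ := exists_nat_ge ((2 * C + 2 * B * totalLength d k) / (ε / 3))
  refine ⟨N, fun w hw hNw => ?_⟩
  have hw' := h.le_apply_of_le_blockAverage hk (by positivity) hC hw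
  have hNw' : (N : ℝ) ≤ w.length := by exact_mod_cast hNw
  have hlen := (div_le_iff₀ (by positivity)).1 (hN.trans hNw')
  linarith

lemma IsQuasiAdditive.abs_sub_blockAverage_le_of_infix_wordPow (h : IsQuasiAdditive σ B C)
    {k t : ℕ} {j : Fin d} {w : List (Fin d)} (hw : w <:+: wordPow (block d k j) t)
    (hlen : 2 ^ k * totalLength d k ≤ w.length) :
    2 ^ k * |σ w - blockAverage σ k j * w.length| ≤ (2 * C + 4 * B + C * 4 ^ d) * w.length := by
  have hC := h.error_nonneg
  have hB := h.slope_nonneg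
  rw [wordPow_eq_flatMap_replicate (fun _ : Unit => block d k j) ()] at hw
  obtain ⟨p, s, q, hpq, hp, hq⟩ :=
    infix_flatMap_decomposition (fun _ _ => length_block_le_totalLength k j) hw
  have hdev := (h.sub_mul_length (h.abs_blockAverage_le k j)).abs_append_flatMap_append_sub_sum_le
    (fun _ : Unit => block d k j) s hp hq
  rw [← hpq] at hdev
  simp only [blockAverage_mul_length, sub_self, List.map_const', List.sum_replicate, smul_zero,
    sub_zero] at hdev
  have hX : ((s.flatMap fun _ => block d k j).length : ℝ) ≤ w.length := by
    rw [hpq]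
    exact_mod_cast (List.infix_append p _ q).length_le
  have hs : (2 : ℝ) ^ k * s.length ≤ 4 ^ d * w.length := by
    calc (2 : ℝ) ^ k * s.length ≤ 4 ^ k * s.length := by gcongr; norm_num
      _ ≤ _ := four_pow_mul_length_le_mul_length_flatMap_block k (fun _ => j) s
      _ ≤ 4 ^ d * w.length := by gcongr
  have hT : (2 : ℝ) ^ k * totalLength d k ≤ w.length := by exact_mod_cast hlen
  have h2 : (2 : ℝ) ^ k ≤ w.length :=
    (le_mul_of_one_le_right (by positivity) (by exact_mod_cast totalLength_pos k)).trans hT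
  calc 2 ^ k * |σ w - blockAverage σ k j * w.length|
      ≤ 2 ^ k * (2 * C + 2 * (2 * B) * totalLength d k + C * s.length) := by gcongr
    _ = 2 * C * 2 ^ k + 4 * B * (2 ^ k * totalLength d k) + C * (2 ^ k * s.length) := by ring
    _ ≤ 2 * C * w.length + 4 * B * w.length + C * (4 ^ d * w.length) := by gcongr
    _ = _ := by ring

lemma exists_window_eq_append_infix_wordPow (hd : 1 < d) {x : ℤ → Fin d}
    (hx : x ∈ subshiftOf (language d)) (k : ℕ) :
    ∃ (N : ℕ) (a b : List (Fin d)) (j : Fin d) (t : ℕ), window x 0 N = a ++ b ∧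
      b <:+: wordPow (block d k j) t ∧ 2 ^ k * totalLength d k ≤ b.length ∧
      2 ^ k * a.length ≤ N := by
  have hexp : exponent d k = 16 * 2 ^ k * (2 ^ k * totalLength d k) := by
    rw [exponent_eq, show 4 ^ (k + 2) = 16 * 2 ^ k * 2 ^ k by
      rw [mul_assoc, ← mul_pow, pow_add]; norm_num; ring, mul_assoc]
  have h16 : 16 * (2 ^ k * totalLength d k) ≤ exponent d k := by
    rw [hexp]
    exact Nat.mul_le_mul_right _ (Nat.le_mul_of_pos_right _ (by positivity))
  obtain ⟨i, s, t, h⟩ := mem_twoBlockFactors_of_mem_language (k := k) hd (hx 0 (exponent d k))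
    (length_window ..).le
  rcases List.infix_append_iff.1 h with h | h | ⟨a, b, hab, ha, hb⟩
  · exact ⟨exponent d k, [], _, _, _, (List.nil_append _).symm, h, by rw [length_window]; omega,
      by simp⟩
  · exact ⟨exponent d k, [], _, _, _, (List.nil_append _).symm, h, by rw [length_window]; omega,
      by simp⟩
  · have hlen : exponent d k = a.length + b.length := by
      rw [← List.length_append, ← hab, length_window]
    rcases le_total (2 ^ k * totalLength d k) a.length with hT | hT
    · refine ⟨a.length, [], a, _, _, ?_, ha.isInfix, hT, by simp⟩
      rw [hlen, window_add] at hab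
      exact List.append_inj_left hab (length_window ..)
    · refine ⟨_, a, b, _, _, hab, hb.isInfix, by omega, ?_⟩
      calc 2 ^ k * a.length ≤ 16 * 2 ^ k * (2 ^ k * totalLength d k) :=
            Nat.mul_le_mul (Nat.le_mul_of_pos_left _ (by norm_num)) hT
        _ = exponent d k := hexp.symm

-- The same `N` and `j` serve all quasi-additive functions: near the prefix of length `N`, the point
-- `x` looks like a power of a single block.
lemma exists_forall_abs_window_sub_blockAverage_le (hd : 1 < d) {x : ℤ → Fin d}
    (hx : x ∈ subshiftOf (language d)) (k : ℕ) :
    ∃ (N : ℕ) (j : Fin d), 2 ^ k ≤ N ∧ ∀ (σ : List (Fin d) → ℝ) (B C : ℝ), IsQuasiAdditive σ B C →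
      2 ^ k * |σ (window x 0 N) - blockAverage σ k j * N| ≤ (3 * C + 6 * B + C * 4 ^ d) * N := by
  obtain ⟨N, a, b, j, t, hab, hb, hT, ha⟩ := exists_window_eq_append_infix_wordPow hd hx k
  have hN : N = a.length + b.length := by rw [← List.length_append, ← hab, length_window]
  have h2 : 2 ^ k ≤ N :=
    (Nat.le_mul_of_pos_right _ (totalLength_pos (d := d) k)).trans (hT.trans (by omega))
  refine ⟨N, j, h2, fun σ B C h => ?_⟩
  have hC := h.error_nonneg
  have hB := h.slope_nonneg
  have hdev := h.sub_mul_length (h.abs_blockAverage_le k j)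
  have hbdev := h.abs_sub_blockAverage_le_of_infix_wordPow hb hT
  set τ : List (Fin d) → ℝ := fun w => σ w - blockAverage σ k j * w.length
  have hτ : |τ (a ++ b)| ≤ C + 2 * B * a.length + |τ b| := by
    linarith [abs_sub_abs_le_abs_sub (τ (a ++ b) - τ a) (τ b),
      abs_sub_abs_le_abs_sub (τ (a ++ b)) (τ a), hdev.abs_append_sub_sub_le a b,
      hdev.abs_apply_le a]
  have ha' : (2 : ℝ) ^ k * a.length ≤ N := by exact_mod_cast ha
  have h2' : (2 : ℝ) ^ k ≤ N := by exact_mod_cast h2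
  calc 2 ^ k * |σ (window x 0 N) - blockAverage σ k j * N|
      = 2 ^ k * |τ (a ++ b)| := by rw [hab]; simp only [τ, List.length_append, ← hN]
    _ ≤ 2 ^ k * (C + 2 * B * a.length + |τ b|) := by gcongr
    _ = C * 2 ^ k + 2 * B * (2 ^ k * a.length) + 2 ^ k * |τ b| := by ring
    _ ≤ C * N + 2 * B * N + (2 * C + 4 * B + C * 4 ^ d) * N := by
        have hb' := hbdev.trans (mul_le_mul_of_nonneg_left
          (by exact_mod_cast hN ▸ Nat.le_add_left _ _ : (b.length : ℝ) ≤ N) (by positivity))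
        exact add_le_add (by gcongr) hb'
    _ = _ := by ring

end BlockAverage

/-! ### Window sums -/

section WindowSum

variable {α : Type*} {g : List α → ℝ} {B : ℝ}

/-- The sum of `g` over the subwords of length `m`, one for each starting position. The subwords
starting less than `m` letters before the end are cut off there. -/
def windowSum (m : ℕ) (g : List α → ℝ) : List α → ℝ
  | [] => 0
  | a :: u => g ((a :: u).take m) + windowSum m g u

lemma windowSum_cons (m : ℕ) (g : List α → ℝ) (a : α) (u : List α) :
    windowSum m g (a :: u) = g ((a :: u).take m) + windowSum m g u := rfl

lemma abs_windowSum_le (m : ℕ) (hg : ∀ w, |g w| ≤ B) (w : List α) :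
    |windowSum m g w| ≤ B * w.length := by
  induction w with
  | nil => simp [windowSum]
  | cons a u ih =>
    rw [windowSum_cons, List.length_cons, Nat.cast_succ]
    linarith [abs_add_le (g ((a :: u).take m)) (windowSum m g u), hg ((a :: u).take m)]

lemma abs_windowSum_append_sub_sub_le (m : ℕ) (hg : ∀ w, |g w| ≤ B) (u v : List α) :
    |windowSum m g (u ++ v) - windowSum m g u - windowSum m g v|
      ≤ 2 * B * (min u.length m : ℕ) := by
  have hB : 0 ≤ B := (abs_nonneg _).trans (hg [])
  induction u with
  | nil => simp [windowSum]
  | cons a u ih =>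
    rw [List.cons_append, windowSum_cons, windowSum_cons, List.length_cons]
    rcases le_or_gt m (u.length + 1) with h | h
    · have htake : (a :: (u ++ v)).take m = (a :: u).take m := by
        rw [← List.cons_append, List.take_append_of_le_length (by simpa using h)]
      rw [htake, add_sub_add_left_eq_sub]
      refine ih.trans ?_
      gcongr
      omega
    · have hu : min u.length m = u.length := by omega
      have hau : min (u.length + 1) m = u.length + 1 := by omega
      have h₁ := hg ((a :: (u ++ v)).take m)
      have h₂ := hg ((a :: u).take m)
      rw [hu] at ih
      rw [hau, Nat.cast_succ]
      rw [abs_le] at *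
      constructor <;> linarith

lemma isQuasiAdditive_windowSum (m : ℕ) (hg : ∀ w, |g w| ≤ B) :
    IsQuasiAdditive (windowSum m g) B (2 * B * m) where
  abs_apply_le := abs_windowSum_le m hg
  abs_append_sub_sub_le u v := by
    have hB : 0 ≤ B := (abs_nonneg _).trans (hg [])
    refine (abs_windowSum_append_sub_sub_le m hg u v).trans ?_
    gcongr
    exact min_le_right _ _

lemma window_shift_iterate (x : ℤ → α) (i : ℕ) (a : ℤ) (n : ℕ) :
    window (shift^[i] x) a n = window x (a + i) n := by
  induction i generalizing a with
  | zero => simp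
  | succ i ih =>
    rw [Function.iterate_succ_apply', window_shift, ih, Nat.cast_succ, add_assoc, add_comm 1]

lemma window_succ (x : ℤ → α) (a : ℤ) (n : ℕ) :
    window x a (n + 1) = x a :: window x (a + 1) n := by
  rw [add_comm n 1, window_add]
  simp [window]

lemma sum_add_windowSum_window (m : ℕ) (g : List α → ℝ) (x : ℤ → α) (a : ℤ) (n : ℕ) :
    ∑ i ∈ Finset.range n, g (window x (a + i) m) + windowSum m g (window x (a + n) m) =
      windowSum m g (window x a (n + m)) := by
  induction n generalizing a with
  | zero => simp
  | succ n ih =>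
    have htake : (window x a (n + m + 1)).take m = window x a m := by
      rw [show n + m + 1 = m + (n + 1) by omega, window_add]
      exact List.take_left' (length_window ..)
    rw [Finset.sum_range_succ', show n + 1 + m = n + m + 1 by omega, window_succ, windowSum_cons,
      ← window_succ, htake, ← ih]
    simp only [Nat.cast_add, Nat.cast_one, Nat.cast_zero, add_zero, add_assoc, add_comm (1 : ℤ)]
    ring

lemma abs_sum_sub_windowSum_window_le (m : ℕ) (hg : ∀ w, |g w| ≤ B) (x : ℤ → α) (n : ℕ) :
    |∑ i ∈ Finset.range n, g (window (shift^[i] x) 0 m) - windowSum m g (window x 0 n)|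
      ≤ 2 * B * m := by
  have hsum := sum_add_windowSum_window m g x 0 n
  simp only [window_shift_iterate]
  rw [eq_sub_of_add_eq hsum, window_add, sub_right_comm]
  exact (isQuasiAdditive_windowSum m hg).abs_append_sub_sub_le _ _

/-- The indicator of the words that begin with the letter `j`. -/
def letterIndicator [DecidableEq α] (j : α) (w : List α) : ℝ := if w.head? = some j then 1 else 0

lemma abs_letterIndicator_le [DecidableEq α] (j : α) (w : List α) : |letterIndicator j w| ≤ 1 := by
  unfold letterIndicator
  split_ifs <;> simp

lemma letterIndicator_window [DecidableEq α] {m : ℕ} (hm : 1 ≤ m) (j : α) (x : ℤ → α) :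
    letterIndicator j (window x 0 m) = if x 0 = j then 1 else 0 := by
  obtain ⟨n, rfl⟩ := Nat.exists_eq_add_of_le' hm
  simp [letterIndicator, window_succ]

lemma windowSum_letterIndicator [DecidableEq α] (j : α) (w : List α) :
    windowSum 1 (letterIndicator j) w = w.count j := by
  induction w with
  | nil => simp [windowSum]
  | cons a u ih =>
    rw [windowSum_cons, ih, List.count_cons]
    simp [letterIndicator, add_comm]

end WindowSum

section LetterFrequency

variable {d : ℕ} [NeZero d]

lemma two_mul_count_block_le (k : ℕ) (j : Fin d) :
    2 * (exponent d k ^ d * (block d k (letter d k)).count j)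
      ≤ (block d (k + 1) (letter d k)).count j := by
  rw [block_succ_self, middle_self]
  simp only [List.count_append, wordPow, List.count_flatten, List.map_replicate,
    List.sum_replicate, smul_eq_mul]
  omega

lemma mul_length_sub_count_block_le (k : ℕ) (j : Fin d) :
    3 * (4 : ℝ) ^ k * ((block d k j).length - (block d k j).count j)
      ≤ (4 ^ k - 1) * (block d k j).length := by
  induction k generalizing j with
  | zero => simp [block]
  | succ k ih =>
    have h4 : (1 : ℝ) ≤ 4 ^ k := one_le_pow₀ (by norm_num)
    specialize ih j
    rcases eq_or_ne j (letter d k) with rfl | hj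
    · set j := letter d k
      set n := exponent d k ^ d
      set m := middle d k (d - 1)
      have hlen : ((block d (k + 1) j).length : ℝ) =
          2 * (n * (block d k j).length) + m.length := by
        exact_mod_cast length_block_succ_self k
      have hm : (4 : ℝ) ^ (k + 1) * m.length ≤ n := by
        simpa only [n, Nat.cast_pow] using
          four_pow_succ_mul_length_middle_le_exponent_pow (d := d) k
      have hcount : 2 * (n * ((block d k j).count j : ℝ)) ≤ (block d (k + 1) j).count j := by
        exact_mod_cast two_mul_count_block_le k j
      have hn : (n : ℝ) ≤ n * (block d k j).length :=
        le_mul_of_one_le_right (by positivity) (mod_cast one_le_length_block k j)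
      calc 3 * (4 : ℝ) ^ (k + 1) * ((block d (k + 1) j).length - (block d (k + 1) j).count j)
          ≤ 3 * 4 ^ (k + 1) *
            (2 * n * ((block d k j).length - (block d k j).count j) + m.length) := by
            gcongr
            linarith
        _ = 8 * n * (3 * 4 ^ k * ((block d k j).length - (block d k j).count j))
            + 3 * (4 ^ (k + 1) * m.length) := by ring
        _ ≤ 8 * n * ((4 ^ k - 1) * (block d k j).length) + 6 * (n * (block d k j).length) := by
            gcongr ?_ + ?_
            · gcongr
            · linarith
        _ = (4 ^ (k + 1) - 1) * (2 * (n * (block d k j).length)) := by ring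
        _ ≤ (4 ^ (k + 1) - 1) * (block d (k + 1) j).length := by
            rw [hlen]
            gcongr
            · linarith [pow_succ (4 : ℝ) k]
            · exact le_add_of_nonneg_right (by positivity)
    · rw [block_succ_of_ne k hj, pow_succ]
      linarith [Nat.cast_nonneg (α := ℝ) (block d k j).length]

lemma two_thirds_le_blockAverage_letterIndicator (k : ℕ) (j : Fin d) :
    2 / 3 ≤ blockAverage (windowSum 1 (letterIndicator j)) k j := by
  rw [blockAverage, le_div_iff₀ (length_block_pos k j), windowSum_letterIndicator]
  have hlen := length_block_pos k j
  have hcount : (4 : ℝ) ^ k * (3 * ((block d k j).length - (block d k j).count j))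
      ≤ 4 ^ k * (block d k j).length := by
    linarith [mul_length_sub_count_block_le k j]
  linarith [le_of_mul_le_mul_left hcount (by positivity)]

end LetterFrequency

/-! ### Limits of empirical measures -/

section Empirical

lemma continuous_birkhoffAverage {X : Type*} [TopologicalSpace X] {T : X → X} (hT : Continuous T)
    {f : X → ℝ} (hf : Continuous f) (n : ℕ) : Continuous (birkhoffAverage ℝ T f n) := by
  unfold birkhoffAverage birkhoffSum
  fun_prop

variable {X : Type*} [MeasurableSpace X]

/-- The uniform measure on the orbit segment `x, T x, …, T^[n - 1] x`, counted with multiplicity.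
It is a probability measure for `0 < n`. -/
noncomputable def empiricalMeasure (T : X → X) (x : X) (n : ℕ) : Measure X :=
  (n : ℝ≥0∞)⁻¹ • ∑ i ∈ Finset.range n, Measure.dirac (T^[i] x)

lemma empiricalMeasure_apply_eq_one {T : X → X} {x : X} {n : ℕ} (hn : 0 < n) {K : Set X}
    (hK : MeasurableSet K) (hx : ∀ i, T^[i] x ∈ K) : empiricalMeasure T x n K = 1 := by
  simp only [empiricalMeasure, Measure.smul_apply, Measure.finsetSum_apply,
    Measure.dirac_apply' _ hK, Set.indicator_of_mem (hx _), Pi.one_apply, Finset.sum_const,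
    Finset.card_range, nsmul_eq_mul, mul_one, smul_eq_mul]
  exact ENNReal.inv_mul_cancel (by exact_mod_cast hn.ne') (ENNReal.natCast_ne_top n)

lemma isProbabilityMeasure_empiricalMeasure (T : X → X) (x : X) {n : ℕ} (hn : 0 < n) :
    IsProbabilityMeasure (empiricalMeasure T x n) :=
  ⟨empiricalMeasure_apply_eq_one hn .univ fun _ => Set.mem_univ _⟩

variable [TopologicalSpace X] [BorelSpace X]

lemma measurePreserving_of_tendsto_birkhoffAverage [HasOuterApproxClosed X] {ι : Type*}
    {l : Filter ι} [l.NeBot] {T : X → X} (hT : Continuous T) {x : ι → X} {n : ι → ℕ}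
    (hn : Tendsto n l atTop) {μ : Measure X} [IsProbabilityMeasure μ]
    (h : ∀ f : X → ℝ, Continuous f →
      Tendsto (fun k => birkhoffAverage ℝ T f (n k) (x k)) l (nhds (∫ y, f y ∂μ))) :
    MeasurePreserving T μ μ := by
  have hm : Measurable T := hT.measurable
  have : IsProbabilityMeasure (μ.map T) := Measure.isProbabilityMeasure_map hm.aemeasurable
  refine ⟨hm, ext_of_forall_integral_eq_of_IsFiniteMeasure fun f => ?_⟩
  rw [integral_map hm.aemeasurable f.continuous.aestronglyMeasurable, ← sub_eq_zero]
  refine tendsto_nhds_unique ((h _ (f.continuous.comp hT)).sub (h f f.continuous)) ?_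
  have hbound : Tendsto (fun k => (n k : ℝ)⁻¹ * (2 * ‖f‖)) l (nhds 0) := by
    simpa using (tendsto_inv_atTop_nhds_zero_nat (𝕜 := ℝ).comp hn).mul_const (2 * ‖f‖)
  refine squeeze_zero_norm (fun k => ?_) hbound
  have hcomp : birkhoffAverage ℝ T (f ∘ T) (n k) (x k) = birkhoffAverage ℝ T f (n k) (T (x k)) := by
    simp only [birkhoffAverage, birkhoffSum, Function.comp_apply, ← Function.iterate_succ_apply,
      ← Function.iterate_succ_apply']
  rw [hcomp, birkhoffAverage_apply_sub_birkhoffAverage, norm_smul, norm_inv, Real.norm_natCast]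
  gcongr
  calc ‖f (T^[n k] (x k)) - f (x k)‖ ≤ ‖f (T^[n k] (x k))‖ + ‖f (x k)‖ := norm_sub_le _ _
    _ ≤ ‖f‖ + ‖f‖ := add_le_add (f.norm_coe_le_norm _) (f.norm_coe_le_norm _)
    _ = 2 * ‖f‖ := (two_mul _).symm

variable [CompactSpace X]

lemma integrable_of_continuous {μ : Measure X} [IsFiniteMeasure μ] {f : X → ℝ}
    (hf : Continuous f) : Integrable f μ :=
  hf.integrable_of_hasCompactSupport (HasCompactSupport.of_compactSpace f)

lemma integral_empiricalMeasure (T : X → X) (x : X) (n : ℕ) {f : X → ℝ} (hf : Continuous f) :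
    ∫ y, f y ∂(empiricalMeasure T x n) = birkhoffAverage ℝ T f n x := by
  rw [empiricalMeasure, integral_smul_measure,
    integral_finsetSum_measure fun i _ => integrable_of_continuous hf, birkhoffAverage, birkhoffSum,
    ENNReal.toReal_inv, ENNReal.toReal_natCast]
  congr 1
  exact Finset.sum_congr rfl fun i _ => integral_dirac' _ _ hf.stronglyMeasurable

lemma integral_birkhoffAverage {T : X → X} {μ : Measure X} [IsFiniteMeasure μ]
    (hT : Continuous T) (hμ : MeasurePreserving T μ μ) {f : X → ℝ} (hf : Continuous f) {n : ℕ}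
    (hn : 0 < n) : ∫ x, birkhoffAverage ℝ T f n x ∂μ = ∫ x, f x ∂μ := by
  have hiter : ∀ i, ∫ x, f (T^[i] x) ∂μ = ∫ x, f x ∂μ := fun i => by
    rw [← integral_map (hμ.iterate i).aemeasurable hf.aestronglyMeasurable, (hμ.iterate i).map_eq]
  simp only [birkhoffAverage, birkhoffSum, smul_eq_mul]
  rw [integral_const_mul, integral_finsetSum _ fun i _ =>
    integrable_of_continuous (f := fun x => f (T^[i] x)) (hf.comp (hT.iterate i))]
  simp only [hiter, Finset.sum_const, Finset.card_range, nsmul_eq_mul]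
  exact inv_mul_cancel_left₀ (by exact_mod_cast hn.ne') _

lemma exists_tendsto_birkhoffAverage [T2Space X] [HasOuterApproxClosed X] {ι : Type*}
    (U : Ultrafilter ι) {T : X → X} {K : Set X} (hK : IsClosed K) {x : ι → X}
    (hx : ∀ k i, T^[i] (x k) ∈ K) {n : ι → ℕ} (hn : ∀ k, 0 < n k) :
    ∃ μ : Measure X, IsProbabilityMeasure μ ∧ μ K = 1 ∧ ∀ f : X → ℝ, Continuous f →
      Tendsto (fun k => birkhoffAverage ℝ T f (n k) (x k)) U (nhds (∫ y, f y ∂μ)) := by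
  let e : ι → ProbabilityMeasure X := fun k =>
    ⟨empiricalMeasure T (x k) (n k), isProbabilityMeasure_empiricalMeasure T (x k) (hn k)⟩
  have he : Tendsto e U (nhds (U.map e).lim) := (U.map e).le_nhds_lim
  refine ⟨(U.map e).lim, inferInstance, le_antisymm prob_le_one ?_, fun f hf => ?_⟩
  · refine le_trans ?_ (ProbabilityMeasure.limsup_measure_closed_le_of_tendsto he hK)
    have heK : ∀ k, (e k : Measure X) K = 1 := fun k =>
      empiricalMeasure_apply_eq_one (hn k) hK.measurableSet (hx k)
    simp only [heK, limsup_const, le_refl]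
  · refine (ProbabilityMeasure.tendsto_iff_forall_integral_tendsto.1 he
      (BoundedContinuousFunction.mkOfCompact ⟨f, hf⟩)).congr fun k => ?_
    exact integral_empiricalMeasure T (x k) (n k) hf

end Empirical

lemma exists_eq_of_ergodic_of_eq_sum {X ι : Type*} [MeasurableSpace X] [Fintype ι] {T : X → X}
    {ν : Measure X} [IsProbabilityMeasure ν] (hν : Ergodic T ν) {μ : ι → Measure X}
    [∀ i, IsProbabilityMeasure (μ i)] (hμ : ∀ i, MeasurePreserving T (μ i) (μ i)) {c : ι → ℝ≥0∞}
    (h : ν = ∑ i, c i • μ i) : ∃ i, ν = μ i := by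
  have hne : ∃ i, c i ≠ 0 := by
    by_contra! hc
    exact IsProbabilityMeasure.ne_zero ν (by simp [h, hc])
  obtain ⟨i, hi⟩ := hne
  refine ⟨i, (hν.eq_of_absolutelyContinuous (hμ i) fun s hs => ?_).symm⟩
  simp only [h, Measure.finsetSum_apply, Measure.smul_apply, smul_eq_mul,
    Finset.sum_eq_zero_iff, Finset.mem_univ, true_implies, mul_eq_zero] at hs
  exact (hs i).resolve_left hi

/-! ### Invariant measures and window functions -/

lemma exists_cylinder_eq_setOf_window_mem {α : Type*} (I : Finset ℤ) (S : Set (I → α)) :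
    ∃ (N : ℕ) (S' : Set (List α)), 1 ≤ N ∧
      cylinder I S = {x | window x (-(N : ℤ)) (2 * N) ∈ S'} := by
  let N := ∑ i ∈ I, i.natAbs + 1
  have hN : ∀ i ∈ I, -(N : ℤ) ≤ i ∧ i < N := fun i hi => by
    have hle := Finset.single_le_sum (f := Int.natAbs) (fun _ _ => Nat.zero_le _) hi
    omega
  refine ⟨N, (window · (-(N : ℤ)) (2 * N)) '' cylinder I S, by omega,
    Set.Subset.antisymm (fun x hx => ⟨x, hx, rfl⟩) ?_⟩
  rintro x ⟨y, hy, hyx⟩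
  rw [mem_cylinder] at hy ⊢
  convert hy using 1
  funext i
  obtain ⟨h₁, h₂⟩ := hN i i.2
  have hi := window_eq_window_iff.1 hyx (i + N : ℤ).toNat (by omega)
  rw [Int.toNat_of_nonneg (by omega), add_comm, add_neg_cancel_right] at hi
  exact hi.symm

section Invariant

variable {α : Type*} [TopologicalSpace α]

lemma continuous_shift : Continuous (shift : (ℤ → α) → ℤ → α) :=
  continuous_pi fun n => continuous_apply (n + 1)

variable [DiscreteTopology α]

lemma continuous_comp_window (g : List α → ℝ) (a : ℤ) (m : ℕ) :
    Continuous fun x : ℤ → α => g (window x a m) := by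
  have hg : Continuous fun v : Fin m → α => g (List.ofFn v) := continuous_of_discreteTopology
  exact hg.comp (continuous_pi fun t : Fin m => continuous_apply (a + (t : ℕ)))

variable [MeasurableSpace α] [BorelSpace α]

lemma eq_of_forall_integral_window_eq [Finite α] {μ ν : Measure (ℤ → α)} [IsProbabilityMeasure μ]
    [IsProbabilityMeasure ν] (hμ : MeasurePreserving shift μ μ) (hν : MeasurePreserving shift ν ν)
    (h : ∀ m, 1 ≤ m → ∀ g : List α → ℝ, (∀ w, |g w| ≤ 1) →
      ∫ x, g (window x 0 m) ∂μ = ∫ x, g (window x 0 m) ∂ν) : μ = ν := by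
  classical
  have hwindow : ∀ m, 1 ≤ m → ∀ S : Set (List α),
      μ {x | window x 0 m ∈ S} = ν {x | window x 0 m ∈ S} := fun m hm S => by
    have hS : MeasurableSet {x : ℤ → α | window x 0 m ∈ S} :=
      (isClopen_setOf_window_mem S 0 m).isOpen.measurableSet
    have hint := h m hm (S.indicator 1) fun w => by
      by_cases hw : w ∈ S <;> simp [hw]
    rw [← measureReal_eq_measureReal_iff, ← integral_indicator_one hS, ← integral_indicator_one hS]
    exact hint
  refine ext_of_generate_finite _ generateFrom_measurableCylinders.symm
    isPiSystem_measurableCylinders (fun A hA => ?_) (by simp)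
  obtain ⟨I, S, -, rfl⟩ := (mem_measurableCylinders A).1 hA
  obtain ⟨N, S', hN, hS'⟩ := exists_cylinder_eq_setOf_window_mem I S
  rw [hS']
  set A : Set (ℤ → α) := {x | window x (-(N : ℤ)) (2 * N) ∈ S'}
  have hA : MeasurableSet A := (isClopen_setOf_window_mem S' _ _).isOpen.measurableSet
  have hpre : shift^[N] ⁻¹' A = {x | window x 0 (2 * N) ∈ S'} := by
    ext x
    simp only [A, Set.mem_preimage, Set.mem_ofPred_eq, window_shift_iterate, neg_add_cancel]
  rw [← (hμ.iterate N).measure_preimage hA.nullMeasurableSet,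
    ← (hν.iterate N).measure_preimage hA.nullMeasurableSet, hpre]
  exact hwindow _ (by omega) S'

end Invariant

lemma abs_birkhoffAverage_sub_windowSum_div_le {α : Type*} (m : ℕ) {g : List α → ℝ} {B : ℝ}
    (hg : ∀ w, |g w| ≤ B) (x : ℤ → α) (n : ℕ) :
    |birkhoffAverage ℝ shift (fun y => g (window y 0 m)) n x - windowSum m g (window x 0 n) / n|
      ≤ 2 * B * m / n := by
  rw [birkhoffAverage, smul_eq_mul, inv_mul_eq_div, ← sub_div, abs_div, Nat.abs_cast]
  gcongr
  exact abs_sum_sub_windowSum_window_le m hg x n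

/-! ### Block measures -/

/-- A shift-invariant probability measure carried by `X`. -/
structure IsInvariantMeasureOn {α : Type*} [MeasurableSpace α] (X : Set (ℤ → α))
    (ν : Measure (ℤ → α)) : Prop where
  isProbabilityMeasure : IsProbabilityMeasure ν
  apply_eq_one : ν X = 1
  measurePreserving : MeasurePreserving shift ν ν

section BlockMeasure

variable {d : ℕ} [NeZero d]

lemma tendsto_length_block (j : Fin d) : Tendsto (fun k => (block d k j).length) atTop atTop := by
  refine tendsto_atTop.2 fun b => ?_
  filter_upwards [eventually_ge_atTop (4 ^ d * b)] with k hk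
  have hlen : 4 ^ d * b ≤ 4 ^ d * (block d k j).length :=
    hk.trans ((Nat.lt_pow_self (by norm_num)).le.trans (four_pow_le_length_block k j))
  exact Nat.le_of_mul_le_mul_left hlen (by positivity)

lemma iterate_shift_mem_subshiftOf {α : Type*} {L : Set (List α)} {x : ℤ → α}
    (hx : x ∈ subshiftOf L) (i : ℕ) : shift^[i] x ∈ subshiftOf L := fun a n => by
  rw [window_shift_iterate]
  exact hx _ _

lemma exists_mem_subshiftOf_window_eq_block (k : ℕ) (j : Fin d) :
    ∃ x ∈ subshiftOf (language d), window x 0 (block d k j).length = block d k j := by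
  obtain ⟨x, hx, h⟩ := exists_mem_subshiftOf_language d
  obtain ⟨a, ha⟩ := h _ (block_mem_language k j)
  exact ⟨_, translate_mem_subshiftOf hx a, by rw [window_translate, zero_add, ← ha]⟩

lemma exists_isInvariantMeasureOn_tendsto_blockAverage (j : Fin d) :
    ∃ μ : Measure (ℤ → Fin d), IsInvariantMeasureOn (subshiftOf (language d)) μ ∧
      ∀ (m : ℕ) (g : List (Fin d) → ℝ) (B : ℝ), (∀ w, |g w| ≤ B) →
        Tendsto (fun k => blockAverage (windowSum m g) k j) atTop
          (nhds (∫ x, g (window x 0 m) ∂μ)) := by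
  choose x hx hxw using fun k => exists_mem_subshiftOf_window_eq_block (d := d) k j
  have hn : Tendsto (fun k => (block d k j).length) (hyperfilter ℕ) atTop :=
    (tendsto_length_block j).mono_left Nat.hyperfilter_le_atTop
  obtain ⟨μ, hμ, hμX, hlim⟩ := exists_tendsto_birkhoffAverage (hyperfilter ℕ)
    (isClosed_subshiftOf (language d)) (fun k i => iterate_shift_mem_subshiftOf (hx k) i)
    fun k => one_le_length_block k j
  refine ⟨μ, ⟨hμ, hμX, measurePreserving_of_tendsto_birkhoffAverage continuous_shift hn hlim⟩,
    fun m g B hg => ?_⟩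
  obtain ⟨a, ha⟩ := (isQuasiAdditive_windowSum m hg).exists_tendsto_blockAverage j
  have hdiff : Tendsto (fun k => birkhoffAverage ℝ shift (fun y => g (window y 0 m))
      (block d k j).length (x k) - blockAverage (windowSum m g) k j) (hyperfilter ℕ) (nhds 0) := by
    refine squeeze_zero_norm (fun k => ?_)
      ((tendsto_const_nhds (x := 2 * B * m)).div_atTop (tendsto_natCast_atTop_atTop.comp hn))
    have hclose := abs_birkhoffAverage_sub_windowSum_div_le m hg (x k) (block d k j).length
    rwa [hxw] at hclose
  have hzero := tendsto_nhds_unique hdiff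
    ((hlim _ (continuous_comp_window g 0 m)).sub (ha.mono_left Nat.hyperfilter_le_atTop))
  rwa [sub_eq_zero.1 hzero.symm]

/-- The invariant measure describing the long blocks `block d k j`: the integral of a window
function is the limit of its averages along these blocks. -/
noncomputable def blockMeasure (d : ℕ) [NeZero d] (j : Fin d) : Measure (ℤ → Fin d) :=
  (exists_isInvariantMeasureOn_tendsto_blockAverage j).choose

lemma isInvariantMeasureOn_blockMeasure (j : Fin d) :
    IsInvariantMeasureOn (subshiftOf (language d)) (blockMeasure d j) :=
  (exists_isInvariantMeasureOn_tendsto_blockAverage j).choose_spec.1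

instance isProbabilityMeasure_blockMeasure (j : Fin d) : IsProbabilityMeasure (blockMeasure d j) :=
  (isInvariantMeasureOn_blockMeasure j).isProbabilityMeasure

lemma tendsto_blockAverage_windowSum (j : Fin d) (m : ℕ) {g : List (Fin d) → ℝ} {B : ℝ}
    (hg : ∀ w, |g w| ≤ B) :
    Tendsto (fun k => blockAverage (windowSum m g) k j) atTop
      (nhds (∫ x, g (window x 0 m) ∂(blockMeasure d j))) :=
  (exists_isInvariantMeasureOn_tendsto_blockAverage j).choose_spec.2 m g B hg

/-! ### Invariant measures are mixtures of block measures -/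

lemma neg_le_integral_window_of_forall_neg_mul_length_le {ν : Measure (ℤ → Fin d)}
    (hν : IsInvariantMeasureOn (subshiftOf (language d)) ν) {m : ℕ} {g : List (Fin d) → ℝ} {B : ℝ}
    (hg : ∀ w, |g w| ≤ B) {ε : ℝ} {N : ℕ}
    (h : ∀ w ∈ language d, N ≤ w.length → -ε * w.length ≤ windowSum m g w) :
    -ε ≤ ∫ x, g (window x 0 m) ∂ν := by
  have := hν.isProbabilityMeasure
  have hmem : ∀ᵐ x ∂ν, x ∈ subshiftOf (language d) :=
    (mem_ae_iff_prob_eq_one (isClosed_subshiftOf _).measurableSet).2 hν.apply_eq_one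
  have hcont := continuous_comp_window g 0 m
  have hlower : ∀ n ≥ N + 1, -ε - 2 * B * m / n ≤ ∫ x, g (window x 0 m) ∂ν := fun n hn => by
    have hn0 : (0 : ℝ) < n := by exact_mod_cast (Nat.succ_pos N).trans_le hn
    have hpoint : ∀ᵐ x ∂ν, -ε - 2 * B * m / n
        ≤ birkhoffAverage ℝ shift (fun y => g (window y 0 m)) n x := by
      filter_upwards [hmem] with x hx
      have hword := h _ (hx 0 n) (by rw [length_window]; omega)
      rw [length_window, ← le_div_iff₀ hn0] at hword
      linarith [(abs_le.1 (abs_birkhoffAverage_sub_windowSum_div_le m hg x n)).1]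
    have hint := integral_mono_ae (integrable_const _)
      (integrable_of_continuous (continuous_birkhoffAverage continuous_shift hcont n)) hpoint
    rwa [integral_const, probReal_univ, one_smul, integral_birkhoffAverage continuous_shift
      hν.measurePreserving hcont ((Nat.succ_pos N).trans_le hn)] at hint
  have hlim : Tendsto (fun n : ℕ => -ε - 2 * B * m / n) atTop (nhds (-ε)) := by
    simpa using (tendsto_const_div_atTop_nhds_zero_nat (2 * B * m)).const_sub (-ε)
  exact le_of_tendsto hlim ((eventually_ge_atTop (N + 1)).mono hlower)

lemma integral_window_nonneg_of_forall_blockMeasure {ν : Measure (ℤ → Fin d)}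
    (hν : IsInvariantMeasureOn (subshiftOf (language d)) ν) (m : ℕ) {g : List (Fin d) → ℝ} {B : ℝ}
    (hg : ∀ w, |g w| ≤ B) (h : ∀ j, 0 ≤ ∫ x, g (window x 0 m) ∂(blockMeasure d j)) :
    0 ≤ ∫ x, g (window x 0 m) ∂ν := by
  refine le_of_forall_pos_le_add fun ε hε => ?_
  obtain ⟨N, hN⟩ := (isQuasiAdditive_windowSum m hg).exists_forall_neg_mul_length_le
    (fun j => tendsto_blockAverage_windowSum j m hg) h hε
  linarith [neg_le_integral_window_of_forall_neg_mul_length_le hν hg hN]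

end BlockMeasure

lemma exists_forall_abs_sum_mul_le {ι β : Type*} [Fintype ι] (c : ι → ℝ) {g : ι → β → ℝ}
    (hg : ∀ i, ∃ B, ∀ w, |g i w| ≤ B) : ∃ B, ∀ w, |∑ i, c i * g i w| ≤ B := by
  choose B hB using hg
  refine ⟨∑ i, |c i| * B i, fun w => (Finset.abs_sum_le_sum_abs _ _).trans ?_⟩
  gcongr with i
  rw [abs_mul]
  gcongr
  exact hB i w

lemma integral_sum_mul_window {d : ℕ} {ι : Type*} [Fintype ι] (ν : Measure (ℤ → Fin d))
    [IsFiniteMeasure ν] (m : ℕ) (c : ι → ℝ) (g : ι → List (Fin d) → ℝ) :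
    ∫ x, ∑ i, c i * g i (window x 0 m) ∂ν = ∑ i, c i * ∫ x, g i (window x 0 m) ∂ν := by
  rw [integral_finsetSum _ fun i _ =>
    (integrable_of_continuous (continuous_comp_window (g i) 0 m)).const_mul (c i)]
  simp only [integral_const_mul]

lemma measurePreserving_sum_smul {X ι : Type*} [MeasurableSpace X] [Fintype ι] {T : X → X}
    (hT : Measurable T) {μ : ι → Measure X} (hμ : ∀ i, MeasurePreserving T (μ i) (μ i))
    (c : ι → ℝ≥0∞) : MeasurePreserving T (∑ i, c i • μ i) (∑ i, c i • μ i) := by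
  refine ⟨hT, Measure.ext fun s hs => ?_⟩
  simp only [Measure.map_apply hT hs, Measure.finsetSum_apply, Measure.smul_apply,
    (hμ _).measure_preimage hs.nullMeasurableSet]

section Weights

variable {d : ℕ} [NeZero d]

/-- The matrix of letter frequencies: the entry at `(j, i)` is the mass that `blockMeasure d j`
gives to the points with letter `i` at the origin. -/
noncomputable def letterMatrix (d : ℕ) [NeZero d] : Matrix (Fin d) (Fin d) ℝ :=
  .of fun j i => ∫ x, letterIndicator i (window x 0 1) ∂(blockMeasure d j)

lemma two_thirds_le_letterMatrix_diag (j : Fin d) : 2 / 3 ≤ letterMatrix d j j :=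
  ge_of_tendsto' (tendsto_blockAverage_windowSum j 1 (abs_letterIndicator_le j)) fun k =>
    two_thirds_le_blockAverage_letterIndicator k j

lemma letterMatrix_nonneg (j i : Fin d) : 0 ≤ letterMatrix d j i :=
  integral_nonneg fun x => by
    rw [Pi.zero_apply, letterIndicator]
    split_ifs <;> norm_num

lemma sum_letterMatrix (j : Fin d) : ∑ i, letterMatrix d j i = 1 := by
  have hsum := integral_sum_mul_window (blockMeasure d j) 1 (fun _ => 1) letterIndicator
  simpa [letterMatrix, letterIndicator_window le_rfl] using hsum.symm

lemma det_letterMatrix_ne_zero : (letterMatrix d).det ≠ 0 := by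
  refine det_ne_zero_of_sum_row_lt_diag fun j => ?_
  simp only [Real.norm_eq_abs, abs_of_nonneg (letterMatrix_nonneg _ _)]
  have hsum := sum_letterMatrix j
  rw [← Finset.add_sum_erase _ _ (Finset.mem_univ j)] at hsum
  linarith [two_thirds_le_letterMatrix_diag j]

/-- The combination of letter indicators whose integral is `1` for `blockMeasure d i` and `0` for
the other block measures. -/
noncomputable def dualIndicator (i : Fin d) (w : List (Fin d)) : ℝ :=
  ∑ l, (letterMatrix d)⁻¹ l i * letterIndicator l w

lemma exists_forall_abs_dualIndicator_le (i : Fin d) :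
    ∃ B, ∀ w, |dualIndicator i w| ≤ B :=
  exists_forall_abs_sum_mul_le _ fun l => ⟨1, abs_letterIndicator_le l⟩

/-- The coefficient of `blockMeasure d i` in the representation of an invariant measure `ν` as a
mixture of block measures. -/
noncomputable def weight (ν : Measure (ℤ → Fin d)) (i : Fin d) : ℝ :=
  ∫ x, dualIndicator i (window x 0 1) ∂ν

lemma integral_dualIndicator_window (ν : Measure (ℤ → Fin d)) (i : Fin d) {m : ℕ} (hm : 1 ≤ m) :
    ∫ x, dualIndicator i (window x 0 m) ∂ν = weight ν i := by
  simp only [weight, dualIndicator, letterIndicator_window hm, letterIndicator_window le_rfl]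

lemma weight_blockMeasure (j i : Fin d) : weight (blockMeasure d j) i = if j = i then 1 else 0 := by
  have hsum := integral_sum_mul_window (blockMeasure d j) 1 (fun l => (letterMatrix d)⁻¹ l i)
    letterIndicator
  calc weight (blockMeasure d j) i = ∑ l, (letterMatrix d)⁻¹ l i * letterMatrix d j l := hsum
    _ = (letterMatrix d * (letterMatrix d)⁻¹) j i := by simp only [Matrix.mul_apply, mul_comm]
    _ = if j = i then 1 else 0 := by
      rw [Matrix.mul_nonsing_inv _ (isUnit_iff_ne_zero.2 det_letterMatrix_ne_zero),
        Matrix.one_apply]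

lemma injective_blockMeasure : Function.Injective (blockMeasure d) := fun i j hij => by
  by_contra hne
  have hweight := weight_blockMeasure i i
  rw [hij, weight_blockMeasure, if_neg (Ne.symm hne), if_pos rfl] at hweight
  exact zero_ne_one hweight

end Weights

section Mixture

variable {d : ℕ} [NeZero d] {ν : Measure (ℤ → Fin d)}

lemma weight_nonneg (hν : IsInvariantMeasureOn (subshiftOf (language d)) ν) (i : Fin d) :
    0 ≤ weight ν i := by
  obtain ⟨B, hB⟩ := exists_forall_abs_dualIndicator_le i
  refine integral_window_nonneg_of_forall_blockMeasure hν 1 hB fun j => ?_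
  change 0 ≤ weight (blockMeasure d j) i
  rw [weight_blockMeasure]
  split_ifs <;> norm_num

lemma integral_window_eq_zero_of_forall_blockMeasure
    (hν : IsInvariantMeasureOn (subshiftOf (language d)) ν) (m : ℕ) {g : List (Fin d) → ℝ} {B : ℝ}
    (hg : ∀ w, |g w| ≤ B) (h : ∀ j, ∫ x, g (window x 0 m) ∂(blockMeasure d j) = 0) :
    ∫ x, g (window x 0 m) ∂ν = 0 := by
  have hneg := integral_window_nonneg_of_forall_blockMeasure hν m (g := fun w => -g w)
    (fun w => (abs_neg _).trans_le (hg w)) fun j => by rw [integral_neg, h, neg_zero]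
  rw [integral_neg] at hneg
  exact le_antisymm (neg_nonneg.1 hneg)
    (integral_window_nonneg_of_forall_blockMeasure hν m hg fun j => (h j).ge)

lemma integral_window_eq_sum_weight (hν : IsInvariantMeasureOn (subshiftOf (language d)) ν) {m : ℕ}
    (hm : 1 ≤ m) {g : List (Fin d) → ℝ} {B : ℝ} (hg : ∀ w, |g w| ≤ B) :
    ∫ x, g (window x 0 m) ∂ν =
      ∑ i, weight ν i * ∫ x, g (window x 0 m) ∂(blockMeasure d i) := by
  have := hν.isProbabilityMeasure
  let a : Fin d → ℝ := fun i => ∫ x, g (window x 0 m) ∂(blockMeasure d i)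
  obtain ⟨B', hB'⟩ := exists_forall_abs_sum_mul_le a exists_forall_abs_dualIndicator_le
  have hsub : ∀ (ρ : Measure (ℤ → Fin d)) [IsProbabilityMeasure ρ],
      ∫ x, (g (window x 0 m) - ∑ i, a i * dualIndicator i (window x 0 m)) ∂ρ =
        ∫ x, g (window x 0 m) ∂ρ - ∑ i, weight ρ i * a i := fun ρ _ => by
    rw [integral_sub (integrable_of_continuous (continuous_comp_window g 0 m))
      (integrable_of_continuous
        (continuous_comp_window (fun w => ∑ i, a i * dualIndicator i w) 0 m)),
      integral_sum_mul_window]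
    simp only [integral_dualIndicator_window ρ _ hm, mul_comm]
  have hzero := integral_window_eq_zero_of_forall_blockMeasure hν m
    (g := fun w => g w - ∑ i, a i * dualIndicator i w)
    (fun w => (abs_sub _ _).trans (add_le_add (hg w) (hB' w))) fun j => by
      rw [hsub]
      simp [weight_blockMeasure, a]
  rwa [hsub, sub_eq_zero] at hzero

lemma sum_weight (hν : IsInvariantMeasureOn (subshiftOf (language d)) ν) : ∑ i, weight ν i = 1 := by
  have := hν.isProbabilityMeasure
  simpa using (integral_window_eq_sum_weight hν le_rfl (g := fun _ => 1) fun _ => abs_one.le).symm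

lemma eq_sum_weight_smul_blockMeasure (hν : IsInvariantMeasureOn (subshiftOf (language d)) ν) :
    ν = ∑ i, ENNReal.ofReal (weight ν i) • blockMeasure d i := by
  have := hν.isProbabilityMeasure
  have : IsProbabilityMeasure (∑ i, ENNReal.ofReal (weight ν i) • blockMeasure d i) := by
    constructor
    simp only [Measure.finsetSum_apply, Measure.smul_apply, measure_univ, smul_eq_mul, mul_one]
    rw [← ENNReal.ofReal_sum_of_nonneg fun i _ => weight_nonneg hν i, sum_weight hν,
      ENNReal.ofReal_one]
  refine eq_of_forall_integral_window_eq hν.measurePreserving (measurePreserving_sum_smul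
    continuous_shift.measurable (fun i => (isInvariantMeasureOn_blockMeasure i).measurePreserving)
    _) fun m hm g hg => ?_
  rw [integral_window_eq_sum_weight hν hm hg, integral_finsetSum_measure fun i _ =>
    (integrable_of_continuous (continuous_comp_window g 0 m)).smul_measure ENNReal.ofReal_ne_top]
  simp only [integral_smul_measure, ENNReal.toReal_ofReal (weight_nonneg hν _), smul_eq_mul]

lemma eq_blockMeasure_of_weight_eq_zero
    (hν : IsInvariantMeasureOn (subshiftOf (language d)) ν) (i : Fin d)
    (h : ∀ j, j ≠ i → weight ν j = 0) : ν = blockMeasure d i := by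
  have hi : weight ν i = 1 := by
    rw [← sum_weight hν, Finset.sum_eq_single i (fun j _ hj => h j hj) (by simp)]
  rw [eq_sum_weight_smul_blockMeasure hν, Finset.sum_eq_single i (fun j _ hj => by simp [h j hj])
    (by simp), hi, ENNReal.ofReal_one, one_smul]

lemma weight_smul_add_smul {a b : ℝ≥0∞} (ha : a ≠ ∞) (hb : b ≠ ∞) (ν₁ ν₂ : Measure (ℤ → Fin d))
    [IsFiniteMeasure ν₁] [IsFiniteMeasure ν₂] (i : Fin d) :
    weight (a • ν₁ + b • ν₂) i = a.toReal * weight ν₁ i + b.toReal * weight ν₂ i := by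
  have hcont := continuous_comp_window (dualIndicator i) 0 1
  rw [weight, integral_add_measure ((integrable_of_continuous hcont).smul_measure ha)
    ((integrable_of_continuous hcont).smul_measure hb), integral_smul_measure,
    integral_smul_measure]
  rfl

/-! ### Ergodic and generic measures -/

lemma eq_blockMeasure_of_smul_add_smul_eq {ν₁ ν₂ : Measure (ℤ → Fin d)}
    (h₁ : IsInvariantMeasureOn (subshiftOf (language d)) ν₁)
    (h₂ : IsInvariantMeasureOn (subshiftOf (language d)) ν₂) {a b : ℝ≥0∞} (ha : 0 < a)
    (ha' : a ≠ ∞) (hb : b ≠ ∞) {i : Fin d} (h : a • ν₁ + b • ν₂ = blockMeasure d i) :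
    ν₁ = blockMeasure d i := by
  have := h₁.isProbabilityMeasure
  have := h₂.isProbabilityMeasure
  refine eq_blockMeasure_of_weight_eq_zero h₁ i fun j hj => ?_
  have hsum := weight_smul_add_smul ha' hb ν₁ ν₂ j
  rw [h, weight_blockMeasure, if_neg hj.symm] at hsum
  have hzero := ((add_eq_zero_iff_of_nonneg (mul_nonneg a.toReal_nonneg (weight_nonneg h₁ j))
    (mul_nonneg b.toReal_nonneg (weight_nonneg h₂ j))).1 hsum.symm).1
  exact (mul_eq_zero.1 hzero).resolve_left (ENNReal.toReal_pos ha.ne' ha').ne'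

lemma ergodic_blockMeasure (i : Fin d) : Ergodic shift (blockMeasure d i) := by
  have hμ := isInvariantMeasureOn_blockMeasure i
  have hX := (isClosed_subshiftOf (language d)).measurableSet
  refine Ergodic.of_mem_extremePoints ⟨⟨hμ.measurePreserving, inferInstance⟩, ?_⟩
  rintro ν₁ ⟨h₁, hp₁⟩ ν₂ ⟨h₂, hp₂⟩ ⟨a, b, ha, hb, hab, h⟩
  have ha' : a ≠ ∞ := ne_top_of_le_ne_top ENNReal.one_ne_top (hab ▸ le_self_add)
  have hb' : b ≠ ∞ := ne_top_of_le_ne_top ENNReal.one_ne_top (hab ▸ le_add_self)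
  have hnull : a * ν₁ (subshiftOf (language d))ᶜ + b * ν₂ (subshiftOf (language d))ᶜ = 0 := by
    have := (prob_compl_eq_zero_iff hX).2 hμ.apply_eq_one
    rwa [← h] at this
  simp only [add_eq_zero, mul_eq_zero, ha.ne', hb.ne', false_or] at hnull
  exact eq_blockMeasure_of_smul_add_smul_eq
    ⟨hp₁, (prob_compl_eq_zero_iff hX).1 hnull.1, h₁⟩
    ⟨hp₂, (prob_compl_eq_zero_iff hX).1 hnull.2, h₂⟩ ha ha' hb' h

lemma isErgodicMeasureOn_blockMeasure (i : Fin d) :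
    IsErgodicMeasureOn (subshiftOf (language d)) (blockMeasure d i) :=
  ⟨inferInstance, (isInvariantMeasureOn_blockMeasure i).apply_eq_one, ergodic_blockMeasure i⟩

lemma exists_eq_blockMeasure_of_isErgodicMeasureOn
    (h : IsErgodicMeasureOn (subshiftOf (language d)) ν) : ∃ i, ν = blockMeasure d i := by
  obtain ⟨hp, hX, he⟩ := h
  exact exists_eq_of_ergodic_of_eq_sum he
    (fun i => (isInvariantMeasureOn_blockMeasure i).measurePreserving)
    (eq_sum_weight_smul_blockMeasure ⟨hp, hX, he.toMeasurePreserving⟩)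

lemma exists_abs_birkhoffAverage_sub_blockAverage_le (hd : 1 < d) {x : ℤ → Fin d}
    (hx : x ∈ subshiftOf (language d)) (k : ℕ) :
    ∃ (N : ℕ) (j : Fin d), 2 ^ k ≤ N ∧ ∀ (m : ℕ) (g : List (Fin d) → ℝ) (B : ℝ),
      (∀ w, |g w| ≤ B) →
        |birkhoffAverage ℝ shift (fun y => g (window y 0 m)) N x -
          blockAverage (windowSum m g) k j| ≤ (8 * B * m + 6 * B + 2 * B * m * 4 ^ d) / 2 ^ k := by
  obtain ⟨N, j, hN, h⟩ := exists_forall_abs_window_sub_blockAverage_le hd hx k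
  refine ⟨N, j, hN, fun m g B hg => ?_⟩
  have hB : 0 ≤ B := (abs_nonneg _).trans (hg [])
  have hN' : (2 : ℝ) ^ k ≤ N := by exact_mod_cast hN
  have hN0 : (0 : ℝ) < N := (by positivity : (0 : ℝ) < 2 ^ k).trans_le hN'
  have hblock := h _ _ _ (isQuasiAdditive_windowSum m hg)
  have hdiv : |windowSum m g (window x 0 N) / N - blockAverage (windowSum m g) k j| ≤
      (3 * (2 * B * m) + 6 * B + 2 * B * m * 4 ^ d) / 2 ^ k := by
    rw [div_sub' hN0.ne', abs_div, abs_of_pos hN0, div_le_div_iff₀ hN0 (by positivity), mul_comm,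
      mul_comm (N : ℝ)]
    exact hblock
  calc _ ≤ 2 * B * m / N + (3 * (2 * B * m) + 6 * B + 2 * B * m * 4 ^ d) / 2 ^ k :=
        (abs_sub_le _ _ _).trans
          (add_le_add (abs_birkhoffAverage_sub_windowSum_div_le m hg x N) hdiv)
    _ ≤ 2 * B * m / 2 ^ k + (3 * (2 * B * m) + 6 * B + 2 * B * m * 4 ^ d) / 2 ^ k := by gcongr
    _ = _ := by ring

lemma exists_eq_blockMeasure_of_isGenericPt (hd : 1 < d) {x : ℤ → Fin d}
    (hx : x ∈ subshiftOf (language d)) [IsProbabilityMeasure ν] (hgen : IsGenericPt ν x) :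
    ∃ i, ν = blockMeasure d i := by
  have hlim : ∀ f : (ℤ → Fin d) → ℝ, Continuous f →
      Tendsto (fun N => birkhoffAverage ℝ shift f N x) atTop (nhds (∫ y, f y ∂ν)) := fun f hf => by
    simpa only [birkhoffAverage, birkhoffSum, smul_eq_mul, inv_mul_eq_div] using hgen f hf
  have hν : MeasurePreserving shift ν ν :=
    measurePreserving_of_tendsto_birkhoffAverage continuous_shift tendsto_id hlim
  choose N j hN hj using fun k => exists_abs_birkhoffAverage_sub_blockAverage_le hd hx k
  obtain ⟨i, hi⟩ := Finite.exists_infinite_fiber j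
  obtain ⟨φ, hφ, hφi⟩ :=
    extraction_of_frequently_atTop (Nat.frequently_atTop_iff_infinite.2 (Set.infinite_coe_iff.1 hi))
  have hNφ : Tendsto (N ∘ φ) atTop atTop :=
    (tendsto_atTop_mono (fun k => (Nat.lt_pow_self one_lt_two).le.trans (hN k)) tendsto_id).comp
      hφ.tendsto_atTop
  refine ⟨i, eq_of_forall_integral_window_eq hν
    (isInvariantMeasureOn_blockMeasure i).measurePreserving fun m _ g hg => ?_⟩
  have hpoint := (hlim _ (continuous_comp_window g 0 m)).comp hNφ
  have hblock := (tendsto_blockAverage_windowSum i m hg).comp hφ.tendsto_atTop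
  have hpow : Tendsto (fun k => (2 : ℝ) ^ φ k) atTop atTop :=
    (tendsto_pow_atTop_atTop_of_one_lt one_lt_two).comp hφ.tendsto_atTop
  refine sub_eq_zero.1 (tendsto_nhds_unique (hpoint.sub hblock)
    (squeeze_zero_norm (fun k => ?_) ((tendsto_const_nhds
      (x := 8 * 1 * (m : ℝ) + 6 * 1 + 2 * 1 * m * 4 ^ d)).div_atTop hpow)))
  have hk := hj (φ k) m g 1 hg
  rwa [(hφi k : j (φ k) = i)] at hk

lemma ergodic_of_genericMeasureOn (hd : 1 < d)
    (h : GenericMeasureOn (subshiftOf (language d)) ν) : Ergodic shift ν := by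
  obtain ⟨hp, -, x, hx, hgen⟩ := h
  obtain ⟨i, rfl⟩ := exists_eq_blockMeasure_of_isGenericPt hd hx hgen
  exact ergodic_blockMeasure i

end Mixture

end BlockSubshift

/-- Sharpness: for every `d > 1` there is a minimal subshift with exactly `d` ergodic
measures, no nonergodic generic measures, `liminf P_X(n)/n = d` and
`limsup P_X(n)/n = d + 1`. -/
theorem exists_minimal_subshift_sharp (d : ℕ) (hd : 1 < d) :
    ∃ X : Set (ℤ → Fin d), IsMinimalSubshift X ∧
      (∃ μs : Fin d → Measure (ℤ → Fin d), Function.Injective μs ∧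
        (∀ i, IsErgodicMeasureOn X (μs i)) ∧
        ∀ ν : Measure (ℤ → Fin d), IsErgodicMeasureOn X ν → ∃ i, ν = μs i) ∧
      (∀ ν : Measure (ℤ → Fin d), GenericMeasureOn X ν → Ergodic shift ν) ∧
      liminf (fun n : ℕ => (complexity X n : ℝ≥0∞) / (n : ℝ≥0∞)) atTop = (d : ℝ≥0∞) ∧
      limsup (fun n : ℕ => (complexity X n : ℝ≥0∞) / (n : ℝ≥0∞)) atTop = (d : ℝ≥0∞) + 1 := by
  have : NeZero d := ⟨by omega⟩
  refine ⟨BlockSubshift.subshiftOf (BlockSubshift.language d),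
    BlockSubshift.isMinimalSubshift_language d,
    ⟨BlockSubshift.blockMeasure d, BlockSubshift.injective_blockMeasure,
      BlockSubshift.isErgodicMeasureOn_blockMeasure,
      fun _ => BlockSubshift.exists_eq_blockMeasure_of_isErgodicMeasureOn⟩,
    fun _ => BlockSubshift.ergodic_of_genericMeasureOn hd, ?_, ?_⟩
  · simp only [BlockSubshift.complexity_language]
    exact le_antisymm (BlockSubshift.liminf_wordCount_div_le hd)
      (BlockSubshift.le_liminf_wordCount_div hd)
  · simp only [BlockSubshift.complexity_language]
    exact le_antisymm (BlockSubshift.limsup_wordCount_div_le hd)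
      (BlockSubshift.le_limsup_wordCount_div hd)
end

section
/- Let (p_n) be a sequence of real numbers with liminf_{n→∞} p_n/n = ∞. Then there exists a subshift (X, σ) with infinitely many nonatomic ergodic measures such that P_X(n) ≤ p_n for all but finitely many n. -/
open MeasureTheory Filter
open scoped ENNReal

/-!
The subshift is the closure of a union of Sturmian subshifts with slopes `α k` tending to `0`.
A Sturmian subshift has at most `n + 1` words of length `n`, and as soon as `n * α k ≤ 1` these
words contain at most one `1`, so they come from a set of `n + 1` words that does not depend on `k`.
If `K` of the slopes exceed `1 / n`, the union therefore has at most `(K + 1) * (n + 1)` words of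
length `n`, and `K` grows as slowly as desired when the slopes decrease fast enough.
Coding the points of the circle by mechanical words is injective and turns the rotation by `α k`
into the shift, so it carries Lebesgue measure to a nonatomic ergodic measure; these measures differ
because the `k`-th one gives mass `α k` to the cylinder `[1]`.
-/

/-- The word of length `n` read in `x` from position `m` on. -/
def window {A : Type*} (m : ℤ) (n : ℕ) (x : ℤ → A) : Fin n → A := fun i => x (m + (i : ℕ))

/-- The words of length `n` occurring in `X`; their number is the complexity of `X`. -/
def language {A : Type*} (X : Set (ℤ → A)) (n : ℕ) : Set (Fin n → A) := ⋃ m : ℤ, window m n '' X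

/-- The itinerary of `θ` under translation by `a`, read through the observable `f`. -/
def orbitCoding {G A : Type*} [AddGroup G] (a : G) (f : G → A) (θ : G) : ℤ → A :=
  fun n => f (n • a + θ)

section Subshifts

variable {A : Type*}

lemma complexity_eq_ncard_language (X : Set (ℤ → A)) (n : ℕ) :
    complexity X n = (language X n).ncard := by
  have h : language X n =
      {w | ∃ x ∈ X, ∃ m : ℤ, ∀ t : Fin n, x (m + (t : ℕ)) = w t} := by
    ext w
    simp only [language, window, Set.mem_iUnion, Set.mem_image, Set.mem_ofPred_eq, funext_iff]
    tauto
  rw [h]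
  rfl

lemma language_iUnion {ι : Sort*} (X : ι → Set (ℤ → A)) (n : ℕ) :
    language (⋃ k, X k) n = ⋃ k, language (X k) n := by
  simp only [language, Set.image_iUnion]
  exact Set.iUnion_comm _

section Topology

variable [TopologicalSpace A]

lemma continuous_window (m : ℤ) (n : ℕ) : Continuous (window m n : (ℤ → A) → Fin n → A) :=
  continuous_pi fun _ => continuous_apply _

lemma language_closure [DiscreteTopology A] (X : Set (ℤ → A)) (n : ℕ) :
    language (closure X) n = language X n := by
  refine Set.iUnion_congr fun m => Set.Subset.antisymm ?_ (Set.image_mono subset_closure)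
  simpa only [closure_discrete] using
    image_closure_subset_closure_image (s := X) (continuous_window m n)

lemma shift_image_closure (X : Set (ℤ → A)) : shift '' closure X = closure (shift '' X) :=
  (Homeomorph.piCongrLeft (Y := fun _ => A) (Equiv.addRight (1 : ℤ))).symm.image_closure X

lemma isSubshift_closure {X : Set (ℤ → A)} (hX : shift '' X = X) : IsSubshift (closure X) :=
  ⟨isClosed_closure, by rw [shift_image_closure, hX]⟩

end Topology

lemma measurable_shift [MeasurableSpace A] : Measurable (shift : (ℤ → A) → ℤ → A) :=
  measurable_pi_iff.2 fun n => measurable_pi_apply (n + 1)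

end Subshifts

section OrbitCoding

variable {G A : Type*} [AddGroup G] (a : G) (f : G → A)

lemma semiconj_orbitCoding : Function.Semiconj (orbitCoding a f) (a + ·) shift := fun θ => by
  funext n
  simp only [orbitCoding, shift, add_zsmul, one_zsmul, add_assoc]

lemma shift_image_range_orbitCoding :
    shift '' Set.range (orbitCoding a f) = Set.range (orbitCoding a f) := by
  rw [← Set.range_comp, ← (semiconj_orbitCoding a f).comp_eq]
  exact (add_left_surjective a).range_comp _

lemma window_comp_orbitCoding (m : ℤ) (n : ℕ) :
    window m n ∘ orbitCoding a f = (window 0 n ∘ orbitCoding a f) ∘ (m • a + ·) := by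
  funext θ i
  simp only [Function.comp_apply, window, orbitCoding]
  rw [zero_add, ← add_assoc, ← add_zsmul, add_comm m]

lemma language_range_orbitCoding (n : ℕ) :
    language (Set.range (orbitCoding a f)) n = Set.range (window 0 n ∘ orbitCoding a f) := by
  have hrange (m : ℤ) :
      Set.range (window m n ∘ orbitCoding a f) = Set.range (window 0 n ∘ orbitCoding a f) := by
    rw [window_comp_orbitCoding]
    exact (add_left_surjective _).range_comp _
  simp only [language, ← Set.range_comp, hrange, Set.iUnion_const]

variable [MeasurableSpace G] [MeasurableAdd G] [MeasurableSpace A] {f}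

lemma measurable_orbitCoding (hf : Measurable f) : Measurable (orbitCoding a f) :=
  measurable_pi_iff.2 fun _ => hf.comp (measurable_const_add _)

lemma ergodic_map_orbitCoding (hf : Measurable f) {μ : Measure G} (hμ : Ergodic (a + ·) μ) :
    Ergodic shift (μ.map (orbitCoding a f)) :=
  ((measurable_orbitCoding a hf).measurePreserving μ).ergodic_of_ergodic_semiconj hμ
    measurable_shift (semiconj_orbitCoding a f)

end OrbitCoding

/-- The indicator function of the arc `[1 - α, 1)` of the circle `ℝ / ℤ`. -/
noncomputable def sturmianLetter (α : ℝ) : UnitAddCircle → Fin 2 :=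
  ((Int.fract_periodic ℝ).comp fun u => if 1 - α ≤ u then 1 else 0).lift

/-- The mechanical word `n ↦ ⌊t + (n + 1) α⌋ - ⌊t + n α⌋` of slope `α` (for `0 ≤ α ≤ 1`) and
intercept `t`. For irrational `α` these words are dense in the Sturmian subshift in which the letter
`1` has frequency `α`. -/
noncomputable def sturmianCoding (α : ℝ) : UnitAddCircle → ℤ → Fin 2 :=
  orbitCoding (α : UnitAddCircle) (sturmianLetter α)

/-- The invariant measure of the Sturmian subshift of slope `α`, as the image of Lebesgue measure
on the circle. -/
noncomputable def sturmianMeasure (α : ℝ) : Measure (ℤ → Fin 2) :=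
  (volume : Measure UnitAddCircle).map (sturmianCoding α)

section Sturmian

variable {α : ℝ}

lemma sturmianLetter_coe (α t : ℝ) :
    sturmianLetter α (t : UnitAddCircle) = if 1 - α ≤ Int.fract t then 1 else 0 := rfl

lemma sturmianLetter_coe_eq_floor_sub_floor (hα : α ∈ Set.Icc 0 1) (t : ℝ) :
    ((sturmianLetter α (t : UnitAddCircle)).val : ℤ) = ⌊t + α⌋ - ⌊t⌋ := by
  have ht := Int.floor_add_fract t
  have h0 := Int.fract_nonneg t
  have h1 := Int.fract_lt_one t
  obtain ⟨hα0, hα1⟩ := hα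
  rw [sturmianLetter_coe]
  split_ifs with h
  · have : ⌊t + α⌋ = ⌊t⌋ + 1 := by
      rw [Int.floor_eq_iff]; push_cast; constructor <;> linarith
    simp [this]
  · have : ⌊t + α⌋ = ⌊t⌋ := by
      rw [Int.floor_eq_iff]; constructor <;> linarith
    simp [this]

lemma sturmianCoding_coe (α t : ℝ) (n : ℤ) :
    sturmianCoding α (t : UnitAddCircle) n =
      sturmianLetter α ((t + n * α : ℝ) : UnitAddCircle) := by
  rw [add_comm, AddCircle.coe_add, ← zsmul_eq_mul, AddCircle.coe_zsmul]
  rfl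

lemma sturmianCoding_coe_eq_floor_sub_floor (hα : α ∈ Set.Icc 0 1) (t : ℝ) (n : ℤ) :
    ((sturmianCoding α (t : UnitAddCircle) n).val : ℤ) = ⌊t + (n + 1) * α⌋ - ⌊t + n * α⌋ := by
  rw [sturmianCoding_coe, sturmianLetter_coe_eq_floor_sub_floor hα, add_one_mul, add_assoc]

lemma window_sturmianCoding_coe_eq_floor_sub_floor (hα : α ∈ Set.Icc 0 1) (t : ℝ) {n : ℕ}
    (i : Fin n) :
    ((window 0 n (sturmianCoding α (t : UnitAddCircle)) i).val : ℤ) =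
      ⌊t + ((i + 1 : ℕ) : ℝ) * α⌋ - ⌊t + (i : ℕ) * α⌋ := by
  rw [window, sturmianCoding_coe_eq_floor_sub_floor hα]
  simp

lemma language_range_sturmianCoding (α : ℝ) (n : ℕ) :
    language (Set.range (sturmianCoding α)) n =
      Set.range (window 0 n ∘ sturmianCoding α) :=
  language_range_orbitCoding _ _ n

section Complexity

lemma window_sturmianCoding_eq_of_sum_floor_eq (hα : α ∈ Set.Icc 0 1) {n : ℕ} {s t : ℝ}
    (hst : ∑ i ∈ Finset.range (n + 1), ⌊s + i * α⌋ = ∑ i ∈ Finset.range (n + 1), ⌊t + i * α⌋) :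
    window 0 n (sturmianCoding α (s : UnitAddCircle)) =
      window 0 n (sturmianCoding α (t : UnitAddCircle)) := by
  wlog hle : s ≤ t generalizing s t
  · exact (this hst.symm (le_of_not_ge hle)).symm
  -- Each floor is monotone in the intercept, so equal sums force equal terms.
  have hfloor : ∀ i ∈ Finset.range (n + 1), ⌊s + i * α⌋ = ⌊t + i * α⌋ :=
    (Finset.sum_eq_sum_iff_of_le fun i _ => Int.floor_le_floor (by gcongr)).1 hst
  funext i
  have hs := window_sturmianCoding_coe_eq_floor_sub_floor hα s i
  have ht := window_sturmianCoding_coe_eq_floor_sub_floor hα t i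
  rw [hfloor _ (Finset.mem_range.2 (by omega)), hfloor _ (Finset.mem_range.2 (by omega))] at hs
  exact Fin.ext (by exact_mod_cast hs.trans ht.symm)

lemma sum_floor_add_mul_mem_Icc (α : ℝ) (n : ℕ) {t : ℝ} (ht : t ∈ Set.Ico 0 1) :
    ∑ i ∈ Finset.range (n + 1), ⌊t + i * α⌋ ∈
      Set.Icc (∑ i ∈ Finset.range (n + 1), ⌊i * α⌋) (∑ i ∈ Finset.range (n + 1), ⌊i * α⌋ + n) := by
  have hle (i : ℕ) : ⌊t + i * α⌋ ≤ ⌊i * α⌋ + 1 := by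
    rw [← Int.floor_add_one]
    exact Int.floor_le_floor (by linarith [ht.2])
  refine ⟨Finset.sum_le_sum fun i _ => Int.floor_le_floor (by linarith [ht.1]), ?_⟩
  calc ∑ i ∈ Finset.range (n + 1), ⌊t + i * α⌋
      = ∑ i ∈ Finset.range n, ⌊t + (i + 1 : ℕ) * α⌋ := by
        simp [Finset.sum_range_succ', Int.floor_eq_zero_iff.2 ht]
    _ ≤ ∑ i ∈ Finset.range n, (⌊(i + 1 : ℕ) * α⌋ + 1) := Finset.sum_le_sum fun i _ => hle _
    _ = ∑ i ∈ Finset.range (n + 1), ⌊i * α⌋ + n := by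
        simp [Finset.sum_range_succ', Finset.sum_add_distrib]

lemma ncard_language_range_sturmianCoding_le (hα : α ∈ Set.Icc 0 1) (n : ℕ) :
    (language (Set.range (sturmianCoding α)) n).ncard ≤ n + 1 := by
  obtain ⟨e, he⟩ := (Function.factorsThrough_iff
    fun t : ℝ => window 0 n (sturmianCoding α (t : UnitAddCircle))).1
    fun _ _ => window_sturmianCoding_eq_of_sum_floor_eq hα
  set c := ∑ i ∈ Finset.range (n + 1), ⌊i * α⌋
  have hsub : language (Set.range (sturmianCoding α)) n ⊆ e '' Set.Icc c (c + n) := by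
    rw [language_range_sturmianCoding]
    rintro _ ⟨θ, rfl⟩
    obtain ⟨t, ht, rfl⟩ := AddCircle.eq_coe_Ico θ
    exact ⟨_, sum_floor_add_mul_mem_Icc α n ht, (congrFun he t).symm⟩
  have hfin := Set.finite_Icc c (c + n)
  calc _ ≤ (e '' Set.Icc c (c + n)).ncard := Set.ncard_le_ncard hsub (hfin.image e)
    _ ≤ (Set.Icc c (c + n)).ncard := Set.ncard_image_le hfin
    _ = n + 1 := by rw [← Finset.coe_Icc, Set.ncard_coe_finset, Int.card_Icc]; omega

lemma sum_window_sturmianCoding (hα : α ∈ Set.Icc 0 1) (t : ℝ) (n : ℕ) :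
    ∑ i, ((window 0 n (sturmianCoding α (t : UnitAddCircle)) i).val : ℤ) =
      ⌊t + n * α⌋ - ⌊t⌋ := by
  simp only [window_sturmianCoding_coe_eq_floor_sub_floor hα]
  rw [Fin.sum_univ_eq_sum_range fun i : ℕ => ⌊t + ((i + 1 : ℕ) : ℝ) * α⌋ - ⌊t + (i : ℝ) * α⌋,
    Finset.sum_range_sub fun i : ℕ => ⌊t + (i : ℝ) * α⌋]
  simp

lemma language_range_sturmianCoding_subset (hα : α ∈ Set.Icc 0 1) {n : ℕ} (hn : n * α ≤ 1) :
    language (Set.range (sturmianCoding α)) n ⊆ {w | ∑ i, (w i : ℕ) ≤ 1} := by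
  rw [language_range_sturmianCoding]
  rintro _ ⟨θ, rfl⟩
  obtain ⟨t, rfl⟩ := QuotientAddGroup.mk_surjective θ
  have hsum := sum_window_sturmianCoding hα t n
  have hfloor : ⌊t + n * α⌋ ≤ ⌊t⌋ + 1 := by
    rw [← Int.floor_add_one]
    exact Int.floor_le_floor (by gcongr)
  have : ∑ i, ((window 0 n (sturmianCoding α (t : UnitAddCircle)) i).val : ℤ) ≤ 1 := by omega
  exact_mod_cast this

lemma ncard_setOf_sum_le_one (ι : Type*) [Fintype ι] :
    {w : ι → Fin 2 | ∑ i, (w i : ℕ) ≤ 1}.ncard ≤ Fintype.card ι + 1 := by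
  classical
  have hsub : {w : ι → Fin 2 | ∑ i, (w i : ℕ) ≤ 1} ⊆
      Set.range fun o : Option ι => o.elim 0 (Pi.single · 1) := by
    intro w hw
    rcases eq_or_ne w 0 with rfl | hw0
    · exact ⟨none, rfl⟩
    obtain ⟨i, hi0⟩ := Function.ne_iff.1 hw0
    have hi : w i = 1 := Fin.eq_one_of_ne_zero _ hi0
    refine ⟨some i, funext fun j => ?_⟩
    rcases eq_or_ne j i with rfl | hji
    · simp [hi]
    · have hpair : (w i : ℕ) + w j ≤ 1 := by
        rw [← Finset.sum_pair (f := fun k => (w k : ℕ)) hji.symm]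
        exact (Finset.sum_le_univ_sum_of_nonneg fun _ => Nat.zero_le _).trans hw
      have hj : w j = 0 := by grind
      simp [hji, hj]
  calc _ ≤ _ := Set.ncard_le_ncard hsub
    _ ≤ (Set.univ : Set (Option ι)).ncard := by
        rw [← Set.image_univ]; exact Set.ncard_image_le
    _ = Fintype.card ι + 1 := by simp [Set.ncard_univ]

end Complexity

section Measures

lemma measurable_sturmianLetter (α : ℝ) : Measurable (sturmianLetter α) :=
  QuotientAddGroup.measurable_from_quotient.2 <|
    Measurable.ite (measurableSet_le measurable_const measurable_fract) measurable_const
      measurable_const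

lemma measurable_sturmianCoding (α : ℝ) : Measurable (sturmianCoding α) :=
  measurable_orbitCoding _ (measurable_sturmianLetter α)

lemma exists_floor_add_mul_lt_floor_add_mul (hα : Irrational α) {s t : ℝ} (hst : s < t) :
    ∃ n : ℤ, ⌊s + n * α⌋ < ⌊t + n * α⌋ := by
  have hdense : Dense (AddSubgroup.closure {α, 1} : Set ℝ) :=
    dense_addSubgroupClosure_pair_iff.2 (by simpa using hα)
  obtain ⟨x, hx, hsx, hxt⟩ :=
    hdense.exists_mem_open isOpen_Ioo (Set.nonempty_Ioo.2 (neg_lt_neg hst))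
  obtain ⟨n, m, rfl⟩ := AddSubgroup.mem_closure_pair.1 hx
  simp only [zsmul_eq_mul, mul_one] at hsx hxt
  refine ⟨n, lt_of_lt_of_le (b := -m) (Int.floor_lt.2 ?_) (Int.le_floor.2 ?_)⟩ <;>
    push_cast <;> linarith

lemma floor_sub_floor_eq_of_sturmianCoding_eq (hα : α ∈ Set.Icc 0 1) {s t : ℝ}
    (h : sturmianCoding α (s : UnitAddCircle) = sturmianCoding α (t : UnitAddCircle)) (n : ℤ) :
    ⌊t + n * α⌋ - ⌊s + n * α⌋ = ⌊t⌋ - ⌊s⌋ := by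
  have hper : Function.Periodic (fun n : ℤ => ⌊t + n * α⌋ - ⌊s + n * α⌋) 1 := fun n => by
    have hs := sturmianCoding_coe_eq_floor_sub_floor hα s n
    have ht := sturmianCoding_coe_eq_floor_sub_floor hα t n
    rw [h] at hs
    push_cast
    omega
  simpa using hper.int_mul_eq n

lemma injective_sturmianCoding (hα : Irrational α) (hα' : α ∈ Set.Icc 0 1) :
    Function.Injective (sturmianCoding α) := by
  intro x y h
  obtain ⟨s, hs, rfl⟩ := AddCircle.eq_coe_Ico x
  obtain ⟨t, ht, rfl⟩ := AddCircle.eq_coe_Ico y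
  suffices s = t by rw [this]
  by_contra hne
  wlog hst : s < t generalizing s t
  · exact this t ht s hs h.symm (Ne.symm hne) (lt_of_le_of_ne (le_of_not_gt hst) (Ne.symm hne))
  obtain ⟨n, hn⟩ := exists_floor_add_mul_lt_floor_add_mul hα hst
  have hconst := floor_sub_floor_eq_of_sturmianCoding_eq hα' h n
  rw [Int.floor_eq_zero_iff.2 hs, Int.floor_eq_zero_iff.2 ht] at hconst
  omega

lemma volume_singleton_unitAddCircle (x : UnitAddCircle) : volume {x} = 0 := by
  rw [← Metric.closedBall_zero, AddCircle.volume_closedBall]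
  simp

lemma sturmianMeasure_singleton (hα : Irrational α) (hα' : α ∈ Set.Icc 0 1) (x : ℤ → Fin 2) :
    sturmianMeasure α {x} = 0 := by
  rw [sturmianMeasure, Measure.map_apply (measurable_sturmianCoding α) (measurableSet_singleton x)]
  obtain h | ⟨θ, h⟩ := (Set.subsingleton_singleton.preimage
    (injective_sturmianCoding hα hα')).eq_empty_or_singleton (s := sturmianCoding α ⁻¹' {x})
  · rw [h, measure_empty]
  · rw [h, volume_singleton_unitAddCircle]

lemma sturmianMeasure_setOf_zero_eq_one (hα : α < 1) :
    sturmianMeasure α {x | x 0 = 1} = ENNReal.ofReal α := by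
  have hmeas : MeasurableSet {x : ℤ → Fin 2 | x 0 = 1} :=
    measurableSet_eq_fun (measurable_pi_apply 0) measurable_const
  have harc : (QuotientAddGroup.mk : ℝ → UnitAddCircle) ⁻¹'
      (sturmianCoding α ⁻¹' {x | x 0 = 1}) ∩ Set.Ioc 0 (0 + 1) = Set.Ico (1 - α) 1 := by
    ext t
    have hcode : sturmianCoding α (t : UnitAddCircle) 0 = 1 ↔ 1 - α ≤ Int.fract t := by
      simp [sturmianCoding_coe, sturmianLetter_coe]
    change sturmianCoding α (t : UnitAddCircle) 0 = 1 ∧ _ ↔ _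
    rw [hcode, zero_add]
    constructor
    · rintro ⟨ht, ht0, ht1⟩
      rcases ht1.lt_or_eq with h | rfl
      · exact ⟨by rwa [Int.fract_eq_self.2 ⟨ht0.le, h⟩] at ht, h⟩
      · rw [Int.fract_one] at ht
        linarith
    · rintro ⟨ht, ht1⟩
      have ht0 : 0 < t := by linarith
      exact ⟨by rwa [Int.fract_eq_self.2 ⟨ht0.le, ht1⟩], ht0, ht1.le⟩
  rw [sturmianMeasure, Measure.map_apply (measurable_sturmianCoding α) hmeas,
    AddCircle.add_projection_respects_measure 1 0 (measurable_sturmianCoding α hmeas), harc]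
  simp

lemma injOn_sturmianMeasure : Set.InjOn sturmianMeasure (Set.Ico 0 1) := by
  intro α hα β hβ h
  rw [← ENNReal.ofReal_eq_ofReal_iff hα.1 hβ.1, ← sturmianMeasure_setOf_zero_eq_one hα.2, h,
    sturmianMeasure_setOf_zero_eq_one hβ.2]

lemma ergodic_sturmianMeasure (hα : Irrational α) : Ergodic shift (sturmianMeasure α) := by
  refine ergodic_map_orbitCoding _ (measurable_sturmianLetter α) ?_
  rw [AddCircle.ergodic_add_left, ← AddCircle.denseRange_zsmul_iff,
    AddCircle.denseRange_zsmul_coe_iff]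
  simpa using hα

instance isProbabilityMeasure_sturmianMeasure (α : ℝ) :
    IsProbabilityMeasure (sturmianMeasure α) :=
  have : IsProbabilityMeasure (volume : Measure UnitAddCircle) := ⟨UnitAddCircle.measure_univ⟩
  Measure.isProbabilityMeasure_map (measurable_sturmianCoding α).aemeasurable

lemma isErgodicMeasureOn_sturmianMeasure (hα : Irrational α) {X : Set (ℤ → Fin 2)}
    (hX : Set.range (sturmianCoding α) ⊆ X) : IsErgodicMeasureOn X (sturmianMeasure α) := by
  refine ⟨inferInstance, le_antisymm prob_le_one ?_, ergodic_sturmianMeasure hα⟩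
  calc 1 = volume (sturmianCoding α ⁻¹' X) := by
        rw [Set.preimage_eq_univ_iff.2 hX, UnitAddCircle.measure_univ]
    _ ≤ sturmianMeasure α X := Measure.le_map_apply (measurable_sturmianCoding α).aemeasurable X

end Measures

end Sturmian

/-- The smallest subshift containing the Sturmian subshifts of all the slopes `α k`. -/
def sturmianUnion {ι : Type*} (α : ι → ℝ) : Set (ℤ → Fin 2) :=
  closure (⋃ k, Set.range (sturmianCoding (α k)))

section SturmianUnion

variable {ι : Type*}

lemma range_sturmianCoding_subset_sturmianUnion (α : ι → ℝ) (k : ι) :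
    Set.range (sturmianCoding (α k)) ⊆ sturmianUnion α :=
  (Set.subset_iUnion (fun k => Set.range (sturmianCoding (α k))) k).trans subset_closure

lemma sturmianUnion_nonempty [Nonempty ι] (α : ι → ℝ) : (sturmianUnion α).Nonempty :=
  (Set.range_nonempty (sturmianCoding (α (Classical.arbitrary ι)))).mono
    (range_sturmianCoding_subset_sturmianUnion α _)

lemma isSubshift_sturmianUnion (α : ι → ℝ) : IsSubshift (sturmianUnion α) :=
  isSubshift_closure (by
    simp only [Set.image_iUnion, sturmianCoding, shift_image_range_orbitCoding])

lemma complexity_sturmianUnion_le {α : ι → ℝ} (hα : ∀ k, α k ∈ Set.Icc 0 1) {n : ℕ} (F : Finset ι)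
    (hF : ∀ k ∉ F, n * α k ≤ 1) : complexity (sturmianUnion α) n ≤ (F.card + 1) * (n + 1) := by
  let L (k : ι) := language (Set.range (sturmianCoding (α k))) n
  let S : Set (Fin n → Fin 2) := {w | ∑ i, (w i : ℕ) ≤ 1}
  have hsub : ⋃ k, L k ⊆ (⋃ k ∈ F, L k) ∪ S := by
    refine Set.iUnion_subset fun k => ?_
    by_cases hk : k ∈ F
    · exact Set.subset_union_of_subset_left (Set.subset_biUnion_of_mem (u := L) hk) _
    · exact Set.subset_union_of_subset_right
        (language_range_sturmianCoding_subset (hα k) (hF k hk)) _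
  calc complexity (sturmianUnion α) n
      = (⋃ k, L k).ncard := by
        rw [complexity_eq_ncard_language, sturmianUnion, language_closure, language_iUnion]
    _ ≤ ((⋃ k ∈ F, L k) ∪ S).ncard := Set.ncard_le_ncard hsub
    _ ≤ (⋃ k ∈ F, L k).ncard + S.ncard := Set.ncard_union_le _ _
    _ ≤ ∑ _k ∈ F, (n + 1) + (n + 1) := by
        gcongr
        · exact (Finset.set_ncard_biUnion_le _ _).trans <| Finset.sum_le_sum fun k _ =>
            ncard_language_range_sturmianCoding_le (hα k) n
        · simpa using ncard_setOf_sum_le_one (Fin n)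
    _ = (F.card + 1) * (n + 1) := by simp [add_one_mul]

lemma infinite_setOf_isErgodicMeasureOn_sturmianUnion [Infinite ι] {α : ι → ℝ}
    (hinj : Function.Injective α) (hirr : ∀ k, Irrational (α k)) (hα : ∀ k, α k ∈ Set.Ico 0 1) :
    {μ : Measure (ℤ → Fin 2) |
      IsErgodicMeasureOn (sturmianUnion α) μ ∧ ∀ y, μ {y} = 0}.Infinite :=
  Set.infinite_of_injective_forall_mem (f := fun k => sturmianMeasure (α k))
    (fun j k h => hinj (injOn_sturmianMeasure (hα j) (hα k) h)) fun k =>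
    ⟨isErgodicMeasureOn_sturmianMeasure (hirr k) (range_sturmianCoding_subset_sturmianUnion α k),
      sturmianMeasure_singleton (hirr k) (Set.Ico_subset_Icc_self (hα k))⟩

end SturmianUnion

lemma exists_strictAnti_irrational :
    ∃ s : ℕ → ℝ, StrictAnti s ∧
      ∀ N : ℕ, Irrational (s N) ∧ s N ∈ Set.Ico 0 1 ∧ N * s N ≤ 1 := by
  choose s hirr hlt hgt using fun N : ℕ =>
    exists_irrational_btwn (Nat.one_div_lt_one_div (α := ℝ) N.lt_succ_self)
  have hpos (N : ℕ) : 0 < s N := Nat.one_div_pos_of_nat.trans (hlt N)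
  have hmul (N : ℕ) : s N * (N + 1) < 1 := (lt_div_iff₀ (by positivity)).1 (hgt N)
  have hNs (N : ℕ) : 0 ≤ N * s N := mul_nonneg N.cast_nonneg (hpos N).le
  refine ⟨s, strictAnti_nat_of_succ_lt fun N => (hgt (N + 1)).trans (hlt N), fun N =>
    ⟨hirr N, ⟨(hpos N).le, ?_⟩, ?_⟩⟩ <;>
  linarith [hmul N, hNs N, hpos N]

lemma exists_strictMono_eventually_exists_mul_le {p : ℕ → ℝ}
    (hp : Tendsto (fun n : ℕ => p n / (n : ℝ)) atTop atTop) :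
    ∃ φ : ℕ → ℕ, StrictMono φ ∧ ∀ᶠ n : ℕ in atTop, ∃ K : ℕ,
      (∀ k ≥ K, n ≤ φ k) ∧ ((K : ℝ) + 1) * (n + 1) ≤ p n := by
  obtain ⟨φ, hφ, hpφ⟩ := extraction_forall_of_eventually fun k : ℕ =>
    eventually_forall_ge_atTop.2 (hp.eventually_ge_atTop (2 * ((k : ℝ) + 2)))
  refine ⟨φ, hφ, ?_⟩
  filter_upwards [eventually_gt_atTop (φ 0)] with n hn
  obtain ⟨j, hj, hnj⟩ := hφ.exists_between_of_tendsto_atTop hφ.tendsto_atTop hn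
  have hn1 : (1 : ℝ) ≤ n := by exact_mod_cast (Nat.zero_le _).trans_lt hn
  refine ⟨j + 1, fun k hk => hnj.trans (hφ.monotone hk), ?_⟩
  calc ((j + 1 : ℕ) + 1 : ℝ) * (n + 1) = (j + 2) * (n + 1) := by push_cast; ring
    _ ≤ (j + 2) * (n + n) := by gcongr
    _ = 2 * (j + 2) * n := by ring
    _ ≤ p n := (le_div_iff₀ (by linarith)).1 (hpφ j n hj.le)

/-- If `p n / n → ∞`, there is a subshift with infinitely many nonatomic ergodic measures
whose complexity satisfies `P_X(n) ≤ p n` for all but finitely many `n`. -/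
theorem exists_subshift_infinitely_many_ergodic_measures
    (p : ℕ → ℝ) (hp : Tendsto (fun n : ℕ => p n / (n : ℝ)) atTop atTop) :
    ∃ X : Set (ℤ → Fin 2), IsSubshift X ∧ X.Nonempty ∧
      {μ : Measure (ℤ → Fin 2) | IsErgodicMeasureOn X μ ∧ ∀ y, μ {y} = 0}.Infinite ∧
      ∀ᶠ n : ℕ in atTop, (complexity X n : ℝ) ≤ p n := by
  obtain ⟨s, hs, hs_spec⟩ := exists_strictAnti_irrational
  choose hs_irr hs_mem hs_mul using hs_spec
  obtain ⟨φ, hφ, hφp⟩ := exists_strictMono_eventually_exists_mul_le hp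
  let α (k : ℕ) : ℝ := s (φ k)
  refine ⟨sturmianUnion α, isSubshift_sturmianUnion α, sturmianUnion_nonempty α,
    infinite_setOf_isErgodicMeasureOn_sturmianUnion (hs.injective.comp hφ.injective)
      (fun k => hs_irr (φ k)) fun k => hs_mem (φ k), ?_⟩
  filter_upwards [hφp] with n ⟨K, hK, hKp⟩
  have hsmall (k : ℕ) (hk : k ∉ Finset.range K) : n * α k ≤ 1 :=
    calc n * α k ≤ φ k * α k := by
          gcongr
          · exact (hs_mem (φ k)).1
          · exact hK k (by simpa using hk)
      _ ≤ 1 := hs_mul (φ k)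
  calc (complexity (sturmianUnion α) n : ℝ)
      ≤ ((Finset.range K).card + 1) * (n + 1) := by
        exact_mod_cast complexity_sturmianUnion_le
          (fun k => Set.Ico_subset_Icc_self (hs_mem (φ k))) _ hsmall
    _ = (K + 1) * (n + 1) := by rw [Finset.card_range]
    _ ≤ p n := hKp
end

section
/- Let (X, σ) be a subshift and suppose that for infinitely many n there exist arbitrarily long words in the language of X in which a fixed letter i occurs with frequency at least c > 1/2. Then there exists an ergodic shift-invariant probability measure μ on X with μ([i]) ≥ c > 1/2. Consequently, if this holds for each letter i in an alphabet of size d, then X has at least d distinct ergodic measures. -/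
open MeasureTheory Filter
open scoped ENNReal

/-- `w` occurs in the subshift `X`. -/
def InLanguage {A : Type*} (X : Set (ℤ → A)) {r : ℕ} (w : Fin r → A) : Prop :=
  ∃ x ∈ X, ∃ m : ℤ, ∀ t : Fin r, x (m + (t : ℕ)) = w t

/-! A limit of empirical measures along orbit segments of growing length is invariant, and it
integrates `f` to at least `c` when the Birkhoff averages of `f` along the segments are at least
`c`. Integration against bounded continuous functions identifies the compact set of invariant
probability measures with a compact subset of a locally convex space, on which `μ ↦ ∫ f dμ` is
the restriction of a continuous linear functional. Such a functional is maximized at an extreme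
point, and extreme invariant measures are ergodic. The indicator of the cylinder `[i]` serves as
`f`, and a single measure cannot give mass above `1 / 2` to each of two disjoint cylinders. -/

open Topology BoundedContinuousFunction

section EmpiricalMeasure

variable {Ω : Type*} [MeasurableSpace Ω]

/-- The empirical measure of the orbit segment `x, T x, …, T^[n - 1] x`, a probability measure
whose integrals are Birkhoff averages. For `n = 0` it is the zero measure. -/
noncomputable def empiricalMeasure (T : Ω → Ω) (n : ℕ) (x : Ω) : Measure Ω :=
  (n : ℝ≥0∞)⁻¹ • ∑ k ∈ Finset.range n, Measure.dirac (T^[k] x)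

theorem isProbabilityMeasure_empiricalMeasure (T : Ω → Ω) {n : ℕ} (hn : n ≠ 0) (x : Ω) :
    IsProbabilityMeasure (empiricalMeasure T n x) := by
  constructor
  simpa [empiricalMeasure] using
    ENNReal.inv_mul_cancel (Nat.cast_ne_zero.2 hn) (ENNReal.natCast_ne_top n)

theorem integral_empiricalMeasure (T : Ω → Ω) (n : ℕ) (x : Ω) {f : Ω → ℝ}
    (hf : StronglyMeasurable f) :
    ∫ y, f y ∂empiricalMeasure T n x = birkhoffAverage ℝ T f n x := by
  rw [empiricalMeasure, integral_smul_measure,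
    integral_finsetSum_measure fun k _ => integrable_dirac' hf (by simp)]
  simp [birkhoffAverage, birkhoffSum, integral_dirac' _ _ hf]

end EmpiricalMeasure

theorem tendsto_birkhoffAverage_apply_sub_birkhoffAverage_of_tendsto_atTop
    (𝕜 : Type*) {α ι E : Type*} [RCLike 𝕜] [NormedAddCommGroup E] [NormedSpace 𝕜 E] {g : α → E}
    (hg : Bornology.IsBounded (Set.range g)) (T : α → α) {l : Filter ι} {n : ι → ℕ}
    (hn : Tendsto n l atTop) (x : ι → α) :
    Tendsto (fun i => birkhoffAverage 𝕜 T g (n i) (T (x i)) - birkhoffAverage 𝕜 T g (n i) (x i))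
      l (𝓝 0) := by
  obtain ⟨C, hC⟩ := Metric.isBounded_range_iff.1 hg
  refine squeeze_zero_norm (fun i => ?_)
    ((tendsto_const_nhds (x := C)).div_atTop (tendsto_natCast_atTop_atTop.comp hn))
  rw [← dist_eq_norm, dist_birkhoffAverage_apply_birkhoffAverage]
  exact div_le_div_of_nonneg_right (hC _ _) (Nat.cast_nonneg _)

section IntegralFunctional

variable {Ω : Type*} [TopologicalSpace Ω] [MeasurableSpace Ω] [OpensMeasurableSpace Ω]

/-- The functional `f ↦ ∫ f dμ` on bounded continuous functions. Its values lie in a locally convex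
space, where the notions of convexity absent from `ProbabilityMeasure Ω` are available. -/
noncomputable def integralFunctional (μ : ProbabilityMeasure Ω) : (Ω →ᵇ ℝ) → ℝ :=
  fun f => ∫ x, f x ∂(μ : Measure Ω)

theorem continuous_integralFunctional : Continuous (integralFunctional (Ω := Ω)) :=
  continuous_pi ProbabilityMeasure.continuous_integral_boundedContinuousFunction

theorem integralFunctional_eq_add_of_eq_add {μ ν₁ ν₂ : ProbabilityMeasure Ω} {a b : ℝ≥0∞}
    (ha : a ≠ ∞) (hb : b ≠ ∞) (h : a • (ν₁ : Measure Ω) + b • (ν₂ : Measure Ω) = μ) :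
    a.toReal • integralFunctional ν₁ + b.toReal • integralFunctional ν₂ =
      integralFunctional μ := by
  funext f
  simp only [integralFunctional, Pi.add_apply, Pi.smul_apply, ← h]
  rw [integral_add_measure ((f.integrable _).smul_measure ha) ((f.integrable _).smul_measure hb),
    integral_smul_measure, integral_smul_measure]

end IntegralFunctional

section InvariantMeasure

variable {Ω : Type*} [TopologicalSpace Ω] [MeasurableSpace Ω] [BorelSpace Ω]
  [HasOuterApproxClosed Ω] {T : Ω → Ω}

theorem measurePreserving_of_tendsto_empiricalMeasure (hT : Continuous T) {ι : Type*}
    {l : Filter ι} [l.NeBot] {n : ι → ℕ} (hn : Tendsto n l atTop) {x : ι → Ω}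
    {ν : ι → ProbabilityMeasure Ω} (hν : ∀ i, (ν i : Measure Ω) = empiricalMeasure T (n i) (x i))
    {μ : ProbabilityMeasure Ω} (hμ : Tendsto ν l (𝓝 μ)) :
    MeasurePreserving T (μ : Measure Ω) μ := by
  refine ⟨hT.measurable, ?_⟩
  have := Measure.isProbabilityMeasure_map (μ := (μ : Measure Ω)) hT.aemeasurable
  refine ext_of_forall_integral_eq_of_IsFiniteMeasure fun f => ?_
  have tendsto_average (g : Ω →ᵇ ℝ) :
      Tendsto (fun i => birkhoffAverage ℝ T g (n i) (x i)) l (𝓝 (∫ y, g y ∂(μ : Measure Ω))) := by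
    simpa only [hν, integral_empiricalMeasure _ _ _ g.continuous.stronglyMeasurable] using
      ProbabilityMeasure.tendsto_iff_forall_integral_tendsto.1 hμ g
  have average_comp (i : ι) : birkhoffAverage ℝ T (f.compContinuous ⟨T, hT⟩) (n i) (x i) =
      birkhoffAverage ℝ T f (n i) (T (x i)) := by
    simp [birkhoffAverage, birkhoffSum, ← Function.iterate_succ_apply,
      Function.iterate_succ_apply']
  have tendsto_sub := (tendsto_average (f.compContinuous ⟨T, hT⟩)).sub (tendsto_average f)
  simp only [average_comp] at tendsto_sub
  rw [integral_map hT.aemeasurable f.continuous.aestronglyMeasurable]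
  exact sub_eq_zero.1 <| tendsto_nhds_unique tendsto_sub <|
    tendsto_birkhoffAverage_apply_sub_birkhoffAverage_of_tendsto_atTop ℝ
      f.isBounded_range T hn x

/-- The set of `T`-invariant Borel probability measures, as a subset of the space of probability
measures with the topology of convergence in distribution. -/
def invariantProbabilityMeasures (T : Ω → Ω) : Set (ProbabilityMeasure Ω) :=
  {μ | MeasurePreserving T (μ : Measure Ω) μ}

theorem isClosed_invariantProbabilityMeasures (hT : Continuous T) :
    IsClosed (invariantProbabilityMeasures T) := by
  convert isClosed_eq (ProbabilityMeasure.continuous_map hT) continuous_id using 1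
  ext μ
  simp only [invariantProbabilityMeasures, Set.mem_ofPred_eq, id,
    ← ProbabilityMeasure.toMeasure_injective.eq_iff]
  exact ⟨fun h => h.map_eq, fun h => ⟨hT.measurable, h⟩⟩

theorem injective_integralFunctional : Function.Injective (integralFunctional (Ω := Ω)) :=
  fun _ _ h => ProbabilityMeasure.toMeasure_injective <|
    ext_of_forall_integral_eq_of_IsFiniteMeasure (congrFun h)

theorem ergodic_of_integralFunctional_mem_extremePoints {μ : ProbabilityMeasure Ω}
    (hμ : integralFunctional μ ∈
      (integralFunctional '' invariantProbabilityMeasures T).extremePoints ℝ) :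
    Ergodic T (μ : Measure Ω) := by
  obtain ⟨⟨μ', hμ', hμμ'⟩, hext⟩ := mem_extremePoints_iff_left.1 hμ
  obtain rfl := injective_integralFunctional hμμ'
  refine .of_mem_extremePoints (mem_extremePoints_iff_left.2 ⟨⟨hμ', inferInstance⟩, ?_⟩)
  rintro ν₁ ⟨hν₁, hp₁⟩ ν₂ ⟨hν₂, hp₂⟩ ⟨a, b, ha, hb, hab, hcomb⟩
  have ha_top : a ≠ ∞ := fun h => by simp [h] at hab
  have hb_top : b ≠ ∞ := fun h => by simp [h] at hab
  have h_eq : integralFunctional ⟨ν₁, hp₁⟩ = integralFunctional μ' :=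
    hext _ ⟨⟨ν₁, hp₁⟩, hν₁, rfl⟩ _ ⟨⟨ν₂, hp₂⟩, hν₂, rfl⟩
      ⟨a.toReal, b.toReal, ENNReal.toReal_pos ha.ne' ha_top, ENNReal.toReal_pos hb.ne' hb_top,
        by simp [← ENNReal.toReal_add ha_top hb_top, hab],
        integralFunctional_eq_add_of_eq_add ha_top hb_top hcomb⟩
  exact congrArg ProbabilityMeasure.toMeasure (injective_integralFunctional h_eq)

end InvariantMeasure

theorem exists_mem_extremePoints_isMaxOn {E : Type*} [AddCommGroup E] [Module ℝ E]
    [TopologicalSpace E] [T2Space E] [IsTopologicalAddGroup E] [ContinuousSMul ℝ E]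
    [LocallyConvexSpace ℝ E] {s : Set E} (hs : IsCompact s) (hne : s.Nonempty) (l : E →L[ℝ] ℝ) :
    ∃ x ∈ s.extremePoints ℝ, IsMaxOn l s x := by
  have h_exposed : IsExposed ℝ s (l.toExposed s) := ContinuousLinearMap.toExposed.isExposed
  have h_nonempty : (l.toExposed s).Nonempty := hs.exists_isMaxOn hne l.continuous.continuousOn
  obtain ⟨x, hx⟩ := (h_exposed.isCompact hs).extremePoints_nonempty h_nonempty
  exact ⟨x, h_exposed.isExtreme.extremePoints_subset_extremePoints hx, hx.1.2⟩

section ErgodicOptimization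

variable {Ω : Type*} [TopologicalSpace Ω] [MeasurableSpace Ω] [BorelSpace Ω] {T : Ω → Ω}

theorem exists_ergodic_integral_le [CompactSpace Ω] [T2Space Ω] [HasOuterApproxClosed Ω]
    (hT : Continuous T) (f : Ω →ᵇ ℝ) {ν : ProbabilityMeasure Ω}
    (hν : MeasurePreserving T (ν : Measure Ω) ν) :
    ∃ μ : ProbabilityMeasure Ω, Ergodic T (μ : Measure Ω) ∧
      ∫ x, f x ∂(ν : Measure Ω) ≤ ∫ x, f x ∂(μ : Measure Ω) := by
  have h_compact : IsCompact (integralFunctional '' invariantProbabilityMeasures T) :=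
    (isClosed_invariantProbabilityMeasures hT).isCompact.image continuous_integralFunctional
  obtain ⟨_, hext, hmax⟩ := exists_mem_extremePoints_isMaxOn h_compact ⟨_, ν, hν, rfl⟩
    (ContinuousLinearMap.proj (R := ℝ) f)
  obtain ⟨μ, -, rfl⟩ := hext.1
  exact ⟨μ, ergodic_of_integralFunctional_mem_extremePoints hext, hmax ⟨ν, hν, rfl⟩⟩

theorem exists_ergodic_le_integral_of_frequently_le_birkhoffAverage [CompactSpace Ω] [T2Space Ω]
    [HasOuterApproxClosed Ω] (hT : Continuous T) (f : Ω →ᵇ ℝ) {c : ℝ}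
    (h : ∃ᶠ n in atTop, ∃ x, c ≤ birkhoffAverage ℝ T f n x) :
    ∃ μ : ProbabilityMeasure Ω, Ergodic T (μ : Measure Ω) ∧ c ≤ ∫ x, f x ∂(μ : Measure Ω) := by
  obtain ⟨n, hn_mono, hn⟩ :=
    extraction_of_frequently_atTop (h.and_eventually (eventually_ne_atTop 0))
  choose x hx using fun k => (hn k).1
  let ν (k : ℕ) : ProbabilityMeasure Ω :=
    ⟨empiricalMeasure T (n k) (x k), isProbabilityMeasure_empiricalMeasure T (hn k).2 (x k)⟩
  obtain ⟨μ, -, hμ⟩ := isCompact_univ.ultrafilter_le_nhds ((Ultrafilter.of atTop).map ν) (by simp)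
  have hμ : Tendsto ν (Ultrafilter.of atTop : Ultrafilter ℕ) (𝓝 μ) := hμ
  have hμ_inv : MeasurePreserving T (μ : Measure Ω) μ :=
    measurePreserving_of_tendsto_empiricalMeasure hT
      (hn_mono.tendsto_atTop.mono_left (Ultrafilter.of_le _)) (fun _ => rfl) hμ
  have hμ_le : c ≤ ∫ y, f y ∂(μ : Measure Ω) := by
    refine ge_of_tendsto' (ProbabilityMeasure.tendsto_iff_forall_integral_tendsto.1 hμ f)
      fun k => (hx k).trans_eq ?_
    exact (integral_empiricalMeasure _ _ _ f.continuous.stronglyMeasurable).symm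
  obtain ⟨μ', hμ', hle⟩ := exists_ergodic_integral_le hT f hμ_inv
  exact ⟨μ', hμ', hμ_le.trans hle⟩

theorem exists_ergodic_measure_eq_one_le_integral [TopologicalSpace.MetrizableSpace Ω]
    (hT : Continuous T) {X : Set Ω} (hX : IsCompact X) (hTX : Set.MapsTo T X X) (f : Ω →ᵇ ℝ)
    {c : ℝ} (h : ∃ᶠ n in atTop, ∃ x ∈ X, c ≤ birkhoffAverage ℝ T f n x) :
    ∃ μ : Measure Ω, IsProbabilityMeasure μ ∧ μ X = 1 ∧ Ergodic T μ ∧ c ≤ ∫ x, f x ∂μ := by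
  have : CompactSpace X := isCompact_iff_compactSpace.1 hX
  have h_restrict : ∃ᶠ n in atTop, ∃ x : X, c ≤ birkhoffAverage ℝ (hTX.restrict T X X)
      (f.compContinuous ⟨Subtype.val, continuous_subtype_val⟩) n x := by
    refine h.mono fun n ⟨x, hx, hc⟩ => ⟨⟨x, hx⟩, hc.trans_eq ?_⟩
    simp [birkhoffAverage, birkhoffSum, hTX.iterate_restrict]
  obtain ⟨μ, hμ, hle⟩ := exists_ergodic_le_integral_of_frequently_le_birkhoffAverage
    (hT.restrict hTX) _ h_restrict
  have h_val : MeasurePreserving Subtype.val (μ : Measure X) ((μ : Measure X).map Subtype.val) :=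
    measurable_subtype_coe.measurePreserving _
  refine ⟨(μ : Measure X).map Subtype.val,
    Measure.isProbabilityMeasure_map measurable_subtype_coe.aemeasurable, ?_,
    h_val.ergodic_of_ergodic_semiconj hμ hT.measurable fun _ => rfl, ?_⟩
  · rw [Measure.map_apply measurable_subtype_coe hX.measurableSet]
    simp
  · rwa [integral_map measurable_subtype_coe.aemeasurable f.continuous.aestronglyMeasurable]

end ErgodicOptimization

theorem nonempty_inter_of_inv_two_lt_measure {Ω : Type*} [MeasurableSpace Ω] {μ : Measure Ω}
    [IsProbabilityMeasure μ] {s t : Set Ω} (ht : MeasurableSet t) (hμs : 2⁻¹ < μ s)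
    (hμt : 2⁻¹ < μ t) : (s ∩ t).Nonempty := by
  refine nonempty_inter_of_measure_lt_add μ ht s.subset_univ t.subset_univ ?_
  rw [measure_univ, ← ENNReal.inv_two_add_inv_two]
  exact ENNReal.add_lt_add hμs hμt

section Subshift

variable {A : Type*}

theorem iterate_shift_apply (k : ℕ) (x : ℤ → A) (m : ℤ) : shift^[k] x m = x (m + k) := by
  induction k generalizing m with
  | zero => simp
  | succ k ih =>
    rw [Function.iterate_succ_apply', shift, ih]
    push_cast
    ring_nf

variable [TopologicalSpace A]

theorem continuous_shift : Continuous (shift : (ℤ → A) → ℤ → A) :=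
  continuous_pi fun _ => continuous_apply _

theorem IsSubshift.mapsTo_shift {X : Set (ℤ → A)} (hX : IsSubshift X) : Set.MapsTo shift X X :=
  Set.mapsTo_iff_image_subset.2 hX.2.subset

theorem IsSubshift.translate_mem {X : Set (ℤ → A)} (hX : IsSubshift X) {x : ℤ → A} (hx : x ∈ X)
    (m : ℤ) : (fun k => x (k + m)) ∈ X := by
  induction m with
  | zero => simpa using hx
  | succ m ih =>
    convert hX.mapsTo_shift ih using 1
    ext k
    simp only [shift]
    ring_nf
  | pred m ih =>
    rw [← hX.2] at ih
    obtain ⟨y, hy, hyx⟩ := ih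
    convert hy using 1
    ext k
    have := congrFun hyx (k - 1)
    simp only [shift, sub_add_cancel] at this
    rw [this]
    ring_nf

theorem isClopen_setOfPred_apply_eq [DiscreteTopology A] {ι : Type*} (m : ι) (i : A) :
    IsClopen {x : ι → A | x m = i} :=
  (isClopen_discrete {i}).preimage (continuous_apply m)

theorem IsSubshift.exists_birkhoffAverage_indicator_eq [DecidableEq A] {X : Set (ℤ → A)}
    (hX : IsSubshift X) {n : ℕ} {w : Fin n → A} (hw : InLanguage X w) (i : A) :
    ∃ x ∈ X, birkhoffAverage ℝ shift (Set.indicator {y | y 0 = i} 1) n x =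
      (Finset.univ.filter fun t : Fin n => w t = i).card / (n : ℝ) := by
  obtain ⟨x, hx, m, hxw⟩ := hw
  refine ⟨_, hX.translate_mem hx m, ?_⟩
  have h_letter (t : Fin n) : x (t + m) = w t := by rw [add_comm, hxw]
  rw [birkhoffAverage, birkhoffSum, Finset.sum_range]
  simp [Set.indicator_apply, iterate_shift_apply, h_letter, div_eq_inv_mul]

theorem IsSubshift.exists_isErgodicMeasureOn_le [Finite A] [DecidableEq A] [DiscreteTopology A]
    [MeasurableSpace A] [BorelSpace A] {X : Set (ℤ → A)} (hX : IsSubshift X) {c : ℝ} (i : A)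
    (h : ∃ᶠ n : ℕ in atTop, ∃ w : Fin n → A, InLanguage X w ∧
      c * n ≤ (Finset.univ.filter fun t : Fin n => w t = i).card) :
    ∃ μ, IsErgodicMeasureOn X μ ∧ ENNReal.ofReal c ≤ μ {x : ℤ → A | x 0 = i} := by
  let f : (ℤ → A) →ᵇ ℝ := .indicator {x | x 0 = i} (isClopen_setOfPred_apply_eq 0 i)
  have h_average : ∃ᶠ n in atTop, ∃ x ∈ X, c ≤ birkhoffAverage ℝ shift f n x := by
    refine (h.and_eventually (eventually_gt_atTop 0)).mono fun n ⟨⟨w, hw, hcard⟩, hn⟩ => ?_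
    obtain ⟨x, hx, hfx⟩ := hX.exists_birkhoffAverage_indicator_eq hw i
    exact ⟨x, hx, ((le_div_iff₀ (Nat.cast_pos.2 hn)).2 hcard).trans_eq hfx.symm⟩
  obtain ⟨μ, hμ, hμX, hμ_erg, hle⟩ := exists_ergodic_measure_eq_one_le_integral continuous_shift
    hX.1.isCompact hX.mapsTo_shift f h_average
  refine ⟨μ, ⟨hμ, hμX, hμ_erg⟩, ENNReal.ofReal_le_of_le_toReal (hle.trans_eq ?_)⟩
  exact integral_indicator_one (isClopen_setOfPred_apply_eq 0 i).isOpen.measurableSet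

end Subshift

/-- If, for each letter `i`, the language of `X` contains arbitrarily long words in which
`i` occurs with frequency at least `c > 1/2`, then for each `i` there is an ergodic
shift-invariant probability measure `μ i` with `μ i ([i]) ≥ c`; these measures are
pairwise distinct, so `X` has at least `|A|` ergodic measures. -/
theorem ergodic_measures_from_letter_frequencies
    {A : Type*} [Fintype A] [DecidableEq A] [TopologicalSpace A] [DiscreteTopology A]
    [MeasurableSpace A] [BorelSpace A]
    (X : Set (ℤ → A)) (hX : IsSubshift X) (hXne : X.Nonempty)
    (c : ℝ) (hc : 1 / 2 < c)
    (hfreq : ∀ i : A, ∀ m : ℕ, ∃ n : ℕ, m ≤ n ∧ ∃ w : Fin n → A, InLanguage X w ∧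
      c * n ≤ (Finset.univ.filter fun t : Fin n => w t = i).card) :
    ∃ μs : A → Measure (ℤ → A), Function.Injective μs ∧
      ∀ i : A, IsErgodicMeasureOn X (μs i) ∧
        ENNReal.ofReal c ≤ μs i {x : ℤ → A | x 0 = i} := by
  choose μs hμs using fun i =>
    hX.exists_isErgodicMeasureOn_le i (frequently_atTop.2 (hfreq i))
  refine ⟨μs, fun i j hij => ?_, hμs⟩
  have := (hμs i).1.1
  have inv_two_lt (k : A) : 2⁻¹ < μs k {x | x 0 = k} :=
    ((ENNReal.lt_ofReal_iff_toReal_lt (by simp)).2 (by simpa using hc)).trans_le (hμs k).2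
  obtain ⟨x, hxi, hxj⟩ := nonempty_inter_of_inv_two_lt_measure
    (isClopen_setOfPred_apply_eq 0 j).isOpen.measurableSet (inv_two_lt i) (hij ▸ inv_two_lt j)
  exact hxi.symm.trans hxj
end
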